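/- (Property 1, averages case: minor arc multiplier decay.) Let k ∈ ℕ, Γ ⊆ ℕ_0^k∖{0} nonempty finite, k', k'' ∈ {0,…,k} with k' + k'' = k, Ω ⊆ ℝ^k a bounded convex open set with B(0,c_Ω) ⊆ Ω ⊆ B(0,1), τ ∈ (0,1], and N_n := ⌊2^{n^τ}⌋. For each α > 0 there is β_α > 0 such that for any β > β_α and n ∈ ℕ: if there is a multi-index γ_0 ∈ Γ with |ξ_{γ_0} − a/q| ≤ 1/q² for some coprime integers a, q with 1 ≤ a ≤ q and (log N_n)^β ≤ q ≤ N_n^{|γ_0|} (log N_n)^{−β}, then |𝔪_{N_n}(ξ) − 𝔪_{N_{n−1}}(ξ)| ≲ (log N_n)^{−α}. -/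

import Mathlib

open MeasureTheory
open scoped ENNReal NNReal

noncomputable section

/-- Embedding of `ℤ^k` into Euclidean space `ℝ^k`. -/
def zEmbed {k : ℕ} (v : Fin k → ℤ) : EuclideanSpace ℝ (Fin k) :=
  WithLp.toLp 2 fun i => (v i : ℝ)

/-- The dilated set `Ω_t = {x : t⁻¹ x ∈ Ω}`. -/
def dilate {k : ℕ} (Ω : Set (EuclideanSpace ℝ (Fin k))) (t : ℝ) :
    Set (EuclideanSpace ℝ (Fin k)) := {x | t⁻¹ • x ∈ Ω}

/-- The weight `𝟙_{(n,p) ∈ ℤ^{k'} × (±ℙ)^{k''}} ∏_{i ≥ k'} log |p_i|`. -/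
def primeWeight {k : ℕ} (k' : ℕ) (v : Fin k → ℤ) : ℝ :=
  Set.indicator {w : Fin k → ℤ | ∀ i : Fin k, k' ≤ (i : ℕ) → Prime (w i)} (fun _ => 1) v *
    ∏ i : Fin k, if k' ≤ (i : ℕ) then Real.log |(v i : ℝ)| else 1

/-- The Chebyshev function `ϑ_Ω(t)`. -/
def cheby {k : ℕ} (k' : ℕ) (Ω : Set (EuclideanSpace ℝ (Fin k))) (t : ℝ) : ℝ :=
  ∑' v : Fin k → ℤ,
    primeWeight k' v * Set.indicator (dilate Ω t) (fun _ => 1) (zEmbed v)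

/-- `e(x) = e^{2πix}`. -/
def eC (x : ℝ) : ℂ := Complex.exp (2 * Real.pi * Complex.I * x)

/-- The pairing `ξ · 𝒬(v)` for `v ∈ ℤ^k`. -/
def qPair {k : ℕ} (Γ : Finset (Fin k → ℕ)) (ξ : (Fin k → ℕ) → ℝ) (v : Fin k → ℤ) : ℝ :=
  ∑ γ ∈ Γ, ξ γ * ∏ i, ((v i : ℝ)) ^ (γ i)

/-- The pairing `θ · 𝒬(u)` for `u ∈ ℝ^k`. -/
def qPairR {k : ℕ} (Γ : Finset (Fin k → ℕ)) (θ : (Fin k → ℕ) → ℝ)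
    (u : EuclideanSpace ℝ (Fin k)) : ℝ :=
  ∑ γ ∈ Γ, θ γ * ∏ i, (u i) ^ (γ i)

/-- The discrete Fourier multiplier `𝔪_t` of the polynomial averaging operator along
primes associated with the canonical polynomial mapping `𝒬`. -/
def discMultA {k : ℕ} (Γ : Finset (Fin k → ℕ)) (k' : ℕ)
    (Ω : Set (EuclideanSpace ℝ (Fin k))) (t : ℝ) (ξ : (Fin k → ℕ) → ℝ) : ℂ :=
  ((cheby k' Ω t : ℝ) : ℂ)⁻¹ *
    ∑' v : Fin k → ℤ,
      ((primeWeight k' v * Set.indicator (dilate Ω t) (fun _ => 1) (zEmbed v) : ℝ) : ℂ) *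
        eC (qPair Γ ξ v)

/-- The continuous multiplier `Φ_t(ξ) = |Ω_t|⁻¹ ∫_{Ω_t} e(ξ·𝒬(u)) du`. -/
def contMultA {k : ℕ} (Γ : Finset (Fin k → ℕ)) (Ω : Set (EuclideanSpace ℝ (Fin k)))
    (t : ℝ) (ξ : (Fin k → ℕ) → ℝ) : ℂ :=
  (((MeasureTheory.volume (dilate Ω t)).toReal : ℝ) : ℂ)⁻¹ *
    ∫ u in dilate Ω t, eC (qPairR Γ ξ u)

/-- The Gaussian sum `G(a/q)` associated with the canonical polynomial mapping. -/
def gaussSumQ {k : ℕ} (Γ : Finset (Fin k → ℕ)) (k' k'' : ℕ) (q : ℕ)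
    (a : (Fin k → ℕ) → ℕ) : ℂ :=
  ((q : ℂ) ^ k' * (Nat.totient q : ℂ) ^ k'')⁻¹ *
    ∑ v ∈ Fintype.piFinset (fun i : Fin k =>
        if (i : ℕ) < k' then Finset.Icc 1 q
        else (Finset.Icc 1 q).filter fun m => Nat.Coprime m q),
      eC (∑ γ ∈ Γ, ((a γ : ℝ) / (q : ℝ)) * ∏ i, (v i : ℝ) ^ (γ i))

/-- The subexponential sequence `N_n = ⌊2^{n^τ}⌋`. -/
def Nseq (τ : ℝ) (n : ℕ) : ℕ := Nat.floor ((2 : ℝ) ^ ((n : ℝ) ^ τ))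

end

section
open Polynomial Finset


/-- `x` is `K^B`-major at scale `η`. -/
def Maj (K B : ℕ) (η x : ℝ) : Prop :=
  ∃ q a : ℤ, 1 ≤ q ∧ q ≤ (K : ℤ) ^ B ∧ |(q : ℝ) * x - a| ≤ (K : ℝ) ^ B * η

theorem Maj.mono {K B B' : ℕ} {η x : ℝ} (hK : 2 ≤ K) (h : Maj K B η x) (hB : B ≤ B')
    (hη : 0 ≤ η) : Maj K B' η x := by
  obtain ⟨q, a, h1, h2, h3⟩ := h
  have hK1 : (1 : ℝ) ≤ K := by exact_mod_cast (by omega : 1 ≤ K)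
  refine ⟨q, a, h1, h2.trans (pow_le_pow_right₀ (by omega) hB), h3.trans ?_⟩
  gcongr

theorem Maj.eta {K B C : ℕ} {η η' x : ℝ} (hK : 2 ≤ K) (h : Maj K B η x)
    (hη : η ≤ (K : ℝ) ^ C * η') : Maj K (B + C) η' x := by
  obtain ⟨q, a, h1, h2, h3⟩ := h
  refine ⟨q, a, h1, h2.trans (pow_le_pow_right₀ (by omega) (by omega)), h3.trans ?_⟩
  calc (K : ℝ) ^ B * η ≤ (K : ℝ) ^ B * ((K : ℝ) ^ C * η') := by gcongr
    _ = _ := by ring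

theorem Maj.add {K B B' : ℕ} {η x y : ℝ} (hK : 2 ≤ K) (hη : 0 ≤ η) (h : Maj K B η x)
    (h' : Maj K B' η y) : Maj K (B + B' + 1) η (x + y) := by
  obtain ⟨q, a, h1, h2, h3⟩ := h
  obtain ⟨q', a', h1', h2', h3'⟩ := h'
  have hq : (q : ℝ) ≤ (K : ℝ) ^ B := by exact_mod_cast h2
  have hq' : (q' : ℝ) ≤ (K : ℝ) ^ B' := by exact_mod_cast h2'
  have hq0 : (1 : ℝ) ≤ q := by exact_mod_cast h1
  have hq0' : (1 : ℝ) ≤ q' := by exact_mod_cast h1'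
  have hKr : (2 : ℝ) ≤ K := by exact_mod_cast hK
  refine ⟨q * q', q' * a + q * a', by nlinarith, ?_, ?_⟩
  · calc q * q' ≤ (K : ℤ) ^ B * (K : ℤ) ^ B' := by gcongr
      _ = (K : ℤ) ^ (B + B') := by ring
      _ ≤ _ := pow_le_pow_right₀ (by omega) (by omega)
  · push_cast
    have e : (q : ℝ) * q' * (x + y) - (q' * a + q * a') = q' * (q * x - a) + q * (q' * y - a') := by
      ring
    rw [e]
    calc |(q' : ℝ) * (q * x - a) + q * (q' * y - a')|
        ≤ |(q' : ℝ) * (q * x - a)| + |q * (q' * y - a')| := abs_add_le _ _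
      _ = q' * |(q : ℝ) * x - a| + q * |q' * y - a'| := by
          rw [abs_mul, abs_mul, abs_of_pos (by linarith : (0:ℝ) < q),
            abs_of_pos (by linarith : (0:ℝ) < q')]
      _ ≤ (K : ℝ) ^ B' * ((K : ℝ) ^ B * η) + (K : ℝ) ^ B * ((K : ℝ) ^ B' * η) := by gcongr
      _ = (K : ℝ) ^ (B + B') * η * 2 := by ring
      _ ≤ (K : ℝ) ^ (B + B') * η * K := by gcongr
      _ = _ := by ring

theorem Maj.mul_int {K B C : ℕ} {η x : ℝ} (hK : 2 ≤ K) (hη : 0 ≤ η) (h : Maj K B η x)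
    (n : ℤ) (hn : |(n : ℝ)| ≤ (K : ℝ) ^ C) : Maj K (B + C) η (n * x) := by
  obtain ⟨q, a, h1, h2, h3⟩ := h
  refine ⟨q, n * a, h1, h2.trans (pow_le_pow_right₀ (by omega) (by omega)), ?_⟩
  push_cast
  have e : (q : ℝ) * (n * x) - n * a = n * (q * x - a) := by ring
  rw [e, abs_mul]
  calc |(n : ℝ)| * |q * x - a| ≤ (K : ℝ) ^ C * ((K : ℝ) ^ B * η) := by gcongr
    _ = _ := by ring

theorem Maj.neg {K B : ℕ} {η x : ℝ} (h : Maj K B η x) : Maj K B η (-x) := by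
  obtain ⟨q, a, h1, h2, h3⟩ := h
  refine ⟨q, -a, h1, h2, ?_⟩
  push_cast
  rw [← abs_neg]
  convert h3 using 2
  ring

theorem Maj.of_neg {K B : ℕ} {η x : ℝ} (h : Maj K B η (-x)) : Maj K B η x := by
  simpa using h.neg

theorem Maj.of_mul_int {K B C : ℕ} {η x : ℝ} (hK : 2 ≤ K) (hη : 0 ≤ η) (n : ℤ)
    (hn0 : n ≠ 0) (hn : |(n : ℝ)| ≤ (K : ℝ) ^ C) (h : Maj K B η (n * x)) :
    Maj K (B + C) η x := by
  wlog hpos : 0 < n generalizing n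
  · refine this (-n) (by omega) (by simpa using hn) ?_ (by omega)
    push_cast
    rw [neg_mul]
    exact h.neg
  obtain ⟨q, a, h1, h2, h3⟩ := h
  rw [abs_of_pos (by exact_mod_cast hpos)] at hn
  have hn' : n ≤ (K : ℤ) ^ C := by exact_mod_cast hn
  have hKr : (1 : ℝ) ≤ K := by exact_mod_cast (by omega : 1 ≤ K)
  refine ⟨q * n, a, by nlinarith, ?_, ?_⟩
  · calc q * n ≤ (K : ℤ) ^ B * (K : ℤ) ^ C := by gcongr
      _ = _ := by ring
  · push_cast
    rw [mul_assoc]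
    refine h3.trans ?_
    gcongr
    omega

theorem Maj.zero {K B : ℕ} {η : ℝ} (hK : 2 ≤ K) (hη : 0 ≤ η) : Maj K B η 0 :=
  ⟨1, 0, le_rfl, one_le_pow₀ (by omega), by simp; positivity⟩

theorem Maj.sum {ι : Type*} {K B : ℕ} {η : ℝ} (hK : 2 ≤ K) (hη : 0 ≤ η) (s : Finset ι)
    (x : ι → ℝ) (h : ∀ i ∈ s, Maj K B η (x i)) : Maj K ((B + 1) * s.card) η (∑ i ∈ s, x i) := by
  classical
  induction s using Finset.induction_on with
  | empty => simpa using Maj.zero hK hη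
  | insert i s hi ih =>
    rw [sum_insert hi, card_insert_of_notMem hi]
    have := (h i (mem_insert_self _ _)).add hK hη (ih fun j hj => h j (mem_insert_of_mem hj))
    convert this using 1
    ring

theorem Maj.common {ι : Type*} {K B : ℕ} (hK : 2 ≤ K) (s : Finset ι)
    (η : ι → ℝ) (hη : ∀ i ∈ s, 0 ≤ η i)
    (x : ι → ℝ) (h : ∀ i ∈ s, Maj K B (η i) (x i)) :
    ∃ q : ℤ, 1 ≤ q ∧ q ≤ (K : ℤ) ^ (B * s.card) ∧
      ∀ i ∈ s, ∃ a : ℤ, |(q : ℝ) * x i - a| ≤ (K : ℝ) ^ (B * s.card) * η i := by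
  classical
  induction s using Finset.induction_on with
  | empty => exact ⟨1, le_rfl, by simp, by simp⟩
  | insert i s hi ih =>
    obtain ⟨q, h1, h2, h3⟩ := ih (fun j hj => hη j (mem_insert_of_mem hj))
      (fun j hj => h j (mem_insert_of_mem hj))
    obtain ⟨q', a', h1', h2', h3'⟩ := h i (mem_insert_self _ _)
    rw [card_insert_of_notMem hi]
    have hq : (q : ℝ) ≤ (K : ℝ) ^ (B * s.card) := by exact_mod_cast h2
    have hq' : (q' : ℝ) ≤ (K : ℝ) ^ B := by exact_mod_cast h2'
    have hq0 : (0 : ℝ) < q := by exact_mod_cast (by omega : 0 < q)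
    have hq0' : (0 : ℝ) < q' := by exact_mod_cast (by omega : 0 < q')
    refine ⟨q * q', by nlinarith, ?_, ?_⟩
    · calc q * q' ≤ (K : ℤ) ^ (B * s.card) * (K : ℤ) ^ B := by gcongr
        _ = _ := by ring
    · intro j hj
      rw [mem_insert] at hj
      rcases hj with rfl | hj
      · refine ⟨q * a', ?_⟩
        push_cast
        have e : (q : ℝ) * q' * x j - q * a' = q * (q' * x j - a') := by ring
        rw [e, abs_mul, abs_of_pos hq0]
        have := hη j (mem_insert_self _ _)
        calc _ ≤ (K : ℝ) ^ (B * s.card) * ((K : ℝ) ^ B * η j) := by gcongr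
          _ = _ := by ring
      · obtain ⟨a, ha⟩ := h3 j hj
        refine ⟨q' * a, ?_⟩
        push_cast
        have e : (q : ℝ) * q' * x j - q' * a = q' * (q * x j - a) := by ring
        rw [e, abs_mul, abs_of_pos hq0']
        have := hη j (mem_insert_of_mem hj)
        calc _ ≤ (K : ℝ) ^ B * ((K : ℝ) ^ (B * s.card) * η j) := by gcongr
          _ = _ := by ring

theorem pigeon {α β : Type*} [DecidableEq β] (S : Finset α) (t : Finset β) (f : α → β)
    (hf : ∀ x ∈ S, f x ∈ t) (ht : t.Nonempty) (m : ℕ) (hm : t.card ≤ m) :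
    ∃ y ∈ t, S.card ≤ m * (S.filter fun x => f x = y).card := by
  by_contra! hcon
  have h1 : S.card = ∑ y ∈ t, (S.filter fun x => f x = y).card :=
    card_eq_sum_card_fiberwise hf
  have hmpos : 0 < m := lt_of_lt_of_le ht.card_pos hm
  have h2 : ∑ y ∈ t, m * (S.filter fun x => f x = y).card < ∑ y ∈ t, S.card :=
    sum_lt_sum_of_nonempty ht hcon
  rw [← mul_sum, ← h1, sum_const, smul_eq_mul] at h2
  have := Nat.mul_le_mul_right S.card hm
  omega

theorem Maj.pigeon {α : Type*} {K B : ℕ} {η : ℝ} (hK : 2 ≤ K) (S : Finset α) (f : α → ℝ)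
    (h : ∀ x ∈ S, Maj K B η (f x)) :
    ∃ q : ℤ, 1 ≤ q ∧ q ≤ (K : ℤ) ^ B ∧ ∃ S' ⊆ S, S.card ≤ K ^ B * S'.card ∧
      ∀ x ∈ S', ∃ a : ℤ, |(q : ℝ) * f x - a| ≤ (K : ℝ) ^ B * η := by
  classical
  have h' : ∀ x, ∃ q : ℤ, x ∈ S → 1 ≤ q ∧ q ≤ (K : ℤ) ^ B ∧
      ∃ a : ℤ, |(q : ℝ) * f x - a| ≤ (K : ℝ) ^ B * η := by
    intro x
    by_cases hx : x ∈ S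
    · obtain ⟨q, a, h1, h2, h3⟩ := h x hx
      exact ⟨q, fun _ => ⟨h1, h2, a, h3⟩⟩
    · exact ⟨0, fun h => absurd h hx⟩
  choose Q hQ using h'
  have hpos : 1 ≤ (K : ℤ) ^ B := one_le_pow₀ (by omega)
  obtain ⟨q, hq, hc⟩ := _root_.pigeon S (Icc 1 ((K : ℤ) ^ B)) Q
    (fun x hx => mem_Icc.2 ⟨(hQ x hx).1, (hQ x hx).2.1⟩) ⟨1, by simp [hpos]⟩ (K ^ B)
    (by simp)
  rw [mem_Icc] at hq
  refine ⟨q, hq.1, hq.2, _, filter_subset _ _, hc, ?_⟩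
  intro x hx
  rw [mem_filter] at hx
  have := (hQ x hx.1).2.2
  rwa [hx.2] at this


theorem card_near (x0 : ℤ) (r : ℕ) (S : Finset ℤ) :
    (S.filter fun x => |x - x0| ≤ r).card ≤ 2 * r + 1 := by
  have : (S.filter fun x => |x - x0| ≤ r) ⊆ Icc (x0 - r) (x0 + r) := by
    intro x hx
    rw [mem_filter] at hx
    rw [mem_Icc]
    have := abs_le.1 hx.2
    omega
  refine (card_le_card this).trans ?_
  rw [Int.card_Icc]
  omega

theorem remez (d : ℕ) : ∀ A : ℕ, ∃ B : ℕ, ∀ K : ℕ, 2 ≤ K → ∀ N : ℕ, K ^ B ≤ N →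
    ∀ p : ℝ[X], p.natDegree ≤ d → ∀ S : Finset ℤ, S ⊆ Icc (-(N : ℤ)) N → N ≤ K ^ A * S.card →
    ∀ η : ℝ, 0 ≤ η → (∀ x ∈ S, |p.eval (x : ℝ)| ≤ η) →
    ∀ j, |p.coeff j| ≤ (K : ℝ) ^ B * (η / (N : ℝ) ^ j) := by
  induction d with
  | zero =>
    intro A
    refine ⟨0, fun K hK N hN p hp S hS hc η hη hpS j => ?_⟩
    have hne : S.Nonempty := by
      rw [nonempty_iff_ne_empty]
      rintro rfl
      simp at hN hc
      omega
    obtain ⟨x, hx⟩ := hne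
    have := hpS x hx
    rw [eq_C_of_natDegree_le_zero hp, eval_C] at this
    rcases Nat.eq_zero_or_pos j with rfl | hj
    · simpa using this
    · rw [coeff_eq_zero_of_natDegree_lt (by omega)]
      simp
      positivity
  | succ d ih =>
    intro A
    obtain ⟨B', hB'⟩ := ih (A + 1)
    refine ⟨B' + A + 7, fun K hK N hN p hp S hS hc η hη hpS j => ?_⟩
    have hKr : (2 : ℝ) ≤ K := by exact_mod_cast hK
    have hN1 : 1 ≤ N := le_trans (one_le_pow₀ (by omega)) hN
    have hNr : (1 : ℝ) ≤ N := by exact_mod_cast hN1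
    have hne : S.Nonempty := by
      rw [nonempty_iff_ne_empty]
      rintro rfl
      simp at hc
      omega
    obtain ⟨x0, hx0⟩ := hne
    set r := N / K ^ (A + 4) with hr
    have hr1 : r * K ^ (A + 4) ≤ N := Nat.div_mul_le_self _ _
    have hr2 : N < (r + 1) * K ^ (A + 4) := by
      have := Nat.lt_div_mul_add (a := N) (b := K ^ (A + 4)) (by positivity)
      rw [← hr] at this
      linarith
    set S' := S.filter fun x => ¬ |x - x0| ≤ r with hS'
    have hcard : (S.filter fun x => |x - x0| ≤ r).card + S'.card = S.card :=
      card_filter_add_card_filter_not _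
    have hnear := card_near x0 r S
    have hpow4 : 16 * K ^ A ≤ K ^ (A + 4) := by
      rw [pow_add, mul_comm]
      gcongr
      calc 16 = 2 ^ 4 := by norm_num
        _ ≤ _ := by gcongr
    have hNA : 4 * K ^ A ≤ N := by
      refine le_trans ?_ hN
      calc 4 * K ^ A ≤ 16 * K ^ A := by omega
        _ ≤ K ^ (A + 4) := hpow4
        _ ≤ _ := pow_le_pow_right₀ (by omega) (by omega)
    have h1 : K ^ A * (2 * (2 * r + 1)) ≤ K ^ A * S.card := by
      refine le_trans ?_ hc
      have : r * (16 * K ^ A) ≤ N := le_trans (by gcongr) hr1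
      nlinarith
    have h2 : 2 * (2 * r + 1) ≤ S.card := Nat.le_of_mul_le_mul_left h1 (by positivity)
    have h3 : N ≤ K ^ (A + 1) * S'.card := by
      calc N ≤ K ^ A * S.card := hc
        _ ≤ K ^ A * (2 * S'.card) := by gcongr; omega
        _ ≤ K ^ A * (K * S'.card) := by gcongr
        _ = _ := by ring
    set g := p /ₘ (X - C (x0 : ℝ)) with hg
    have hpg : p = C (p.eval (x0 : ℝ)) + (X - C (x0 : ℝ)) * g := by
      conv_lhs => rw [← modByMonic_add_div p (X - C (x0 : ℝ))]
      rw [modByMonic_X_sub_C_eq_C_eval]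
    have hgd : g.natDegree ≤ d := by
      rw [hg, natDegree_divByMonic _ (monic_X_sub_C _), natDegree_X_sub_C]
      omega
    set η' := (K : ℝ) ^ (A + 5) * (η / N) with hη'
    have hgS : ∀ x ∈ S', |g.eval (x : ℝ)| ≤ η' := by
      intro x hx
      rw [hS', mem_filter] at hx
      have hx2 : (r : ℤ) + 1 ≤ |x - x0| := by
        have := hx.2
        omega
      have hx3 : ((r : ℝ) + 1) ≤ |(x : ℝ) - x0| := by exact_mod_cast hx2
      have e : ((x : ℝ) - x0) * g.eval (x : ℝ) = p.eval (x : ℝ) - p.eval (x0 : ℝ) := by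
        conv_rhs => rw [hpg]
        simp
      have e2 : |(x : ℝ) - x0| * |g.eval (x : ℝ)| ≤ 2 * η := by
        rw [← abs_mul, e]
        have a1 := hpS x hx.1
        have a2 := hpS x0 hx0
        calc _ ≤ |p.eval (x : ℝ)| + |p.eval (x0 : ℝ)| := abs_sub _ _
          _ ≤ _ := by linarith
      have hr2' : (N : ℝ) ≤ (r + 1) * K ^ (A + 4) := by exact_mod_cast hr2.le
      have e3 : N * |g.eval (x : ℝ)| ≤ K ^ (A + 5) * η := by
        calc N * |g.eval (x : ℝ)| ≤ ((r + 1) * K ^ (A + 4)) * |g.eval (x : ℝ)| := by gcongr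
          _ ≤ (|(x : ℝ) - x0| * K ^ (A + 4)) * |g.eval (x : ℝ)| := by gcongr
          _ = K ^ (A + 4) * (|(x : ℝ) - x0| * |g.eval (x : ℝ)|) := by ring
          _ ≤ K ^ (A + 4) * (2 * η) := by gcongr
          _ ≤ K ^ (A + 4) * (K * η) := by gcongr
          _ = _ := by ring
      rw [hη', ← mul_div_assoc, le_div_iff₀ (by linarith)]
      linarith
    have hη'0 : 0 ≤ η' := by positivity
    have hgc := hB' K hK N (le_trans (pow_le_pow_right₀ (by omega) (by omega)) hN) g hgd S'
      ((filter_subset _ _).trans hS) h3 η' hη'0 hgS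
    have hx0N : |(x0 : ℝ)| ≤ N := by
      have := mem_Icc.1 (hS hx0)
      rw [abs_le]
      constructor <;> [exact_mod_cast this.1; exact_mod_cast this.2]
    have hx0g : ∀ j, |(x0 : ℝ) * g.coeff j| ≤ (K : ℝ) ^ (B' + A + 5) * (η / N ^ j) := by
      intro j
      rw [abs_mul]
      calc _ ≤ N * ((K : ℝ) ^ B' * (η' / (N : ℝ) ^ j)) := by
              have := hgc j
              gcongr
        _ = _ := by rw [hη']; field_simp; ring
    have hK2 : (K : ℝ) ^ (B' + A + 5) * 4 ≤ K ^ (B' + A + 7) := by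
      have e4 : (4 : ℝ) ≤ (K : ℝ) ^ 2 := by nlinarith
      calc (K : ℝ) ^ (B' + A + 5) * 4 ≤ (K : ℝ) ^ (B' + A + 5) * K ^ 2 := by gcongr
        _ = _ := by ring
    have hK1 : 1 ≤ (K : ℝ) ^ (B' + A + 5) := one_le_pow₀ (by linarith)
    have hj0 : 0 ≤ η / (N : ℝ) ^ j := by positivity
    rcases j with _ | j
    · rw [hpg]
      simp only [coeff_add, coeff_C_zero, sub_mul, coeff_sub, coeff_X_mul_zero, coeff_C_mul]
      have a2 := hpS x0 hx0
      have a3 := hx0g 0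
      simp only [pow_zero, div_one] at a3 ⊢
      calc |eval (x0 : ℝ) p + (0 - x0 * g.coeff 0)| ≤ |eval (x0 : ℝ) p| + |x0 * g.coeff 0| := by
            rw [zero_sub, ← sub_eq_add_neg]; exact abs_sub _ _
        _ ≤ η + (K : ℝ) ^ (B' + A + 5) * η := by gcongr
        _ ≤ _ := by nlinarith
    · rw [hpg]
      simp only [coeff_add, coeff_C_succ, sub_mul, coeff_sub, coeff_X_mul, coeff_C_mul, zero_add]
      have a3 := hx0g (j + 1)
      have a4 : |g.coeff j| ≤ (K : ℝ) ^ (B' + A + 5) * (η / N ^ (j + 1)) := by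
        refine (hgc j).trans (le_of_eq ?_)
        rw [hη']; field_simp; ring
      calc |g.coeff j - x0 * g.coeff (j + 1)| ≤ |g.coeff j| + |x0 * g.coeff (j + 1)| := abs_sub _ _
        _ ≤ (K : ℝ) ^ (B' + A + 5) * (η / N ^ (j + 1)) +
            (K : ℝ) ^ (B' + A + 5) * (η / N ^ (j + 1)) := by gcongr
        _ ≤ _ := by nlinarith

theorem gap (A K N : ℕ) (hK : 2 ≤ K) (hN : K ^ (A + 4) ≤ N) (S : Finset ℤ)
    (hS : S ⊆ Icc (-(N : ℤ)) N) (hc : N ≤ K ^ A * S.card) :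
    ∃ h : ℤ, 1 ≤ h ∧ h ≤ (K : ℤ) ^ (A + 4) ∧
      N ≤ K ^ (2 * A + 5) * (S.filter fun x => x + h ∈ S).card := by
  classical
  set H : ℕ := K ^ (A + 4) with hH
  have hHpos : 0 < H := by positivity
  set T := S.filter fun x => ∃ h ∈ Icc (1 : ℤ) H, x + h ∈ S with hT
  set U := S.filter fun x => ¬ ∃ h ∈ Icc (1 : ℤ) H, x + h ∈ S with hU
  have hTU : T.card + U.card = S.card := card_filter_add_card_filter_not _
  have hUc : U.card ≤ 2 * (N / H) + 2 := by
    have hmaps : ∀ x ∈ U, x / (H : ℤ) ∈ Icc (-((N / H : ℕ) : ℤ) - 1) ((N / H : ℕ) : ℤ) := by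
      intro x hx
      have hx' := mem_Icc.1 (hS (mem_filter.1 hx).1)
      rw [mem_Icc]
      have hH' : (0 : ℤ) < H := by exact_mod_cast hHpos
      push_cast
      constructor
      · rw [Int.le_ediv_iff_mul_le hH']
        have := Int.lt_ediv_add_one_mul_self (N : ℤ) hH'
        nlinarith
      · exact Int.ediv_le_ediv hH' hx'.2
    have hinj : Set.InjOn (fun x : ℤ => x / (H : ℤ)) U := by
      have key : ∀ x ∈ U, ∀ y ∈ U, x / (H : ℤ) = y / (H : ℤ) → ¬ x < y := by
        intro x hx y hy hxy hlt
        have hH' : (0 : ℤ) < H := by exact_mod_cast hHpos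
        apply (mem_filter.1 hx).2
        refine ⟨y - x, ?_, by simpa using (mem_filter.1 hy).1⟩
        rw [mem_Icc]
        have a1 := Int.mul_ediv_add_emod x H
        have a2 := Int.mul_ediv_add_emod y H
        have a3 := Int.emod_nonneg x hH'.ne'
        have a4 := Int.emod_lt_of_pos y hH'
        rw [hxy] at a1
        constructor <;> linarith
      intro x hx y hy hxy
      rcases lt_trichotomy x y with h | h | h
      · exact absurd h (key x hx y hy hxy)
      · exact h
      · exact absurd h (key y hy x hx hxy.symm)
    refine (card_le_card_of_injOn _ hmaps hinj).trans ?_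
    rw [Int.card_Icc]
    omega
  have hpow4 : 16 * K ^ A ≤ H := by
    rw [hH, pow_add, mul_comm]
    gcongr
    calc 16 = 2 ^ 4 := by norm_num
      _ ≤ _ := by gcongr
  have h1 : K ^ A * (2 * (2 * (N / H) + 2)) ≤ K ^ A * S.card := by
    refine le_trans ?_ hc
    have a1 : N / H * H ≤ N := Nat.div_mul_le_self _ _
    have : N / H * (16 * K ^ A) ≤ N := le_trans (by gcongr) a1
    nlinarith
  have h2 : 2 * (2 * (N / H) + 2) ≤ S.card := Nat.le_of_mul_le_mul_left h1 (by positivity)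
  have h3 : S.card ≤ 2 * T.card := by omega
  have hch : ∀ x, ∃ h : ℤ, x ∈ T → h ∈ Icc (1 : ℤ) H ∧ x + h ∈ S := by
    intro x
    by_cases hx : x ∈ T
    · obtain ⟨h, h1, h2⟩ := (mem_filter.1 hx).2
      exact ⟨h, fun _ => ⟨h1, h2⟩⟩
    · exact ⟨0, fun h => absurd h hx⟩
  choose f hf using hch
  obtain ⟨h, hh, hcard⟩ := pigeon T (Icc (1 : ℤ) H) f (fun x hx => (hf x hx).1)
    ⟨1, by rw [mem_Icc]; omega⟩ H (by simp)
  rw [mem_Icc] at hh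
  refine ⟨h, hh.1, by exact_mod_cast hh.2, ?_⟩
  have h4 : (T.filter fun x => f x = h).card ≤ (S.filter fun x => x + h ∈ S).card := by
    apply card_le_card
    intro x hx
    rw [mem_filter] at hx ⊢
    refine ⟨(mem_filter.1 hx.1).1, ?_⟩
    rw [← hx.2]
    exact (hf x hx.1).2
  calc N ≤ K ^ A * S.card := hc
    _ ≤ K ^ A * (2 * (H * (S.filter fun x => x + h ∈ S).card)) := by
      gcongr
      exact h3.trans (by gcongr; exact hcard.trans (by gcongr))
    _ ≤ K ^ A * (K * (H * (S.filter fun x => x + h ∈ S).card)) := by gcongr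
    _ = _ := by rw [hH]; ring


theorem diff_natDegree (d : ℕ) (p : ℝ[X]) (hp : p.natDegree ≤ d + 1) (h : ℝ) :
    (taylor h p - p).natDegree ≤ d := by
  rw [natDegree_le_iff_coeff_eq_zero]
  intro n hn
  rw [coeff_sub]
  have hn' : p.natDegree ≤ n := by omega
  rcases hn'.eq_or_lt with he | hlt
  · rw [← he, coeff_taylor_natDegree]
    simp
  · rw [coeff_eq_zero_of_natDegree_lt hlt,
      coeff_eq_zero_of_natDegree_lt (by rw [natDegree_taylor]; exact hlt)]
    simp

theorem diff_coeff (d : ℕ) (p : ℝ[X]) (hp : p.natDegree ≤ d) (h : ℝ) (j : ℕ) :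
    (taylor h p - p).coeff j =
      ∑ l ∈ range d, (((l + 1 + j).choose j : ℕ) : ℝ) * p.coeff (l + 1 + j) * h ^ (l + 1) := by
  rw [coeff_sub, taylor_coeff]
  have hd : (hasseDeriv j p).natDegree < d + 1 := by
    have := natDegree_hasseDeriv_le p j
    omega
  rw [eval_eq_sum_range' hd, sum_range_succ']
  simp [hasseDeriv_coeff]

theorem choose_le_pow {K : ℕ} (hK : 2 ≤ K) (n j : ℕ) : ((n.choose j : ℕ) : ℝ) ≤ (K : ℝ) ^ n := by
  have : n.choose j ≤ K ^ n := (Nat.choose_le_two_pow n j).trans (by gcongr)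
  exact_mod_cast this

theorem down (d C B' : ℕ) : ∀ t : ℕ, ∃ B : ℕ, ∀ K : ℕ, 2 ≤ K → ∀ N : ℕ, 1 ≤ N →
    ∀ p : ℝ[X], p.natDegree ≤ d → ∀ h : ℤ, 1 ≤ h → h ≤ (K : ℤ) ^ C → ∀ ε : ℝ, 0 ≤ ε →
    (∀ j, Maj K B' (ε / (N : ℝ) ^ j) ((taylor (h : ℝ) p - p).coeff j)) →
    ∀ i, d < i + 1 + t → Maj K B (ε / (N : ℝ) ^ i) (p.coeff (i + 1)) := by
  intro t
  induction t with
  | zero =>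
    refine ⟨0, fun K hK N hN p hp h h1 h2 ε hε hM i hi => ?_⟩
    rw [coeff_eq_zero_of_natDegree_lt (by omega)]
    exact Maj.zero hK (by positivity)
  | succ t ih =>
    obtain ⟨B, hB⟩ := ih
    set E := 2 * d + 1 + C * (d + 1) with hE
    refine ⟨(B' + (B + E + 1) * d + 1) + E, fun K hK N hN p hp h h1 h2 ε hε hM i hi => ?_⟩
    have hIH := hB K hK N hN p hp h h1 h2 ε hε hM
    have hη : 0 ≤ ε / (N : ℝ) ^ i := by positivity
    have hNr : (1 : ℝ) ≤ N := by exact_mod_cast hN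
    have hKr : (2 : ℝ) ≤ K := by exact_mod_cast hK
    have hKr1 : (1 : ℝ) ≤ K := by linarith
    by_cases hid : d < i + 1
    · rw [coeff_eq_zero_of_natDegree_lt (by omega)]
      exact Maj.zero hK (by positivity)
    have hh0 : (0 : ℝ) < h := by exact_mod_cast (by omega : 0 < h)
    have hhK : (h : ℝ) ≤ (K : ℝ) ^ C := by exact_mod_cast h2
    have hbd : ∀ l < d, ∀ m ≤ 2 * d, |(((m.choose i : ℕ) * h ^ (l + 1) : ℤ) : ℝ)| ≤ (K : ℝ) ^ E := by
      intro l hl m hm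
      push_cast
      rw [abs_of_nonneg (by positivity)]
      calc ((m.choose i : ℕ) : ℝ) * (h : ℝ) ^ (l + 1) ≤ (K : ℝ) ^ (2 * d + 1) * ((K : ℝ) ^ C) ^ (d + 1) := by
            gcongr
            · exact (choose_le_pow hK m i).trans (pow_le_pow_right₀ hKr1 (by omega))
            · refine (pow_le_pow_left₀ hh0.le hhK _).trans (pow_le_pow_right₀ (one_le_pow₀ hKr1) (by omega))
        _ = _ := by rw [hE]; ring
    have hcoef := diff_coeff d p hp (h : ℝ) i
    obtain ⟨d', rfl⟩ : ∃ d', d = d' + 1 := ⟨d - 1, by omega⟩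
    rw [sum_range_succ'] at hcoef
    have hsum : Maj K ((B + E + 1) * (d' + 1)) (ε / (N : ℝ) ^ i)
        (∑ k ∈ range d', (((k + 1 + 1 + i).choose i : ℕ) : ℝ) * p.coeff (k + 1 + 1 + i) * (h : ℝ) ^ (k + 1 + 1)) := by
      refine Maj.mono hK (Maj.sum (B := B + E) hK hη _ _ ?_) (by simp) hη
      intro l hl
      rw [mem_range] at hl
      by_cases hbig : d' + 1 < l + 1 + 1 + i
      · rw [coeff_eq_zero_of_natDegree_lt (by omega)]
        simpa using Maj.zero hK hη
      have a1 := hIH (l + 1 + i) (by omega)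
      have a2 : Maj K B (ε / (N : ℝ) ^ i) (p.coeff (l + 1 + 1 + i)) := by
        have := a1.eta (C := 0) (η' := ε / (N : ℝ) ^ i) hK (by
          simp only [pow_zero, one_mul]
          gcongr
          omega)
        rw [show l + 1 + 1 + i = l + 1 + i + 1 by ring]
        simpa using this
      have a3 := a2.mul_int hK hη (((l + 1 + 1 + i).choose i : ℕ) * h ^ (l + 1 + 1))
        (hbd (l + 1) (by omega) _ (by omega))
      convert a3 using 1
      push_cast
      ring
    have h3 : Maj K (B' + (B + E + 1) * (d' + 1) + 1) (ε / (N : ℝ) ^ i)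
        ((((i + 1).choose i : ℕ) * h ^ (0 + 1) : ℤ) * p.coeff (i + 1)) := by
      have := (hM i).add hK hη hsum.neg
      convert this using 1
      rw [hcoef]
      rw [show 0 + 1 + i = i + 1 by ring]
      push_cast
      ring
    refine h3.of_mul_int hK hη _ ?_ (hbd 0 (by omega) _ (by omega))
    have : (i + 1).choose i ≠ 0 := (Nat.choose_pos (by omega)).ne'
    simp
    exact ⟨by omega, by omega⟩

theorem recur (d : ℕ) : ∀ A : ℕ, ∃ B : ℕ, ∀ K : ℕ, 2 ≤ K → ∀ N : ℕ, K ^ B ≤ N →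
    ∀ p : ℝ[X], p.natDegree ≤ d → ∀ S : Finset ℤ, S ⊆ Icc (-(N : ℤ)) N → N ≤ K ^ A * S.card →
    ∀ ε : ℝ, 0 ≤ ε → ε * N ≤ (K : ℝ) ^ A → (∀ x ∈ S, ∃ a : ℤ, |p.eval (x : ℝ) - a| ≤ ε) →
    ∀ j, Maj K B (ε / (N : ℝ) ^ j) (p.coeff j) := by
  classical
  induction d with
  | zero =>
    intro A
    refine ⟨0, fun K hK N hN p hp S hS hc ε hε hεN hpS j => ?_⟩
    have hne : S.Nonempty := by
      rw [nonempty_iff_ne_empty]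
      rintro rfl
      simp at hN hc
      omega
    obtain ⟨x, hx⟩ := hne
    obtain ⟨a, ha⟩ := hpS x hx
    rw [eq_C_of_natDegree_le_zero hp, eval_C] at ha
    rcases Nat.eq_zero_or_pos j with rfl | hj
    · exact ⟨1, a, le_rfl, by simp, by simpa using ha⟩
    · rw [coeff_eq_zero_of_natDegree_lt (by omega)]
      exact Maj.zero hK (by positivity)
  | succ d ih =>
    intro A
    obtain ⟨B1, hB1⟩ := ih (2 * A + 5)
    obtain ⟨B2, hB2⟩ := down (d + 1) (A + 4) B1 (d + 1)
    -- exponent for common denominators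
    set b := (B2 + 1) * (d + 1) with hb
    set A3 := A + (b + A + d + 6) with hA3
    obtain ⟨B4, hB4⟩ := remez (d + 1) A3
    refine ⟨B1 + B2 + B4 + A + b + 10, fun K hK N hN p hp S hS hc ε hε hεN hpS => ?_⟩
    have hmon : ∀ e ≤ B1 + B2 + B4 + A + b + 10, K ^ e ≤ N := fun e he =>
      (pow_le_pow_right₀ (by omega) he).trans hN
    have hN1 : 1 ≤ N := by simpa using hmon 0 (by omega)
    have hNr : (1 : ℝ) ≤ N := by exact_mod_cast hN1
    have hKr : (2 : ℝ) ≤ K := by exact_mod_cast hK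
    have hKr1 : (1 : ℝ) ≤ K := by linarith
    obtain ⟨h, h1, h2, h3⟩ := gap A K N hK (hmon _ (by omega)) S hS hc
    have hp' := diff_natDegree d p hp (h : ℝ)
    have hM := hB1 K hK N (hmon _ (by omega)) (taylor (h : ℝ) p - p) hp'
      (S.filter fun x => x + h ∈ S) ((filter_subset _ _).trans hS) h3 (2 * ε) (by positivity)
      (by
        calc 2 * ε * N = 2 * (ε * N) := by ring
          _ ≤ K * (K : ℝ) ^ A := by gcongr
          _ = (K : ℝ) ^ (A + 1) := by ring
          _ ≤ _ := pow_le_pow_right₀ hKr1 (by omega))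
      (by
        intro x hx
        rw [mem_filter] at hx
        obtain ⟨a, ha⟩ := hpS x hx.1
        obtain ⟨a', ha'⟩ := hpS _ hx.2
        refine ⟨a' - a, ?_⟩
        rw [eval_sub, taylor_eval]
        push_cast at ha' ⊢
        calc |eval ((x : ℝ) + h) p - eval (x : ℝ) p - (a' - a)|
            = |(eval ((x : ℝ) + h) p - a') - (eval (x : ℝ) p - a)| := by congr 1; ring
          _ ≤ |(eval ((x : ℝ) + h) p - a')| + |(eval (x : ℝ) p - a)| := abs_sub _ _
          _ ≤ _ := by linarith)
    have hM2 := hB2 K hK N hN1 p hp h h1 h2 (2 * ε) (by positivity) hM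
    have hM3 : ∀ i ∈ range (d + 1), Maj K (B2 + 1) (ε / (N : ℝ) ^ i) (p.coeff (i + 1)) := by
      intro i _
      refine (hM2 i (by omega)).eta hK ?_
      rw [mul_div_assoc, pow_one]
      gcongr
    obtain ⟨q, hq1, hq2, hq3⟩ := Maj.common hK (range (d + 1)) _ (fun i _ => by positivity) _ hM3
    rw [card_range, ← hb] at hq2
    rw [card_range, ← hb] at hq3
    have hq3' : ∀ i, ∃ a : ℤ, i ∈ range (d + 1) →
        |(q : ℝ) * p.coeff (i + 1) - a| ≤ (K : ℝ) ^ b * (ε / (N : ℝ) ^ i) := by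
      intro i
      by_cases hi : i ∈ range (d + 1)
      · obtain ⟨a, ha⟩ := hq3 i hi
        exact ⟨a, fun _ => ha⟩
      · exact ⟨0, fun h => absurd h hi⟩
    choose a ha using hq3'
    have hqr : (q : ℝ) ≤ (K : ℝ) ^ b := by exact_mod_cast hq2
    have hq0 : (0 : ℝ) < q := by exact_mod_cast (by omega : 0 < q)
    -- the reduced polynomial
    set s : ℝ[X] := ∑ i ∈ range (d + 1), C ((q : ℝ) * p.coeff (i + 1) - a i) * X ^ (i + 1) with hs
    have hpe : ∀ x : ℤ, (q : ℝ) * p.eval (x : ℝ) = q * p.coeff 0 + s.eval (x : ℝ) +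
        ((∑ i ∈ range (d + 1), a i * x ^ (i + 1) : ℤ) : ℝ) := by
      intro x
      rw [eval_eq_sum_range' (n := d + 1 + 1) (by omega), sum_range_succ', hs, eval_finsetSum]
      push_cast
      simp only [eval_mul, eval_C, eval_pow, eval_X]
      rw [add_comm, mul_add, add_assoc, ← sum_add_distrib, mul_sum]
      congr 1
      · simp
      · exact sum_congr rfl fun i _ => by ring
    have hsb : ∀ x ∈ S, |s.eval (x : ℝ)| ≤ (K : ℝ) ^ (b + A + d + 1) := by
      intro x hx
      have hx' := mem_Icc.1 (hS hx)
      have hxN : |(x : ℝ)| ≤ N := by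
        rw [abs_le]
        constructor <;> [exact_mod_cast hx'.1; exact_mod_cast hx'.2]
      rw [hs, eval_finsetSum]
      refine (abs_sum_le_sum_abs _ _).trans ?_
      have : ∀ i ∈ range (d + 1), |eval (x : ℝ) (C ((q : ℝ) * p.coeff (i + 1) - a i) * X ^ (i + 1))|
          ≤ (K : ℝ) ^ (b + A) := by
        intro i hi
        simp only [eval_mul, eval_C, eval_pow, eval_X]
        rw [abs_mul, abs_pow]
        calc _ ≤ (K : ℝ) ^ b * (ε / (N : ℝ) ^ i) * (N : ℝ) ^ (i + 1) := by
              gcongr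
              exact ha i hi
          _ = (K : ℝ) ^ b * (ε * N) := by field_simp; ring
          _ ≤ (K : ℝ) ^ b * (K : ℝ) ^ A := by gcongr
          _ = _ := by ring
      refine (sum_le_sum this).trans ?_
      rw [sum_const, card_range, nsmul_eq_mul]
      have : ((d + 1 : ℕ) : ℝ) ≤ (K : ℝ) ^ (d + 1) := by
        have : d + 1 ≤ K ^ (d + 1) := (Nat.lt_pow_self (by omega)).le
        exact_mod_cast this
      calc _ ≤ (K : ℝ) ^ (d + 1) * (K : ℝ) ^ (b + A) := by gcongr
        _ = _ := by ring
    have hintc : ∀ x, ∃ c : ℤ, x ∈ S → |q * p.coeff 0 + s.eval (x : ℝ) - c| ≤ (K : ℝ) ^ b * ε := by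
      intro x
      by_cases hx : x ∈ S
      · obtain ⟨c, hc⟩ := hpS x hx
        refine ⟨q * c - ∑ i ∈ range (d + 1), a i * x ^ (i + 1), fun _ => ?_⟩
        have : q * p.coeff 0 + s.eval (x : ℝ) - ((q * c - ∑ i ∈ range (d + 1), a i * x ^ (i + 1) : ℤ) : ℝ)
            = q * (p.eval (x : ℝ) - c) := by
          rw [mul_sub, hpe]
          push_cast
          ring
        rw [this, abs_mul, abs_of_pos hq0]
        gcongr
      · exact ⟨0, fun h => absurd h hx⟩
    choose c hc' using hintc
    have hεN' : ε ≤ (K : ℝ) ^ A := by nlinarith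
    set r0 : ℤ := round ((q : ℝ) * p.coeff 0) with hr0
    set W : ℕ := K ^ (b + A + d + 4) with hW
    have hcr : ∀ x ∈ S, c x ∈ Icc (r0 - W) (r0 + W) := by
      intro x hx
      have e1 := hc' x hx
      have e2 := hsb x hx
      have e3 := abs_sub_round ((q : ℝ) * p.coeff 0)
      rw [← hr0] at e3
      have e4 : (K : ℝ) ^ b * ε ≤ (K : ℝ) ^ (b + A + d + 1) := by
        calc _ ≤ (K : ℝ) ^ b * (K : ℝ) ^ A := by gcongr
          _ = (K : ℝ) ^ (b + A) := by ring
          _ ≤ _ := pow_le_pow_right₀ hKr1 (by omega)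
      have e5 : (1 : ℝ) ≤ (K : ℝ) ^ (b + A + d + 1) := one_le_pow₀ hKr1
      have e6 : (8 : ℝ) * (K : ℝ) ^ (b + A + d + 1) ≤ W := by
        rw [hW]
        push_cast
        calc (8 : ℝ) * (K : ℝ) ^ (b + A + d + 1) = 2 ^ 3 * (K : ℝ) ^ (b + A + d + 1) := by norm_num
          _ ≤ (K : ℝ) ^ 3 * (K : ℝ) ^ (b + A + d + 1) := by gcongr
          _ = _ := by ring
      have f1 := abs_le.1 e1
      have f2 := abs_le.1 e2
      have f3 := abs_le.1 e3
      rw [mem_Icc]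
      constructor
      · have : (r0 : ℝ) - W ≤ c x := by linarith
        exact_mod_cast this
      · have : (c x : ℝ) ≤ r0 + W := by linarith
        exact_mod_cast this
    obtain ⟨c0, _, hc0⟩ := pigeon S (Icc (r0 - W) (r0 + W)) c hcr
      ⟨r0, by rw [mem_Icc]; omega⟩ (K ^ (b + A + d + 6)) (by
        rw [Int.card_Icc]
        have : 4 * W ≤ K ^ (b + A + d + 6) := by
          calc 4 * W = 2 ^ 2 * K ^ (b + A + d + 4) := by rw [hW]; norm_num
            _ ≤ K ^ 2 * K ^ (b + A + d + 4) := by gcongr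
            _ = _ := by ring
        have : 1 ≤ W := one_le_pow₀ (by omega)
        omega)
    have hcS : N ≤ K ^ A3 * (S.filter fun x => c x = c0).card := by
      calc N ≤ K ^ A * S.card := hc
        _ ≤ K ^ A * (K ^ (b + A + d + 6) * (S.filter fun x => c x = c0).card) := by gcongr
        _ = _ := by rw [hA3]; ring
    set s' : ℝ[X] := s + C ((q : ℝ) * p.coeff 0 - c0) with hs'
    have hscoef : ∀ i, s.coeff i = if i ∈ Icc 1 (d + 1) then (q : ℝ) * p.coeff i - a (i - 1) else 0 := by
      intro i
      rw [hs, finsetSum_coeff]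
      simp only [coeff_C_mul, coeff_X_pow]
      split_ifs with hi
      · rw [mem_Icc] at hi
        rw [sum_eq_single (i - 1)]
        · rw [show i - 1 + 1 = i by omega]; simp
        · intro j _ hj
          rw [if_neg (by omega)]; simp
        · intro hn
          exact absurd (mem_range.2 (by omega)) hn
      · apply sum_eq_zero
        intro j hj
        rw [mem_range] at hj
        rw [if_neg]
        · simp
        · rintro rfl
          exact hi (mem_Icc.2 ⟨by omega, by omega⟩)
    have hsd : s'.natDegree ≤ d + 1 := by
      rw [natDegree_le_iff_coeff_eq_zero]
      intro i hi
      rw [hs', coeff_add, hscoef, if_neg (by rw [mem_Icc]; omega), coeff_C_of_ne_zero (by omega)]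
      simp
    have hrem := hB4 K hK N (hmon _ (by omega)) s' hsd _ ((filter_subset _ _).trans hS) hcS
      ((K : ℝ) ^ b * ε) (by positivity) (by
        intro x hx
        rw [mem_filter] at hx
        have := hc' x hx.1
        rw [hx.2] at this
        rw [hs', eval_add, eval_C]
        convert this using 2
        ring)
    have hfin : ∀ j, ∃ z : ℤ, |(q : ℝ) * p.coeff j - z| ≤ (K : ℝ) ^ (B4 + b) * (ε / (N : ℝ) ^ j) := by
      intro j
      have hj := hrem j
      have e : (K : ℝ) ^ B4 * ((K : ℝ) ^ b * ε / (N : ℝ) ^ j) = (K : ℝ) ^ (B4 + b) * (ε / (N : ℝ) ^ j) := by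
        rw [pow_add]; ring
      rw [e, hs', coeff_add, hscoef] at hj
      rcases Nat.eq_zero_or_pos j with rfl | hj0
      · refine ⟨c0, ?_⟩
        simpa using hj
      · rw [coeff_C_of_ne_zero (by omega), add_zero] at hj
        split_ifs at hj with hi
        · exact ⟨_, hj⟩
        · rw [mem_Icc] at hi
          rw [coeff_eq_zero_of_natDegree_lt (by omega)]
          refine ⟨0, ?_⟩
          simp
          positivity
    intro j
    obtain ⟨z, hz⟩ := hfin j
    have hηj : 0 ≤ ε / (N : ℝ) ^ j := by positivity
    refine Maj.mono (B := B4 + b) hK ⟨q, z, hq1, hq2.trans (pow_le_pow_right₀ (by omega) (by omega)), hz⟩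
      (by omega) hηj


theorem eC_eq (x : ℝ) : eC x = Complex.exp (Complex.I * ((2 * Real.pi * x : ℝ) : ℂ)) := by
  unfold eC
  congr 1
  push_cast
  ring

theorem eC_norm (x : ℝ) : ‖eC x‖ = 1 := by
  rw [eC_eq, mul_comm]
  exact Complex.norm_exp_ofReal_mul_I _

theorem eC_add (x y : ℝ) : eC (x + y) = eC x * eC y := by
  unfold eC
  rw [← Complex.exp_add]
  congr 1
  push_cast
  ring

theorem eC_zero : eC 0 = 1 := by simp [eC]

theorem eC_int (n : ℤ) : eC n = 1 := by
  unfold eC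
  rw [← Complex.exp_int_mul_two_pi_mul_I n]
  congr 1
  push_cast
  ring

theorem eC_nat_mul (x : ℝ) (n : ℕ) : eC (x * n) = eC x ^ n := by
  unfold eC
  rw [← Complex.exp_nat_mul]
  congr 1
  push_cast
  ring

theorem eC_conj (x : ℝ) : (starRingEnd ℂ) (eC x) = eC (-x) := by
  unfold eC
  rw [← Complex.exp_conj]
  congr 1
  simp only [map_mul, Complex.conj_I, Complex.conj_ofReal, map_ofNat]
  push_cast
  ring

theorem eC_sub_le (x y : ℝ) : ‖eC x - eC y‖ ≤ 7 * |x - y| := by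
  have e : eC x - eC y = eC y * (eC (x - y) - 1) := by
    rw [mul_sub, ← eC_add]
    simp
  rw [e, norm_mul, eC_norm, one_mul, eC_eq]
  refine Real.norm_exp_I_mul_ofReal_sub_one_le.trans ?_
  rw [Real.norm_eq_abs, abs_mul, abs_of_pos (by positivity)]
  have := Real.pi_lt_d2
  gcongr
  linarith

theorem eC_sub_one_ge (x : ℝ) (hx : |x| ≤ 1 / 2) : 4 * |x| ≤ ‖eC x - 1‖ := by
  rw [eC_eq, Complex.norm_exp_I_mul_ofReal_sub_one]
  have hpi := Real.pi_pos
  have : |2 * Real.pi * x / 2| ≤ Real.pi / 2 := by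
    rw [show 2 * Real.pi * x / 2 = Real.pi * x by ring, abs_mul, abs_of_pos hpi]
    nlinarith
  have h2 := Real.mul_abs_le_abs_sin this
  rw [norm_mul, Real.norm_eq_abs, Real.norm_eq_abs, abs_of_pos (by norm_num : (0:ℝ) < 2)]
  have e : 2 / Real.pi * |2 * Real.pi * x / 2| = 2 * |x| := by
    rw [show 2 * Real.pi * x / 2 = Real.pi * x by ring, abs_mul, abs_of_pos hpi]
    field_simp
  rw [e] at h2
  linarith

theorem geom_bound (θ : ℝ) (T : ℕ) :
    ‖∑ t ∈ range T, eC (θ * t)‖ * |θ - round θ| ≤ 1 := by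
  set θ' := θ - round θ with hθ'
  have e : ∀ t : ℕ, eC (θ * t) = eC θ' ^ t := by
    intro t
    rw [← eC_nat_mul]
    have : θ * t = θ' * t + ((round θ * t : ℤ) : ℝ) := by
      rw [hθ']; push_cast; ring
    rw [this, eC_add, eC_int, mul_one]
  simp_rw [e]
  have h1 := mul_geom_sum (eC θ') T
  have h2 := eC_sub_one_ge θ' (abs_sub_round θ)
  have h3 : ‖eC θ' - 1‖ * ‖∑ i ∈ range T, eC θ' ^ i‖ ≤ 2 := by
    rw [← norm_mul, h1]
    calc _ ≤ ‖eC θ' ^ T‖ + ‖(1 : ℂ)‖ := norm_sub_le _ _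
      _ = 2 := by rw [norm_pow, eC_norm]; norm_num
  have h4 : 4 * |θ'| * ‖∑ i ∈ range T, eC θ' ^ i‖ ≤ 2 := le_trans (by gcongr) h3
  linarith

theorem many {ι : Type*} (s : Finset ι) (f : ι → ℝ) (K A c e : ℕ) (hK : 2 ≤ K) (X Y : ℝ)
    (hX : 0 < X) (hY : 0 < Y) (hs : (s.card : ℝ) ≤ (K : ℝ) ^ c * X)
    (hf : ∀ i ∈ s, f i ≤ (K : ℝ) ^ e * Y) (hsum : X * Y ≤ (K : ℝ) ^ A * ∑ i ∈ s, f i) :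
    X ≤ (K : ℝ) ^ (A + e + 1) * ((s.filter fun i => Y ≤ (K : ℝ) ^ (A + c + 1) * f i).card : ℝ) := by
  have hKr : (2 : ℝ) ≤ K := by exact_mod_cast hK
  have hK0 : (0 : ℝ) < K := by linarith
  rw [← sum_filter_add_sum_filter_not s (fun i => Y ≤ (K : ℝ) ^ (A + c + 1) * f i)] at hsum
  set s1 := s.filter fun i => Y ≤ (K : ℝ) ^ (A + c + 1) * f i with hs1
  set s2 := s.filter fun i => ¬ Y ≤ (K : ℝ) ^ (A + c + 1) * f i with hs2
  have h1 : ∑ i ∈ s1, f i ≤ s1.card * ((K : ℝ) ^ e * Y) := by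
    rw [← nsmul_eq_mul]
    exact sum_le_card_nsmul _ _ _ fun i hi => hf i (mem_filter.1 hi).1
  have h2 : (K : ℝ) ^ (A + c + 1) * ∑ i ∈ s2, f i ≤ (K : ℝ) ^ c * X * Y := by
    rw [mul_sum]
    calc _ ≤ ∑ i ∈ s2, Y := sum_le_sum fun i hi => (not_le.1 (mem_filter.1 hi).2).le
      _ = s2.card * Y := by rw [sum_const, nsmul_eq_mul]
      _ ≤ s.card * Y := by gcongr; exact filter_subset _ _
      _ ≤ _ := by gcongr
  have h3 : (K : ℝ) ^ (A + 1) * ∑ i ∈ s2, f i ≤ X * Y := by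
    have : (K : ℝ) ^ c * ((K : ℝ) ^ (A + 1) * ∑ i ∈ s2, f i) ≤ (K : ℝ) ^ c * (X * Y) := by
      calc _ = (K : ℝ) ^ (A + c + 1) * ∑ i ∈ s2, f i := by ring
        _ ≤ _ := h2
        _ = _ := by ring
    exact le_of_mul_le_mul_left this (by positivity)
  have h4 : (K : ℝ) ^ (A + 1) * ∑ i ∈ s1, f i ≤ (K : ℝ) ^ (A + 1) * (s1.card * ((K : ℝ) ^ e * Y)) := by
    gcongr
  have h5 : K * (X * Y) ≤ (K : ℝ) ^ (A + 1) * (s1.card * ((K : ℝ) ^ e * Y)) + X * Y := by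
    calc K * (X * Y) ≤ K * ((K : ℝ) ^ A * (∑ i ∈ s1, f i + ∑ i ∈ s2, f i)) := by gcongr
      _ = (K : ℝ) ^ (A + 1) * ∑ i ∈ s1, f i + (K : ℝ) ^ (A + 1) * ∑ i ∈ s2, f i := by ring
      _ ≤ _ := by linarith
  have h6 : X * Y ≤ (K : ℝ) ^ (A + e + 1) * s1.card * Y := by
    have e1 : (K : ℝ) ^ (A + 1) * (s1.card * ((K : ℝ) ^ e * Y)) = (K : ℝ) ^ (A + e + 1) * s1.card * Y := by
      ring
    rw [e1] at h5
    have : 0 < X * Y := by positivity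
    nlinarith
  exact le_of_mul_le_mul_right h6 hY

theorem sq_norm_sum {ι : Type*} (s : Finset ι) (θ : ι → ℝ) :
    ((‖∑ x ∈ s, eC (θ x)‖ ^ 2 : ℝ) : ℂ) = ∑ x ∈ s, ∑ y ∈ s, eC (θ y - θ x) := by
  push_cast
  rw [← Complex.conj_mul', map_sum, sum_mul_sum]
  refine sum_congr rfl fun x _ => sum_congr rfl fun y _ => ?_
  rw [eC_conj, ← eC_add]
  congr 1
  ring

theorem vdc_ineq (N : ℕ) (p : ℝ[X]) (u v : ℤ) (hu : -(N : ℤ) ≤ u) (hv : v ≤ N) :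
    ‖∑ x ∈ Icc u v, eC (p.eval (x : ℝ))‖ ^ 2 ≤ ∑ h ∈ Icc (-(2 * N : ℤ)) (2 * N),
      ‖∑ x ∈ Icc (max u (u - h)) (min v (v - h)), eC ((taylor (h : ℝ) p - p).eval (x : ℝ))‖ := by
  have h1 := sq_norm_sum (Icc u v) (fun x : ℤ => p.eval (x : ℝ))
  have h2 : ∑ x ∈ Icc u v, ∑ y ∈ Icc u v, eC (p.eval (y : ℝ) - p.eval (x : ℝ)) =
      ∑ h ∈ Icc (-(2 * N : ℤ)) (2 * N), ∑ x ∈ Icc (max u (u - h)) (min v (v - h)),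
        eC ((taylor (h : ℝ) p - p).eval (x : ℝ)) := by
    rw [sum_sigma', sum_sigma']
    refine sum_bij' (fun a _ => ⟨a.2 - a.1, a.1⟩) (fun b _ => ⟨b.2, b.2 + b.1⟩) ?_ ?_ ?_ ?_ ?_
    · rintro ⟨x, y⟩ h
      simp only [mem_sigma, mem_Icc] at h ⊢
      omega
    · rintro ⟨h, x⟩ hx
      simp only [mem_sigma, mem_Icc] at hx ⊢
      omega
    · rintro ⟨x, y⟩ h
      simp
    · rintro ⟨h, x⟩ hx
      simp
    · rintro ⟨x, y⟩ h
      simp [taylor_eval]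
  have h3 : ‖∑ x ∈ Icc u v, eC (p.eval (x : ℝ))‖ ^ 2 =
      ‖((‖∑ x ∈ Icc u v, eC (p.eval (x : ℝ))‖ ^ 2 : ℝ) : ℂ)‖ := by
    rw [Complex.norm_real, Real.norm_eq_abs, abs_of_nonneg (by positivity)]
  rw [h3, h1, h2]
  exact norm_sum_le _ _

theorem card_Icc_le (N : ℕ) (hN : 1 ≤ N) (u v : ℤ) (hu : -(N : ℤ) ≤ u) (hv : v ≤ N) :
    ((Icc u v).card : ℝ) ≤ 4 * N := by
  have : (Icc u v).card ≤ 4 * N := by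
    rw [Int.card_Icc]
    omega
  exact_mod_cast this

theorem norm_sum_eC_le {ι : Type*} (s : Finset ι) (θ : ι → ℝ) : ‖∑ x ∈ s, eC (θ x)‖ ≤ s.card := by
  refine (norm_sum_le _ _).trans ?_
  simp [eC_norm]

theorem vdc (A K N : ℕ) (hK : 2 ≤ K) (hN : 1 ≤ N) (p : ℝ[X]) (u v : ℤ) (hu : -(N : ℤ) ≤ u)
    (hv : v ≤ N) (h : (N : ℝ) ≤ (K : ℝ) ^ A * ‖∑ x ∈ Icc u v, eC (p.eval (x : ℝ))‖) :
    ∃ S ⊆ Icc (-((2 * N : ℕ) : ℤ)) (2 * N : ℕ), N ≤ K ^ (2 * A + 3) * S.card ∧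
      ∀ h ∈ S, ∃ u' v' : ℤ, -(N : ℤ) ≤ u' ∧ v' ≤ N ∧
        (N : ℝ) ≤ (K : ℝ) ^ (2 * A + 4) *
          ‖∑ x ∈ Icc u' v', eC ((taylor (h : ℝ) p - p).eval (x : ℝ))‖ := by
  have hKr : (2 : ℝ) ≤ K := by exact_mod_cast hK
  have hNr : (1 : ℝ) ≤ N := by exact_mod_cast hN
  have h1 := vdc_ineq N p u v hu hv
  have h2 := many (Icc (-(2 * N : ℤ)) (2 * N)) (fun h : ℤ =>
      ‖∑ x ∈ Icc (max u (u - h)) (min v (v - h)), eC ((taylor (h : ℝ) p - p).eval (x : ℝ))‖)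
      K (2 * A) 3 2 hK N N (by linarith) (by linarith) (by
        have a1 : (Icc (-(2 * N : ℤ)) (2 * N)).card ≤ 8 * N := by
          rw [Int.card_Icc]
          omega
        have a2 : ((Icc (-(2 * N : ℤ)) (2 * N)).card : ℝ) ≤ 8 * N := by exact_mod_cast a1
        have a3 : (8 : ℝ) ≤ (K : ℝ) ^ 3 := by
          calc (8 : ℝ) = 2 ^ 3 := by norm_num
            _ ≤ _ := by gcongr
        exact a2.trans (by gcongr))
      (by
        intro i hi
        refine (norm_sum_eC_le _ _).trans ((card_Icc_le N hN _ _ (by omega) (by omega)).trans ?_)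
        have a3 : (4 : ℝ) ≤ (K : ℝ) ^ 2 := by
          calc (4 : ℝ) = 2 ^ 2 := by norm_num
            _ ≤ _ := by gcongr
        gcongr)
      (by
        calc (N : ℝ) * N ≤ ((K : ℝ) ^ A * ‖∑ x ∈ Icc u v, eC (p.eval (x : ℝ))‖) *
              ((K : ℝ) ^ A * ‖∑ x ∈ Icc u v, eC (p.eval (x : ℝ))‖) := by gcongr
          _ = (K : ℝ) ^ (2 * A) * ‖∑ x ∈ Icc u v, eC (p.eval (x : ℝ))‖ ^ 2 := by ring
          _ ≤ _ := by gcongr)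
  refine ⟨(Icc (-(2 * N : ℤ)) (2 * N)).filter fun h : ℤ => (N : ℝ) ≤ (K : ℝ) ^ (2 * A + 3 + 1) *
    ‖∑ x ∈ Icc (max u (u - h)) (min v (v - h)), eC ((taylor (h : ℝ) p - p).eval (x : ℝ))‖,
    ?_, by exact_mod_cast h2, ?_⟩
  · refine (filter_subset _ _).trans ?_
    push_cast
    exact subset_rfl
  · intro h hh
    rw [mem_filter] at hh
    exact ⟨_, _, by omega, by omega, hh.2⟩

theorem shift_one (z : ℤ → ℂ) (hz : ∀ x, ‖z x‖ ≤ 1) (u v : ℤ) :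
    ‖∑ x ∈ Icc u v, z x - ∑ x ∈ Icc u v, z (x + 1)‖ ≤ 2 := by
  by_cases huv : u ≤ v
  · have e1 : ∑ x ∈ Icc u v, z (x + 1) = ∑ x ∈ Icc (u + 1) (v + 1), z x := by
      rw [← map_add_right_Icc, sum_map]
      rfl
    have e2 : Icc u v = insert u (Icc (u + 1) v) := by
      ext x; simp only [mem_Icc, mem_insert]; omega
    have e3 : Icc (u + 1) (v + 1) = insert (v + 1) (Icc (u + 1) v) := by
      ext x; simp only [mem_Icc, mem_insert]; omega
    rw [e1, e3, sum_insert (by simp), e2, sum_insert (by simp)]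
    have : z u + ∑ x ∈ Icc (u + 1) v, z x - (z (v + 1) + ∑ x ∈ Icc (u + 1) v, z x) =
      z u - z (v + 1) := by ring
    rw [this]
    refine (norm_sub_le _ _).trans ?_
    have := hz u
    have := hz (v + 1)
    linarith
  · rw [Icc_eq_empty huv]; simp

theorem shift_many (z : ℤ → ℂ) (hz : ∀ x, ‖z x‖ ≤ 1) (u v : ℤ) (s : ℕ) :
    ‖∑ x ∈ Icc u v, z x - ∑ x ∈ Icc u v, z (x + s)‖ ≤ 2 * s := by
  induction s with
  | zero => simp
  | succ s ih =>
    have h1 := shift_one (fun x => z (x + s)) (fun x => hz _) u v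
    have : ∑ x ∈ Icc u v, z x - ∑ x ∈ Icc u v, z (x + (s + 1 : ℕ)) =
      (∑ x ∈ Icc u v, z x - ∑ x ∈ Icc u v, z (x + s)) +
      (∑ x ∈ Icc u v, z (x + s) - ∑ x ∈ Icc u v, z (x + 1 + s)) := by
      rw [sub_add_sub_cancel]
      congr 1
      refine sum_congr rfl fun x _ => ?_
      congr 1
      push_cast
      ring
    rw [this]
    refine (norm_add_le _ _).trans ?_
    push_cast
    linarith

theorem shift_avg (z : ℤ → ℂ) (hz : ∀ x, ‖z x‖ ≤ 1) (u v : ℤ) (q T : ℕ) :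
    T * ‖∑ x ∈ Icc u v, z x‖ ≤ T * (2 * (q * T)) +
      ∑ x ∈ Icc u v, ‖∑ t ∈ range T, z (x + q * t)‖ := by
  have e : (T : ℂ) * ∑ x ∈ Icc u v, z x =
      ∑ t ∈ range T, (∑ x ∈ Icc u v, z x - ∑ x ∈ Icc u v, z (x + (q * t : ℕ))) +
      ∑ x ∈ Icc u v, ∑ t ∈ range T, z (x + q * t) := by
    rw [sum_sub_distrib, sum_comm (s := Icc u v), sum_const, card_range, nsmul_eq_mul]
    push_cast
    ring
  have e2 : T * ‖∑ x ∈ Icc u v, z x‖ = ‖(T : ℂ) * ∑ x ∈ Icc u v, z x‖ := by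
    rw [norm_mul, Complex.norm_natCast]
  rw [e2, e]
  refine (norm_add_le _ _).trans ?_
  gcongr
  · refine (norm_sum_le _ _).trans ?_
    calc _ ≤ ∑ t ∈ range T, (2 * (q * T) : ℝ) := by
          refine sum_le_sum fun t ht => ?_
          refine (shift_many z hz u v (q * t)).trans ?_
          push_cast
          have : (t : ℝ) ≤ T := by exact_mod_cast (mem_range.1 ht).le
          gcongr
      _ = _ := by simp
  · exact norm_sum_le _ _


theorem pow_diff (n : ℕ) (x y : ℤ) (R : ℝ) (hx : |(x : ℝ)| ≤ R) (hy : |(y : ℝ)| ≤ R) :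
    ∃ m : ℤ, y ^ n - x ^ n = (y - x) * m ∧ |(m : ℝ)| ≤ n * R ^ (n - 1) := by
  refine ⟨∑ i ∈ range n, y ^ i * x ^ (n - 1 - i), ?_, ?_⟩
  · rw [mul_comm, geom_sum₂_mul]
  · push_cast
    have hR : 0 ≤ R := (abs_nonneg _).trans hx
    refine (abs_sum_le_sum_abs _ _).trans ?_
    calc _ ≤ ∑ i ∈ range n, R ^ (n - 1) := by
          refine sum_le_sum fun i hi => ?_
          have := mem_range.1 hi
          rw [abs_mul, abs_pow, abs_pow]
          calc _ ≤ R ^ i * R ^ (n - 1 - i) := by gcongr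
            _ = _ := by rw [← pow_add]; congr 1; omega
      _ = _ := by simp

theorem eval_split (D : ℕ) (p : ℝ[X]) (hp : p.natDegree ≤ D + 1) (x : ℝ) :
    p.eval x = p.coeff 0 + p.coeff 1 * x + ∑ i ∈ range D, p.coeff (i + 2) * x ^ (i + 2) := by
  rw [eval_eq_sum_range' (n := D + 2) (by omega), sum_range_succ', sum_range_succ']
  simp
  ring

theorem phase (D b K N : ℕ) (hK : 2 ≤ K) (hN : 1 ≤ N) (p : ℝ[X]) (hp : p.natDegree ≤ D + 1)
    (q : ℤ)
    (hq : ∀ i ∈ range D, ∃ a : ℤ, |(q : ℝ) * p.coeff (i + 2) - a| ≤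
      (K : ℝ) ^ b * (1 / (N : ℝ) ^ (i + 2)))
    (x t : ℤ) (hx : |(x : ℝ)| ≤ 2 * N) (hxt : |((x + q * t : ℤ) : ℝ)| ≤ 2 * N) :
    ∃ m : ℤ, |p.eval ((x + q * t : ℤ) : ℝ) - p.eval (x : ℝ) - q * p.coeff 1 * t - m| ≤
      (K : ℝ) ^ (b + 3 * D + 4) * |(t : ℝ)| / N := by
  have hKr : (2 : ℝ) ≤ K := by exact_mod_cast hK
  have hNr : (1 : ℝ) ≤ N := by exact_mod_cast hN
  have h1 : ∀ i, ∃ a : ℤ, i ∈ range D → |(q : ℝ) * p.coeff (i + 2) - a| ≤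
      (K : ℝ) ^ b * (1 / (N : ℝ) ^ (i + 2)) := by
    intro i
    by_cases hi : i ∈ range D
    · obtain ⟨a, ha⟩ := hq i hi
      exact ⟨a, fun _ => ha⟩
    · exact ⟨0, fun h => absurd h hi⟩
  choose a ha using h1
  have h2 : ∀ i, ∃ m : ℤ, (x + q * t) ^ (i + 2) - x ^ (i + 2) = (x + q * t - x) * m ∧
      |(m : ℝ)| ≤ (i + 2 : ℕ) * (2 * (N : ℝ)) ^ (i + 2 - 1) :=
    fun i => pow_diff (i + 2) x (x + q * t) _ hx hxt
  choose m hm hmb using h2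
  refine ⟨∑ i ∈ range D, a i * (t * m i), ?_⟩
  rw [eval_split D p hp, eval_split D p hp]
  have e : p.coeff 0 + p.coeff 1 * ((x + q * t : ℤ) : ℝ) +
      ∑ i ∈ range D, p.coeff (i + 2) * ((x + q * t : ℤ) : ℝ) ^ (i + 2) -
      (p.coeff 0 + p.coeff 1 * (x : ℝ) + ∑ i ∈ range D, p.coeff (i + 2) * (x : ℝ) ^ (i + 2)) -
      q * p.coeff 1 * t - ((∑ i ∈ range D, a i * (t * m i) : ℤ) : ℝ) =
      ∑ i ∈ range D, ((q : ℝ) * p.coeff (i + 2) - a i) * (t * m i) := by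
    have e1 : ∀ i, ((x + q * t : ℤ) : ℝ) ^ (i + 2) = (x : ℝ) ^ (i + 2) + q * t * m i := by
      intro i
      have := hm i
      have h3 : (x + q * t) ^ (i + 2) = x ^ (i + 2) + q * t * m i := by
        have e4 : (x + q * t - x) * m i = q * t * m i := by ring
        rw [e4] at this
        linarith
      exact_mod_cast h3
    simp only [e1, mul_add, sum_add_distrib, sub_mul, sum_sub_distrib]
    push_cast
    have e5 : ∀ i, p.coeff (i + 2) * ((q : ℝ) * t * m i) = q * p.coeff (i + 2) * (t * m i) := by
      intro i; ring
    simp only [e5]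
    ring
  rw [e]
  refine (abs_sum_le_sum_abs _ _).trans ?_
  have h3 : ∀ i ∈ range D, |((q : ℝ) * p.coeff (i + 2) - a i) * (t * m i)| ≤
      (K : ℝ) ^ (b + 2 * D + 4) * |(t : ℝ)| / N := by
    intro i hi
    have hi' := mem_range.1 hi
    rw [abs_mul, abs_mul]
    have c1 : ((i + 2 : ℕ) : ℝ) * 2 ^ (i + 1) ≤ (K : ℝ) ^ (2 * D + 4) := by
      have : ((i + 2 : ℕ) : ℝ) ≤ 2 ^ (i + 2) := by exact_mod_cast (Nat.lt_two_pow_self).le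
      calc ((i + 2 : ℕ) : ℝ) * 2 ^ (i + 1) ≤ 2 ^ (i + 2) * 2 ^ (i + 1) := by gcongr
        _ = 2 ^ (2 * i + 3) := by ring
        _ ≤ 2 ^ (2 * D + 4) := pow_le_pow_right₀ (by norm_num) (by omega)
        _ ≤ _ := by gcongr
    calc _ ≤ ((K : ℝ) ^ b * (1 / (N : ℝ) ^ (i + 2))) *
          (|(t : ℝ)| * ((i + 2 : ℕ) * (2 * (N : ℝ)) ^ (i + 2 - 1))) := by
          gcongr
          · exact ha i hi
          · exact hmb i
      _ = (K : ℝ) ^ b * ((((i + 2 : ℕ) : ℝ) * 2 ^ (i + 1)) * |(t : ℝ)| / N) := by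
          rw [show i + 2 - 1 = i + 1 by omega, mul_pow]
          field_simp
          ring
      _ ≤ (K : ℝ) ^ b * ((K : ℝ) ^ (2 * D + 4) * |(t : ℝ)| / N) := by gcongr
      _ = _ := by ring
  calc _ ≤ ∑ i ∈ range D, (K : ℝ) ^ (b + 2 * D + 4) * |(t : ℝ)| / N := sum_le_sum h3
    _ = D * ((K : ℝ) ^ (b + 2 * D + 4) * |(t : ℝ)| / N) := by simp
    _ ≤ (K : ℝ) ^ D * ((K : ℝ) ^ (b + 2 * D + 4) * |(t : ℝ)| / N) := by
        gcongr
        calc (D : ℝ) ≤ 2 ^ D := by exact_mod_cast (Nat.lt_two_pow_self).le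
          _ ≤ _ := by gcongr
    _ = _ := by ring

theorem weyl_lin (D b1 A : ℕ) : ∃ B : ℕ, ∀ K : ℕ, 2 ≤ K → ∀ N : ℕ, K ^ B ≤ N →
    ∀ p : ℝ[X], p.natDegree ≤ D + 1 → (∀ i ∈ range D, Maj K b1 (1 / (N : ℝ) ^ (i + 2)) (p.coeff (i + 2))) →
    ∀ u v : ℤ, -(N : ℤ) ≤ u → v ≤ N →
    (N : ℝ) ≤ (K : ℝ) ^ A * ‖∑ x ∈ Icc u v, eC (p.eval (x : ℝ))‖ →
    Maj K B (1 / (N : ℝ)) (p.coeff 1) := by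
  set b := b1 * D with hb
  set w := b + 3 * D + A + 11 with hw
  refine ⟨A + w + 5, fun K hK N hN p hp hM u v hu hv hS => ?_⟩
  have hKr : (2 : ℝ) ≤ K := by exact_mod_cast hK
  have hK0 : (0 : ℝ) < K := by linarith
  obtain ⟨q, hq1, hq2, hq⟩ := Maj.common hK (range D) (fun i => 1 / (N : ℝ) ^ (i + 2))
    (fun i _ => by positivity) (fun i => p.coeff (i + 2)) hM
  rw [card_range, ← hb] at hq2 hq
  lift q to ℕ using by omega
  have hq1' : (1 : ℝ) ≤ q := by exact_mod_cast hq1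
  have hq2' : (q : ℝ) ≤ (K : ℝ) ^ b := by exact_mod_cast hq2
  have hN1 : 1 ≤ N := le_trans (Nat.one_le_pow _ _ (by omega)) hN
  have hNr : (1 : ℝ) ≤ N := by exact_mod_cast hN1
  set T := N / K ^ w with hT
  have hKw : 0 < K ^ w := by positivity
  have hT1 : 1 ≤ T := by
    rw [hT, Nat.le_div_iff_mul_le hKw, one_mul]
    exact le_trans (Nat.pow_le_pow_right (by omega) (by omega)) hN
  have hT1r : (1 : ℝ) ≤ T := by exact_mod_cast hT1
  have hTle : (T : ℝ) * (K : ℝ) ^ w ≤ N := by exact_mod_cast Nat.div_mul_le_self N (K ^ w)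
  have hTge : (N : ℝ) ≤ 2 * T * (K : ℝ) ^ w := by
    have : N ≤ 2 * T * K ^ w := by
      have := Nat.lt_div_mul_add (a := N) hKw
      rw [← hT] at this
      nlinarith
    exact_mod_cast this
  have h2pow : ∀ n : ℕ, (2 : ℝ) ^ n ≤ (K : ℝ) ^ n := fun n => by gcongr
  have h16 : (16 : ℝ) ≤ (K : ℝ) ^ 4 := by have := h2pow 4; norm_num at this; linarith
  have h8 : (8 : ℝ) ≤ (K : ℝ) ^ 3 := by have := h2pow 3; norm_num at this; linarith
  have h4 : (4 : ℝ) ≤ (K : ℝ) ^ 2 := by have := h2pow 2; norm_num at this; linarith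
  -- q T is small
  have hqT : 4 * (K : ℝ) ^ A * (q * T) ≤ N := by
    calc 4 * (K : ℝ) ^ A * (q * T) ≤ (K : ℝ) ^ 2 * (K : ℝ) ^ A * ((K : ℝ) ^ b * T) := by gcongr
      _ = T * (K : ℝ) ^ (2 + A + b) := by ring
      _ ≤ T * (K : ℝ) ^ w := by gcongr <;> first | linarith | omega
      _ ≤ N := hTle
  have hqT' : (q : ℝ) * T ≤ N := by
    have : (1 : ℝ) ≤ 4 * (K : ℝ) ^ A := by
      have := one_le_pow₀ (n := A) (by linarith : (1 : ℝ) ≤ K)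
      linarith
    nlinarith [mul_nonneg (by linarith : (0:ℝ) ≤ q) (by linarith : (0:ℝ) ≤ T)]
  -- some x with a long sum
  have hx : ∃ x ∈ Icc u v, (T : ℝ) ≤ 8 * (K : ℝ) ^ A * ‖∑ t ∈ range T, eC (p.eval ((x + q * t : ℤ) : ℝ))‖ := by
    by_contra! hcon
    have s1 := shift_avg (fun x : ℤ => eC (p.eval (x : ℝ))) (fun x => (eC_norm _).le) u v q T
    have s2 : 8 * (K : ℝ) ^ A * ∑ x ∈ Icc u v, ‖∑ t ∈ range T, eC (p.eval ((x + q * t : ℤ) : ℝ))‖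
        < 4 * N * T := by
      have hne : (Icc u v).Nonempty := by
        by_contra hne
        rw [not_nonempty_iff_eq_empty] at hne
        rw [hne] at hS
        simp at hS
        linarith
      rw [mul_sum]
      calc _ < ∑ x ∈ Icc u v, (T : ℝ) := sum_lt_sum_of_nonempty hne hcon
        _ = (Icc u v).card * T := by simp
        _ ≤ _ := by
          gcongr
          exact card_Icc_le N hN1 u v hu hv
    have s3 : (T : ℝ) * N ≤ (K : ℝ) ^ A * (T * ‖∑ x ∈ Icc u v, eC (p.eval (x : ℝ))‖) := by
      calc (T : ℝ) * N ≤ T * ((K : ℝ) ^ A * ‖∑ x ∈ Icc u v, eC (p.eval (x : ℝ))‖) := by gcongr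
        _ = _ := by ring
    have s4 : (K : ℝ) ^ A * (T * ‖∑ x ∈ Icc u v, eC (p.eval (x : ℝ))‖) ≤ (K : ℝ) ^ A * (T * (2 * (q * T)) +
      ∑ x ∈ Icc u v, ‖∑ t ∈ range T, eC (p.eval ((x + q * t : ℤ) : ℝ))‖) := by
      gcongr
    have s5 : (4 * (K : ℝ) ^ A * (q * T)) * T ≤ N * T := by gcongr
    nlinarith
  obtain ⟨x, hxI, hx⟩ := hx
  rw [mem_Icc] at hxI
  have hxN : |(x : ℝ)| ≤ N := by
    rw [abs_le]
    constructor
    · exact_mod_cast (by omega : -(N : ℤ) ≤ x)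
    · exact_mod_cast (by omega : x ≤ (N : ℤ))
  have hph : ∀ t ∈ range T, ‖eC (p.eval ((x + q * t : ℤ) : ℝ)) - eC (p.eval (x : ℝ)) * eC (q * p.coeff 1 * t)‖ ≤
      7 * ((K : ℝ) ^ (b + 3 * D + 4) * T / N) := by
    intro t ht
    have htT : (t : ℝ) ≤ T := by exact_mod_cast (mem_range.1 ht).le
    have hqt : (q : ℝ) * t ≤ N := le_trans (by gcongr) hqT'
    obtain ⟨m, hm⟩ := phase D b K N hK hN1 p hp q hq x t (by linarith) (by
      push_cast
      refine (abs_add_le _ _).trans ?_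
      rw [abs_of_nonneg (by positivity : (0 : ℝ) ≤ (q : ℝ) * t)]
      linarith)
    have e : eC (p.eval (x : ℝ)) * eC (q * p.coeff 1 * t) = eC (p.eval (x : ℝ) + q * p.coeff 1 * t + m) := by
      rw [eC_add, eC_add, eC_int, mul_one]
    rw [e]
    refine (eC_sub_le _ _).trans ?_
    refine mul_le_mul_of_nonneg_left ?_ (by norm_num)
    have e3 : p.eval ((x + q * t : ℤ) : ℝ) - (p.eval (x : ℝ) + q * p.coeff 1 * t + m) =
      p.eval ((x + q * t : ℤ) : ℝ) - p.eval (x : ℝ) - q * p.coeff 1 * t - m := by ring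
    rw [e3]
    have hm' : |p.eval ((x + q * t : ℤ) : ℝ) - p.eval (x : ℝ) - q * p.coeff 1 * t - m| ≤
      (K : ℝ) ^ (b + 3 * D + 4) * (t : ℝ) / N := by
      have e6 : |((t : ℤ) : ℝ)| = (t : ℝ) := by simp
      rw [e6] at hm
      exact_mod_cast hm
    refine hm'.trans ?_
    gcongr
  have hbig : (T : ℝ) ≤ 16 * (K : ℝ) ^ A * ‖∑ t ∈ range T, eC (q * p.coeff 1 * t)‖ := by
    have n1 : ‖∑ t ∈ range T, eC (p.eval ((x + q * t : ℤ) : ℝ))‖ ≤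
        ‖∑ t ∈ range T, eC (q * p.coeff 1 * t)‖ + T * (7 * ((K : ℝ) ^ (b + 3 * D + 4) * T / N)) := by
      have e5 : ∑ t ∈ range T, eC (p.eval ((x + q * t : ℤ) : ℝ)) =
        eC (p.eval (x : ℝ)) * ∑ t ∈ range T, eC (q * p.coeff 1 * t) +
        ∑ t ∈ range T, (eC (p.eval ((x + q * t : ℤ) : ℝ)) - eC (p.eval (x : ℝ)) * eC (q * p.coeff 1 * t)) := by
        rw [mul_sum, ← sum_add_distrib]
        simp
      rw [e5]
      refine (norm_add_le _ _).trans ?_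
      rw [norm_mul, eC_norm, one_mul]
      gcongr
      refine (norm_sum_le _ _).trans ((sum_le_sum hph).trans ?_)
      simp
    have n2 : 16 * (K : ℝ) ^ A * (7 * ((K : ℝ) ^ (b + 3 * D + 4) * T / N)) ≤ 1 := by
      have : 16 * (K : ℝ) ^ A * (7 * ((K : ℝ) ^ (b + 3 * D + 4) * T)) ≤ N := by
        calc 16 * (K : ℝ) ^ A * (7 * ((K : ℝ) ^ (b + 3 * D + 4) * T)) ≤
            (K : ℝ) ^ 4 * (K : ℝ) ^ A * ((K : ℝ) ^ 3 * ((K : ℝ) ^ (b + 3 * D + 4) * T)) := by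
              gcongr
              linarith
          _ = T * (K : ℝ) ^ w := by rw [hw]; ring
          _ ≤ N := hTle
      rw [mul_div_assoc', mul_div_assoc', div_le_one (by linarith)]
      calc _ = 16 * (K : ℝ) ^ A * (7 * ((K : ℝ) ^ (b + 3 * D + 4) * T)) := by ring
        _ ≤ _ := by convert this using 1
    have n3 : 8 * (K : ℝ) ^ A * ‖∑ t ∈ range T, eC (p.eval ((x + q * t : ℤ) : ℝ))‖ ≤
      8 * (K : ℝ) ^ A * (‖∑ t ∈ range T, eC (q * p.coeff 1 * t)‖ + T * (7 * ((K : ℝ) ^ (b + 3 * D + 4) * T / N))) := by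
      gcongr
    have n4 : 16 * (K : ℝ) ^ A * (7 * ((K : ℝ) ^ (b + 3 * D + 4) * T / N)) * T ≤ 1 * T := by gcongr
    nlinarith
  have hg := geom_bound (q * p.coeff 1) T
  refine ⟨q, round ((q : ℝ) * p.coeff 1), hq1, hq2.trans (pow_le_pow_right₀ (by omega) (by omega)), ?_⟩
  push_cast
  set r := |(q : ℝ) * p.coeff 1 - round ((q : ℝ) * p.coeff 1)| with hr
  have hr0 : 0 ≤ r := abs_nonneg _
  have g1 : T * r ≤ 16 * (K : ℝ) ^ A := by
    calc T * r ≤ (16 * (K : ℝ) ^ A * ‖∑ t ∈ range T, eC (q * p.coeff 1 * t)‖) * r := by gcongr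
      _ = 16 * (K : ℝ) ^ A * (‖∑ t ∈ range T, eC (q * p.coeff 1 * t)‖ * r) := by ring
      _ ≤ 16 * (K : ℝ) ^ A * 1 := by gcongr
      _ = _ := by ring
  rw [mul_one_div, le_div_iff₀ (by linarith)]
  calc r * N ≤ r * (2 * T * (K : ℝ) ^ w) := by gcongr
    _ = 2 * (K : ℝ) ^ w * (T * r) := by ring
    _ ≤ 2 * (K : ℝ) ^ w * (16 * (K : ℝ) ^ A) := by gcongr
    _ ≤ K * (K : ℝ) ^ w * ((K : ℝ) ^ 4 * (K : ℝ) ^ A) := by gcongr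
    _ = _ := by ring

theorem two_mul_range (K N B : ℕ) (h : K ^ B ≤ N) : K ^ B ≤ 2 * N := by omega

theorem weyl (d : ℕ) : ∀ A : ℕ, ∃ B : ℕ, ∀ K : ℕ, 2 ≤ K → ∀ N : ℕ, K ^ B ≤ N →
    ∀ p : ℝ[X], p.natDegree ≤ d → ∀ u v : ℤ, -(N : ℤ) ≤ u → v ≤ N →
    (N : ℝ) ≤ (K : ℝ) ^ A * ‖∑ x ∈ Icc u v, eC (p.eval (x : ℝ))‖ →
    ∀ j, 1 ≤ j → Maj K B (1 / (N : ℝ) ^ j) (p.coeff j) := by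
  induction d with
  | zero =>
    intro A
    refine ⟨0, fun K hK N hN p hp u v hu hv hS j hj => ?_⟩
    rw [coeff_eq_zero_of_natDegree_lt (by omega)]
    exact Maj.zero hK (by positivity)
  | succ d ih =>
    intro A
    obtain ⟨B1, hB1⟩ := ih (2 * A + 4)
    obtain ⟨B2, hB2⟩ := recur d (B1 + 2 * A + 4)
    obtain ⟨B3, hB3⟩ := weyl_lin d (B2 + 2 * B1 + d + 2) A
    refine ⟨B1 + B2 + 2 * B1 + d + 2 + B3, fun K hK N hN p hp u v hu hv hS => ?_⟩
    have hKr : (2 : ℝ) ≤ K := by exact_mod_cast hK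
    have hK0 : (0 : ℝ) < K := by linarith
    have hN' : ∀ b, b ≤ B1 + B2 + 2 * B1 + d + 2 + B3 → K ^ b ≤ N := fun b hb =>
      le_trans (Nat.pow_le_pow_right (by omega) hb) hN
    have hN1 : 1 ≤ N := le_trans (Nat.one_le_pow _ _ (by omega)) hN
    have hNr : (1 : ℝ) ≤ N := by exact_mod_cast hN1
    obtain ⟨S, hS1, hS2, hS3⟩ := vdc A K N hK hN1 p u v hu hv hS
    have hMh : ∀ h ∈ S, Maj K B1 (1 / (N : ℝ)) ((hasseDeriv 1 p - C (p.coeff 1)).eval (h : ℝ)) := by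
      intro h hh
      obtain ⟨u', v', hu', hv', hs⟩ := hS3 h hh
      have := hB1 K hK N (hN' _ (by omega)) _ (diff_natDegree d p hp h) u' v' hu' hv' hs 1 le_rfl
      rw [coeff_sub, taylor_coeff] at this
      simpa using this
    obtain ⟨q, hq1, hq2, S', hS'S, hS'c, hS'⟩ := Maj.pigeon hK S
      (fun h : ℤ => (hasseDeriv 1 p - C (p.coeff 1)).eval (h : ℝ)) hMh
    have hq2' : (q : ℝ) ≤ (K : ℝ) ^ B1 := by exact_mod_cast hq2
    have hq1' : (1 : ℝ) ≤ q := by exact_mod_cast hq1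
    set P : ℝ[X] := C (q : ℝ) * (hasseDeriv 1 p - C (p.coeff 1)) with hP
    have hPdeg : P.natDegree ≤ d := by
      refine (natDegree_C_mul_le _ _).trans ?_
      rw [natDegree_sub_C]
      have := natDegree_hasseDeriv_le p 1
      omega
    have hrec := hB2 K hK (2 * N) (two_mul_range _ _ _ (hN' _ (by omega))) P hPdeg S' (hS'S.trans hS1)
      (by
        calc 2 * N ≤ K * (K ^ (2 * A + 3) * (K ^ B1 * S'.card)) := by
              gcongr
              exact hS2.trans (by gcongr)
          _ = _ := by ring)
      ((K : ℝ) ^ B1 * (1 / N)) (by positivity)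
      (by
        push_cast
        have : (K : ℝ) ^ B1 * (1 / N) * (2 * N) = (K : ℝ) ^ B1 * 2 := by field_simp
        rw [this]
        calc (K : ℝ) ^ B1 * 2 ≤ (K : ℝ) ^ B1 * K := by gcongr
          _ = (K : ℝ) ^ (B1 + 1) := by ring
          _ ≤ _ := pow_le_pow_right₀ (by linarith) (by omega))
      (by
        intro x hx
        obtain ⟨a, ha⟩ := hS' x hx
        refine ⟨a, ?_⟩
        rw [hP, eval_mul, eval_C]
        exact ha)
    have hhigh : ∀ i ∈ range d, Maj K (B2 + 2 * B1 + d + 2) (1 / (N : ℝ) ^ (i + 2)) (p.coeff (i + 2)) := by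
      intro i hi
      have hi' := mem_range.1 hi
      have h1 := hrec (i + 1)
      have e1 : P.coeff (i + 1) = ((q * (i + 2) : ℤ) : ℝ) * p.coeff (i + 2) := by
        rw [hP, coeff_C_mul, coeff_sub, coeff_C_succ, hasseDeriv_coeff]
        simp
        ring
      rw [e1] at h1
      have h2 : Maj K (B2 + B1) (1 / (N : ℝ) ^ (i + 2)) (((q * (i + 2) : ℤ) : ℝ) * p.coeff (i + 2)) := by
        refine h1.eta hK ?_
        have : ((2 * N : ℕ) : ℝ) ^ (i + 1) ≥ (N : ℝ) ^ (i + 1) := by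
          push_cast
          gcongr
          linarith
        calc _ ≤ (K : ℝ) ^ B1 * (1 / N) / (N : ℝ) ^ (i + 1) := by gcongr
          _ = _ := by field_simp; ring
      have h3 := Maj.of_mul_int (C := B1 + d + 2) hK (by positivity) (q * (i + 2)) (by positivity) (by
        push_cast
        rw [abs_of_nonneg (by positivity)]
        have : ((i : ℝ) + 2) ≤ (K : ℝ) ^ (d + 2) := by
          have h4 : ((i + 2 : ℕ) : ℝ) ≤ 2 ^ (i + 2) := by exact_mod_cast (Nat.lt_two_pow_self).le
          calc ((i : ℝ) + 2) ≤ 2 ^ (i + 2) := by exact_mod_cast h4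
            _ ≤ 2 ^ (d + 2) := pow_le_pow_right₀ (by norm_num) (by omega)
            _ ≤ _ := by gcongr
        calc (q : ℝ) * (i + 2) ≤ (K : ℝ) ^ B1 * (K : ℝ) ^ (d + 2) := by gcongr
          _ = _ := by ring) h2
      exact h3.mono hK (by omega) (by positivity)
    have hlin := hB3 K hK N (hN' _ (by omega)) p hp hhigh u v hu hv hS
    intro j hj
    by_cases hj1 : j = 1
    · subst hj1
      rw [pow_one]
      exact hlin.mono hK (by omega) (by positivity)
    by_cases hjd : j ≤ d + 1
    · obtain ⟨i, rfl⟩ : ∃ i, j = i + 2 := ⟨j - 2, by omega⟩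
      exact (hhigh i (mem_range.2 (by omega))).mono hK (by omega) (by positivity)
    · rw [coeff_eq_zero_of_natDegree_lt (by omega)]
      exact Maj.zero hK (by positivity)


theorem cs_bilinear {ι κ : Type*} (s : Finset ι) (t : Finset κ) (a : ι → ℂ) (b : κ → ℂ)
    (z : ι → κ → ℂ) :
    ‖∑ m ∈ s, ∑ n ∈ t, a m * b n * z m n‖ ^ 2 ≤ (∑ m ∈ s, ‖a m‖ ^ 2) *
      ∑ n ∈ t, ‖b n‖ ^ 2 * ∑ n' ∈ t, ‖∑ m ∈ s, (starRingEnd ℂ) (z m n) * z m n'‖ := by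
  set W : κ → κ → ℂ := fun n n' => ∑ m ∈ s, (starRingEnd ℂ) (z m n) * z m n' with hW
  have hsymm : ∀ n n', ‖W n n'‖ = ‖W n' n‖ := by
    intro n n'
    rw [← Complex.norm_conj]
    congr 1
    rw [hW]
    simp only [map_sum, map_mul, Complex.conj_conj]
    exact sum_congr rfl fun m _ => mul_comm _ _
  have h1 : ‖∑ m ∈ s, ∑ n ∈ t, a m * b n * z m n‖ ≤ ∑ m ∈ s, ‖a m‖ * ‖∑ n ∈ t, b n * z m n‖ := by
    refine (norm_sum_le _ _).trans (le_of_eq ?_)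
    refine sum_congr rfl fun m _ => ?_
    rw [← norm_mul, mul_sum]
    simp only [mul_assoc]
  have h2 : ‖∑ m ∈ s, ∑ n ∈ t, a m * b n * z m n‖ ^ 2 ≤
      (∑ m ∈ s, ‖a m‖ ^ 2) * ∑ m ∈ s, ‖∑ n ∈ t, b n * z m n‖ ^ 2 :=
    le_trans (by gcongr) (sum_mul_sq_le_sq_mul_sq s _ _)
  refine h2.trans ?_
  refine mul_le_mul_of_nonneg_left ?_ (by positivity)
  have h3 : ((∑ m ∈ s, ‖∑ n ∈ t, b n * z m n‖ ^ 2 : ℝ) : ℂ) =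
      ∑ n ∈ t, ∑ n' ∈ t, (starRingEnd ℂ) (b n) * b n' * W n n' := by
    push_cast
    have : ∀ m ∈ s, ((‖∑ n ∈ t, b n * z m n‖ : ℂ)) ^ 2 = ∑ n ∈ t, ∑ n' ∈ t,
        (starRingEnd ℂ) (b n) * b n' * ((starRingEnd ℂ) (z m n) * z m n') := by
      intro m _
      rw [← Complex.conj_mul', map_sum, sum_mul_sum]
      refine sum_congr rfl fun x _ => sum_congr rfl fun y _ => ?_
      rw [map_mul]
      ring
    rw [sum_congr rfl this, sum_comm]
    refine sum_congr rfl fun x _ => ?_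
    rw [sum_comm]
    refine sum_congr rfl fun y _ => ?_
    rw [hW, mul_sum]
  have h4 : ∑ m ∈ s, ‖∑ n ∈ t, b n * z m n‖ ^ 2 ≤ ∑ n ∈ t, ∑ n' ∈ t, ‖b n‖ * ‖b n'‖ * ‖W n n'‖ := by
    have e : ∑ m ∈ s, ‖∑ n ∈ t, b n * z m n‖ ^ 2 = ‖((∑ m ∈ s, ‖∑ n ∈ t, b n * z m n‖ ^ 2 : ℝ) : ℂ)‖ := by
      rw [Complex.norm_real, Real.norm_eq_abs, abs_of_nonneg (by positivity)]
    rw [e, h3]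
    refine (norm_sum_le _ _).trans (sum_le_sum fun n _ => (norm_sum_le _ _).trans (sum_le_sum fun n' _ => ?_))
    rw [norm_mul, norm_mul, Complex.norm_conj]
  refine h4.trans ?_
  have h5 : ∑ n ∈ t, ∑ n' ∈ t, ‖b n‖ * ‖b n'‖ * ‖W n n'‖ ≤
      ∑ n ∈ t, ∑ n' ∈ t, (‖b n‖ ^ 2 / 2 * ‖W n n'‖ + ‖b n'‖ ^ 2 / 2 * ‖W n n'‖) := by
    refine sum_le_sum fun n _ => sum_le_sum fun n' _ => ?_
    rw [← add_mul]
    gcongr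
    nlinarith [sq_nonneg (‖b n‖ - ‖b n'‖)]
  refine h5.trans (le_of_eq ?_)
  simp only [sum_add_distrib]
  have h6 : ∑ n ∈ t, ∑ n' ∈ t, ‖b n'‖ ^ 2 / 2 * ‖W n n'‖ = ∑ n ∈ t, ∑ n' ∈ t, ‖b n‖ ^ 2 / 2 * ‖W n n'‖ := by
    rw [sum_comm]
    refine sum_congr rfl fun n _ => sum_congr rfl fun n' _ => ?_
    rw [hsymm]
  rw [h6, ← sum_add_distrib]
  refine sum_congr rfl fun n _ => ?_
  rw [mul_sum, ← sum_add_distrib]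
  refine sum_congr rfl fun n' _ => ?_
  ring

theorem finset_ordConnected (s : Finset ℤ) (hs : (s : Set ℤ).OrdConnected) (N : ℕ)
    (hN : s ⊆ Icc (-(N : ℤ)) N) : ∃ u v : ℤ, -(N : ℤ) ≤ u ∧ v ≤ N ∧ s = Icc u v := by
  rcases s.eq_empty_or_nonempty with rfl | hne
  · exact ⟨1, 0, by omega, by omega, by simp⟩
  · refine ⟨s.min' hne, s.max' hne, (mem_Icc.1 (hN (s.min'_mem hne))).1,
      (mem_Icc.1 (hN (s.max'_mem hne))).2, ?_⟩
    ext x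
    rw [mem_Icc]
    constructor
    · exact fun hx => ⟨s.min'_le x hx, s.le_max' x hx⟩
    · intro hx
      exact hs.out (s.min'_mem hne) (s.max'_mem hne) hx

theorem weyl_set (d : ℕ) : ∀ A : ℕ, ∃ B : ℕ, ∀ K : ℕ, 2 ≤ K → ∀ N : ℕ, K ^ B ≤ N →
    ∀ p : ℝ[X], p.natDegree ≤ d → ∀ s : Finset ℤ, (s : Set ℤ).OrdConnected → s ⊆ Icc (-(N : ℤ)) N →
    (N : ℝ) ≤ (K : ℝ) ^ A * ‖∑ x ∈ s, eC (p.eval (x : ℝ))‖ →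
    ∀ j, 1 ≤ j → Maj K B (1 / (N : ℝ) ^ j) (p.coeff j) := by
  intro A
  obtain ⟨B, hB⟩ := weyl d A
  refine ⟨B, fun K hK N hN p hp s hs hsN h => ?_⟩
  obtain ⟨u, v, hu, hv, rfl⟩ := finset_ordConnected s hs N hsN
  exact hB K hK N hN p hp u v hu hv h

/-- version with natural number sets -/
theorem weyl_nat (d : ℕ) : ∀ A : ℕ, ∃ B : ℕ, ∀ K : ℕ, 2 ≤ K → ∀ N : ℕ, K ^ B ≤ N →
    ∀ p : ℝ[X], p.natDegree ≤ d → ∀ s : Finset ℕ, (s : Set ℕ).OrdConnected → (∀ x ∈ s, x ≤ N) →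
    (N : ℝ) ≤ (K : ℝ) ^ A * ‖∑ x ∈ s, eC (p.eval (x : ℝ))‖ →
    ∀ j, 1 ≤ j → Maj K B (1 / (N : ℝ) ^ j) (p.coeff j) := by
  intro A
  obtain ⟨B, hB⟩ := weyl_set d A
  refine ⟨B, fun K hK N hN p hp s hs hsN h => ?_⟩
  refine hB K hK N hN p hp (s.map Nat.castEmbedding) ?_ ?_ ?_
  · constructor
    intro x hx y hy z hz
    simp only [coe_map, Set.mem_image, mem_coe, Nat.castEmbedding_apply] at hx hy ⊢
    obtain ⟨x, hx, rfl⟩ := hx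
    obtain ⟨y, hy, rfl⟩ := hy
    obtain ⟨hz1, hz2⟩ := hz
    lift z to ℕ using by omega
    exact ⟨z, hs.out hx hy ⟨by exact_mod_cast hz1, by exact_mod_cast hz2⟩, rfl⟩
  · intro x hx
    simp only [mem_map, Nat.castEmbedding_apply] at hx
    obtain ⟨x, hx, rfl⟩ := hx
    have := hsN x hx
    rw [mem_Icc]
    omega
  · rw [sum_map]
    simpa using h

theorem typeII (d : ℕ) : ∀ A : ℕ, ∃ B : ℕ, ∀ K : ℕ, 2 ≤ K → ∀ M R : ℕ, K ^ B ≤ R → R ≤ M →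
    ∀ p : ℝ[X], p.natDegree ≤ d → ∀ a b : ℕ → ℂ,
    ∑ m ∈ range (2 * M), ‖a m‖ ^ 2 ≤ (K : ℝ) ^ A * M →
    ∑ n ∈ range (2 * R), ‖b n‖ ^ 2 ≤ (K : ℝ) ^ A * R →
    ∀ u v : ℕ, (M : ℝ) * R ≤ (K : ℝ) ^ A * ‖∑ m ∈ range (2 * M), ∑ n ∈ range (2 * R),
      a m * b n * (if u ≤ m * n ∧ m * n ≤ v then eC (p.eval ((m * n : ℕ) : ℝ)) else 0)‖ →
    ∀ j, 1 ≤ j → Maj K B (1 / ((M : ℝ) * R) ^ j) (p.coeff j) := by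
  intro A
  obtain ⟨B1, hB1⟩ := weyl_nat d (4 * A + 3)
  obtain ⟨B2, hB2⟩ := recur d (B1 + 4 * A + 3)
  refine ⟨B1 + B2 + B1 + B1, fun K hK M R hR hRM p hp a b ha hb u v h j hj => ?_⟩
  have hKr : (2 : ℝ) ≤ K := by exact_mod_cast hK
  have hK0 : (0 : ℝ) < K := by linarith
  have hR' : ∀ b, b ≤ B1 + B2 + B1 + B1 → K ^ b ≤ R := fun b hb =>
    le_trans (Nat.pow_le_pow_right (by omega) hb) hR
  have hR1 : 1 ≤ R := le_trans (Nat.one_le_pow _ _ (by omega)) hR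
  have hRr : (1 : ℝ) ≤ R := by exact_mod_cast hR1
  have hMr : (R : ℝ) ≤ M := by exact_mod_cast hRM
  by_cases hjd : d < j
  · rw [coeff_eq_zero_of_natDegree_lt (by omega)]
    exact Maj.zero hK (by positivity)
  push Not at hjd
  set z : ℕ → ℕ → ℂ := fun m n => if u ≤ m * n ∧ m * n ≤ v then eC (p.eval ((m * n : ℕ) : ℝ)) else 0
    with hz
  set W : ℕ → ℕ → ℂ := fun n n' => ∑ m ∈ range (2 * M), (starRingEnd ℂ) (z m n) * z m n' with hW
  have hcs := cs_bilinear (range (2 * M)) (range (2 * R)) a b z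
  have hex : ∃ n' ∈ range (2 * R), (M : ℝ) * R ≤ (K : ℝ) ^ (4 * A) * ∑ n ∈ range (2 * R), ‖W n' n‖ := by
    by_contra! hcon
    have c1 : ∑ n ∈ range (2 * R), ‖b n‖ ^ 2 * ((K : ℝ) ^ (4 * A) * ∑ n' ∈ range (2 * R), ‖W n n'‖) ≤
        ∑ n ∈ range (2 * R), ‖b n‖ ^ 2 * (M * R) := by
      refine sum_le_sum fun n hn => ?_
      have := (hcon n hn).le
      gcongr
    have hpos : 0 < ∑ n ∈ range (2 * R), ‖b n‖ ^ 2 * ∑ n' ∈ range (2 * R), ‖W n n'‖ := by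
      have : 0 < (M : ℝ) * R := by nlinarith
      have h0 : 0 < ‖∑ m ∈ range (2 * M), ∑ n ∈ range (2 * R), a m * b n * z m n‖ := by
        by_contra h0
        have : ‖∑ m ∈ range (2 * M), ∑ n ∈ range (2 * R), a m * b n * z m n‖ = 0 :=
          le_antisymm (not_lt.1 h0) (norm_nonneg _)
        rw [this] at h
        linarith
      have h1 : 0 < ‖∑ m ∈ range (2 * M), ∑ n ∈ range (2 * R), a m * b n * z m n‖ ^ 2 := by positivity
      have := lt_of_lt_of_le h1 hcs
      exact pos_of_mul_pos_right this (by positivity)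
    have hex2 : ∃ n ∈ range (2 * R), ‖b n‖ ^ 2 ≠ 0 := by
      by_contra! h0
      rw [sum_eq_zero (fun n hn => by rw [h0 n hn, zero_mul])] at hpos
      exact lt_irrefl _ hpos
    have c1' : ∑ n ∈ range (2 * R), ‖b n‖ ^ 2 * ((K : ℝ) ^ (4 * A) * ∑ n' ∈ range (2 * R), ‖W n n'‖) <
        ∑ n ∈ range (2 * R), ‖b n‖ ^ 2 * (M * R) := by
      refine sum_lt_sum (fun n hn => ?_) ?_
      · have := (hcon n hn).le
        gcongr
      · obtain ⟨n, hn, hn0⟩ := hex2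
        refine ⟨n, hn, ?_⟩
        have := hcon n hn
        have : 0 < ‖b n‖ ^ 2 := lt_of_le_of_ne (by positivity) (Ne.symm hn0)
        gcongr
    set Y := ∑ n ∈ range (2 * R), ‖b n‖ ^ 2 * ∑ n' ∈ range (2 * R), ‖W n n'‖ with hY
    have c2 : (K : ℝ) ^ (4 * A) * Y < (K : ℝ) ^ A * R * (M * R) := by
      rw [hY, mul_sum]
      calc _ = ∑ n ∈ range (2 * R), ‖b n‖ ^ 2 * ((K : ℝ) ^ (4 * A) * ∑ n' ∈ range (2 * R), ‖W n n'‖) :=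
            sum_congr rfl fun n _ => by ring
        _ < _ := c1'
        _ = (∑ n ∈ range (2 * R), ‖b n‖ ^ 2) * (M * R) := by rw [sum_mul]
        _ ≤ _ := by gcongr
    have c3 : ((M : ℝ) * R) ^ 2 ≤ (K : ℝ) ^ (2 * A) * ((K : ℝ) ^ A * M * Y) := by
      calc ((M : ℝ) * R) ^ 2 ≤ ((K : ℝ) ^ A * ‖∑ m ∈ range (2 * M), ∑ n ∈ range (2 * R), a m * b n * z m n‖) ^ 2 := by
            gcongr
        _ = (K : ℝ) ^ (2 * A) * ‖∑ m ∈ range (2 * M), ∑ n ∈ range (2 * R), a m * b n * z m n‖ ^ 2 := by ring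
        _ ≤ (K : ℝ) ^ (2 * A) * ((∑ m ∈ range (2 * M), ‖a m‖ ^ 2) * Y) := by gcongr
        _ ≤ _ := by gcongr
    have c4 : (K : ℝ) ^ A * ((M : ℝ) * R) ^ 2 < (K : ℝ) ^ A * ((M : ℝ) * R) ^ 2 := by
      calc (K : ℝ) ^ A * ((M : ℝ) * R) ^ 2 ≤ (K : ℝ) ^ A * ((K : ℝ) ^ (2 * A) * ((K : ℝ) ^ A * M * Y)) := by gcongr
        _ = M * ((K : ℝ) ^ (4 * A) * Y) := by ring
        _ < M * ((K : ℝ) ^ A * R * (M * R)) := by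
            have : (0 : ℝ) < M := by linarith
            gcongr
        _ = _ := by ring
    exact lt_irrefl _ c4
  obtain ⟨n', hn', hsum⟩ := hex
  have hWle : ∀ n, ‖W n' n‖ ≤ (K : ℝ) ^ 1 * M := by
    intro n
    refine (norm_sum_le _ _).trans ?_
    have hz1 : ∀ m n, ‖z m n‖ ≤ 1 := by
      intro m n
      simp only [hz]
      split_ifs
      · rw [eC_norm]
      · simp
    calc _ ≤ ∑ m ∈ range (2 * M), (1 : ℝ) := by
          refine sum_le_sum fun m _ => ?_
          rw [norm_mul, Complex.norm_conj]
          exact mul_le_one₀ (hz1 _ _) (norm_nonneg _) (hz1 _ _)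
      _ = 2 * M := by simp
      _ ≤ _ := by rw [pow_one]; gcongr
  have hmany := many (range (2 * R)) (fun n => ‖W n' n‖) K (4 * A) 1 1 hK R M (by linarith) (by linarith)
    (by
      rw [card_range, pow_one]
      push_cast
      gcongr) (fun n _ => hWle n) (by rw [mul_comm]; exact hsum)
  set S := (range (2 * R)).filter fun n => (M : ℝ) ≤ (K : ℝ) ^ (4 * A + 1 + 1) * ‖W n' n‖ with hS
  have hMaj : ∀ n ∈ S, Maj K B1 (1 / ((2 * M : ℕ) : ℝ) ^ j) (((n : ℝ) ^ j - (n' : ℝ) ^ j) * p.coeff j) := by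
    intro n hn
    rw [hS, mem_filter] at hn
    have hdeg : (p.comp (C (n : ℝ) * X) - p.comp (C (n' : ℝ) * X)).natDegree ≤ d := by
      have hc : ∀ r : ℝ, (p.comp (C r * X)).natDegree ≤ d := by
        intro r
        refine natDegree_comp_le.trans ?_
        have : (C r * X : ℝ[X]).natDegree ≤ 1 := (natDegree_C_mul_le _ _).trans natDegree_X_le
        nlinarith
      exact (natDegree_sub_le _ _).trans (max_le (hc _) (hc _))
    have hw := hB1 K hK (2 * M) (by have := hR' B1 (by omega); omega)
      (p.comp (C (n : ℝ) * X) - p.comp (C (n' : ℝ) * X)) hdeg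
      ((range (2 * M)).filter fun m => (u ≤ m * n' ∧ m * n' ≤ v) ∧ (u ≤ m * n ∧ m * n ≤ v))
      (by
        constructor
        intro x hx y hy w hw
        simp only [coe_filter, Set.mem_setOf_eq, mem_range] at hx hy ⊢
        obtain ⟨hw1, hw2⟩ := hw
        have k1 := Nat.mul_le_mul_right n hw1
        have k2 := Nat.mul_le_mul_right n hw2
        have k3 := Nat.mul_le_mul_right n' hw1
        have k4 := Nat.mul_le_mul_right n' hw2
        omega)
      (by
        intro x hx
        rw [mem_filter, mem_range] at hx
        omega)
      (by
        have e1 : ‖∑ x ∈ (range (2 * M)).filter (fun m => (u ≤ m * n' ∧ m * n' ≤ v) ∧ (u ≤ m * n ∧ m * n ≤ v)),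
            eC ((p.comp (C (n : ℝ) * X) - p.comp (C (n' : ℝ) * X)).eval (x : ℝ))‖ = ‖W n' n‖ := by
          congr 1
          rw [hW, sum_filter]
          refine sum_congr rfl fun m _ => ?_
          simp only [hz]
          by_cases c1 : u ≤ m * n' ∧ m * n' ≤ v
          · by_cases c2 : u ≤ m * n ∧ m * n ≤ v
            · rw [if_pos ⟨c1, c2⟩, if_pos c1, if_pos c2, eC_conj, ← eC_add]
              congr 1
              simp
              ring_nf
            · rw [if_neg (by tauto), if_neg c2, mul_zero]
          · rw [if_neg (by tauto), if_neg c1, map_zero, zero_mul]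
        rw [e1]
        push_cast
        calc (2 : ℝ) * M ≤ K * ((K : ℝ) ^ (4 * A + 1 + 1) * ‖W n' n‖) := by
              gcongr
              exact hn.2
          _ = _ := by ring) j hj
    rw [coeff_sub, comp_C_mul_X_coeff, comp_C_mul_X_coeff] at hw
    convert hw using 1
    ring
  obtain ⟨q, hq1, hq2, S', hS'S, hS'c, hS'⟩ := Maj.pigeon hK S
    (fun n : ℕ => ((n : ℝ) ^ j - (n' : ℝ) ^ j) * p.coeff j) hMaj
  have hq2' : (q : ℝ) ≤ (K : ℝ) ^ B1 := by exact_mod_cast hq2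
  have hq1' : (1 : ℝ) ≤ q := by exact_mod_cast hq1
  set P : ℝ[X] := C ((q : ℝ) * p.coeff j) * (X ^ j - C ((n' : ℝ) ^ j)) with hP
  have hPdeg : P.natDegree ≤ d := by
    refine (natDegree_C_mul_le _ _).trans ?_
    rw [natDegree_sub_C, natDegree_X_pow]
    exact hjd
  have hmany' : R ≤ K ^ (4 * A + 1 + 1) * S.card := by exact_mod_cast hmany
  have hrec := hB2 K hK (2 * R) (by have := hR' B2 (by omega); omega) P hPdeg (S'.map Nat.castEmbedding)
    (by
      intro x hx
      simp only [mem_map, Nat.castEmbedding_apply] at hx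
      obtain ⟨x, hx, rfl⟩ := hx
      have := hS'S hx
      rw [hS, mem_filter, mem_range] at this
      rw [mem_Icc]
      omega)
    (by
      rw [card_map]
      calc 2 * R ≤ K * (K ^ (4 * A + 1 + 1) * (K ^ B1 * S'.card)) := by
            gcongr
            exact hmany'.trans (by gcongr)
        _ = _ := by ring)
    ((K : ℝ) ^ B1 * (1 / ((2 * M : ℕ) : ℝ) ^ j)) (by positivity)
    (by
      have h2M : (1 : ℝ) ≤ ((2 * M : ℕ) : ℝ) := by push_cast; linarith
      have h2 : ((2 * M : ℕ) : ℝ) ≤ ((2 * M : ℕ) : ℝ) ^ j := le_self_pow₀ h2M (by omega)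
      have h3 : ((2 * R : ℕ) : ℝ) ≤ ((2 * M : ℕ) : ℝ) := by push_cast; linarith
      calc (K : ℝ) ^ B1 * (1 / ((2 * M : ℕ) : ℝ) ^ j) * ((2 * R : ℕ) : ℝ) =
          (K : ℝ) ^ B1 * (((2 * R : ℕ) : ℝ) / ((2 * M : ℕ) : ℝ) ^ j) := by ring
        _ ≤ (K : ℝ) ^ B1 * 1 := by
            gcongr
            rw [div_le_one (by positivity)]
            linarith
        _ ≤ _ := by
            rw [mul_one]
            exact pow_le_pow_right₀ (by linarith) (by omega))
    (by
      intro x hx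
      simp only [mem_map, Nat.castEmbedding_apply] at hx
      obtain ⟨x, hx, rfl⟩ := hx
      obtain ⟨c, hc⟩ := hS' x hx
      refine ⟨c, ?_⟩
      refine le_trans (le_of_eq ?_) hc
      congr 1
      rw [hP]
      simp
      ring) j
  have e1 : P.coeff j = (q : ℝ) * p.coeff j := by
    rw [hP, coeff_C_mul, coeff_sub, coeff_X_pow, coeff_C, if_pos rfl, if_neg (by omega)]
    ring
  rw [e1] at hrec
  have h2 : Maj K (B2 + B1) (1 / ((M : ℝ) * R) ^ j) ((q : ℝ) * p.coeff j) := by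
    refine hrec.eta hK ?_
    have : ((2 * M : ℕ) : ℝ) ^ j * ((2 * R : ℕ) : ℝ) ^ j ≥ ((M : ℝ) * R) ^ j := by
      rw [← mul_pow]
      push_cast
      gcongr <;> linarith
    have hMR : 0 < (M : ℝ) * R := by nlinarith
    calc _ = (K : ℝ) ^ B1 * (1 / (((2 * M : ℕ) : ℝ) ^ j * ((2 * R : ℕ) : ℝ) ^ j)) := by
          field_simp
      _ ≤ _ := by gcongr
  exact (Maj.of_mul_int (C := B1) hK (by positivity) q (by omega) (by
    rw [abs_of_nonneg (by linarith)]; exact hq2') h2).mono hK (by omega) (by positivity)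


/-- truncation below -/
noncomputable def afLow (U : ℕ) (f : ArithmeticFunction ℝ) : ArithmeticFunction ℝ :=
  ⟨fun n => if n ≤ U then f n else 0, by simp⟩

/-- truncation above -/
noncomputable def afHigh (U : ℕ) (f : ArithmeticFunction ℝ) : ArithmeticFunction ℝ :=
  ⟨fun n => if n ≤ U then 0 else f n, by simp⟩

theorem afLow_apply (U : ℕ) (f : ArithmeticFunction ℝ) (n : ℕ) :
    afLow U f n = if n ≤ U then f n else 0 := rfl

theorem afHigh_apply (U : ℕ) (f : ArithmeticFunction ℝ) (n : ℕ) :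
    afHigh U f n = if n ≤ U then 0 else f n := rfl

theorem afLow_add_afHigh (U : ℕ) (f : ArithmeticFunction ℝ) : afLow U f + afHigh U f = f := by
  ext n
  rw [ArithmeticFunction.add_apply, afLow_apply, afHigh_apply]
  split_ifs <;> simp

/-- real Moebius function -/
noncomputable def muR : ArithmeticFunction ℝ := (ArithmeticFunction.moebius : ArithmeticFunction ℝ)

/-- real zeta function -/
noncomputable def zetaR : ArithmeticFunction ℝ := (ArithmeticFunction.zeta : ArithmeticFunction ℝ)

theorem vaughan (U : ℕ) : ArithmeticFunction.vonMangoldt =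
    afLow U ArithmeticFunction.vonMangoldt + afLow U muR * ArithmeticFunction.log
    - (afLow U muR * afLow U ArithmeticFunction.vonMangoldt) * zetaR
    + (afHigh U ArithmeticFunction.vonMangoldt * zetaR) * afHigh U muR := by
  have h1 : muR * zetaR = 1 := ArithmeticFunction.coe_moebius_mul_coe_zeta
  have h2 : ArithmeticFunction.vonMangoldt * zetaR = ArithmeticFunction.log :=
    ArithmeticFunction.vonMangoldt_mul_zeta
  set L1 := afLow U ArithmeticFunction.vonMangoldt with hL1
  set L2 := afHigh U ArithmeticFunction.vonMangoldt with hL2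
  set m1 := afLow U muR with hm1
  set m2 := afHigh U muR with hm2
  have h3 : L1 + L2 = ArithmeticFunction.vonMangoldt := afLow_add_afHigh _ _
  have h4 : m1 + m2 = muR := afLow_add_afHigh _ _
  rw [← h3] at h2 ⊢
  rw [← h4] at h1
  rw [← h2]
  linear_combination (-L2) * h1

theorem conv_sum (f g : ArithmeticFunction ℝ) (N : ℕ) (z : ℕ → ℂ) (hz : ∀ n, N < n → z n = 0) :
    ∑ n ∈ range (N + 1), ((f * g) n : ℂ) * z n =
      ∑ a ∈ range (N + 1), ∑ b ∈ range (N + 1), (f a : ℂ) * (g b : ℂ) * z (a * b) := by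
  have h1 : ∀ n ∈ range (N + 1), ((f * g) n : ℂ) * z n =
      ∑ a ∈ range (N + 1), ∑ b ∈ range (N + 1),
        if n = a * b then (f a : ℂ) * (g b : ℂ) * z (a * b) else 0 := by
    intro n hn
    rw [mem_range] at hn
    rcases Nat.eq_zero_or_pos n with rfl | hpos
    · rw [ArithmeticFunction.map_zero]
      symm
      simp only [Complex.ofReal_zero, zero_mul]
      refine sum_eq_zero fun a _ => sum_eq_zero fun b _ => ?_
      split_ifs with h
      · rcases Nat.mul_eq_zero.1 h.symm with rfl | rfl <;> simp
      · rfl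
    · rw [ArithmeticFunction.mul_apply, ← sum_product', ← sum_filter]
      push_cast
      rw [sum_mul]
      have : n.divisorsAntidiagonal = ((range (N + 1)) ×ˢ (range (N + 1))).filter
          (fun x => n = x.1 * x.2) := by
        ext ⟨a, b⟩
        simp only [Nat.mem_divisorsAntidiagonal, mem_filter, mem_product, mem_range]
        constructor
        · rintro ⟨rfl, h⟩
          have ha : 0 < a := Nat.pos_of_ne_zero (by rintro rfl; simp at h)
          have hb : 0 < b := Nat.pos_of_ne_zero (by rintro rfl; simp at h)
          refine ⟨⟨?_, ?_⟩, rfl⟩ <;> nlinarith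
        · rintro ⟨_, rfl⟩
          exact ⟨rfl, by omega⟩
      rw [this]
      refine sum_congr rfl fun x hx => ?_
      rw [(mem_filter.1 hx).2]
  rw [sum_congr rfl h1, sum_comm]
  refine sum_congr rfl fun a _ => ?_
  rw [sum_comm]
  refine sum_congr rfl fun b _ => ?_
  by_cases hab : a * b < N + 1
  · rw [sum_ite_eq', if_pos (mem_range.2 hab)]
  · rw [hz _ (by omega), mul_zero]
    simp

theorem log_weight (N : ℕ) (f : ℕ → ℂ) (Y : ℝ)
    (hf : ∀ k ≤ N, ‖∑ l ∈ (range (N + 1)).filter (fun l => k < l), f l‖ ≤ Y) :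
    ‖∑ l ∈ range (N + 1), (Real.log l : ℂ) * f l‖ ≤ Real.log N * Y := by
  have tele : ∀ l : ℕ, 1 ≤ l → Real.log l = ∑ k ∈ Ico 1 l, (Real.log ((k + 1 : ℕ) : ℝ) - Real.log (k : ℝ)) := by
    intro l hl
    induction l, hl using Nat.le_induction with
    | base => simp
    | succ n hn ih =>
      rw [sum_Ico_succ_top hn, ← ih]
      ring
  set c : ℕ → ℝ := fun k => Real.log ((k + 1 : ℕ) : ℝ) - Real.log (k : ℝ) with hc
  have hc0 : ∀ k, 1 ≤ k → 0 ≤ c k := by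
    intro k hk
    simp only [hc]
    rw [sub_nonneg]
    apply Real.log_le_log
    · exact_mod_cast hk
    · push_cast; linarith
  rcases Nat.eq_zero_or_pos N with rfl | hN
  · simp
  have h1 : ∑ l ∈ range (N + 1), (Real.log l : ℂ) * f l =
      ∑ k ∈ Ico 1 N, (c k : ℂ) * ∑ l ∈ (range (N + 1)).filter (fun l => k < l), f l := by
    have e : ∀ l ∈ range (N + 1), (Real.log l : ℂ) * f l =
        ∑ k ∈ Ico 1 N, (if k < l then (c k : ℂ) * f l else 0) := by
      intro l hl
      rw [mem_range] at hl
      rcases Nat.eq_zero_or_pos l with rfl | hpos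
      · simp
      · rw [tele l hpos]
        push_cast
        rw [sum_mul, ← sum_filter]
        have : (Ico 1 N).filter (fun k => k < l) = Ico 1 l := by
          ext k; simp only [mem_filter, mem_Ico]; omega
        rw [this]
    rw [sum_congr rfl e, sum_comm]
    refine sum_congr rfl fun k _ => ?_
    rw [← sum_filter, mul_sum]
  rw [h1]
  refine (norm_sum_le _ _).trans ?_
  rw [tele N hN, sum_mul]
  refine sum_le_sum fun k hk => ?_
  rw [mem_Ico] at hk
  rw [norm_mul, Complex.norm_real, Real.norm_eq_abs, abs_of_nonneg (hc0 k hk.1)]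
  exact mul_le_mul_of_nonneg_left (hf k hk.2.le) (hc0 k hk.1)

theorem log_le_K (K N : ℕ) (hN : N ≤ 2 ^ K) (n : ℕ) (hn : n ≤ N) : Real.log n ≤ K := by
  rcases Nat.eq_zero_or_pos n with rfl | hpos
  · simp
  have : (n : ℝ) ≤ 2 ^ K := by exact_mod_cast hn.trans hN
  calc Real.log n ≤ Real.log (2 ^ K) := Real.log_le_log (by exact_mod_cast hpos) this
    _ = K * Real.log 2 := by rw [Real.log_pow]
    _ ≤ K * 1 := by
        gcongr
        have := Real.log_two_lt_d9
        linarith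
    _ = K := mul_one _

/-- type I information -/
theorem typeI (d : ℕ) : ∀ A c : ℕ, ∃ B : ℕ, ∀ K : ℕ, 2 ≤ K → ∀ N : ℕ, K ^ B ≤ N →
    ∀ p : ℝ[X], p.natDegree ≤ d → ∀ m : ℕ, 1 ≤ m → m ≤ K ^ c →
    ∀ s : Finset ℕ, (s : Set ℕ).OrdConnected → (∀ x ∈ s, x ≤ N) →
    (N : ℝ) ≤ (K : ℝ) ^ A * ‖∑ x ∈ s, eC (p.eval ((m * x : ℕ) : ℝ))‖ →
    ∀ j, 1 ≤ j → Maj K B (1 / (N : ℝ) ^ j) (p.coeff j) := by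
  intro A c
  obtain ⟨B1, hB1⟩ := weyl_nat d A
  refine ⟨B1 + c * d, fun K hK N hN p hp m hm1 hm s hs hsN h j hj => ?_⟩
  by_cases hjd : d < j
  · rw [coeff_eq_zero_of_natDegree_lt (by omega)]
    exact Maj.zero hK (by positivity)
  have hKr : (2 : ℝ) ≤ K := by exact_mod_cast hK
  have hmr : (1 : ℝ) ≤ m := by exact_mod_cast hm1
  have hdeg : (p.comp (C (m : ℝ) * X)).natDegree ≤ d := by
    refine natDegree_comp_le.trans ?_
    have : (C (m : ℝ) * X : ℝ[X]).natDegree ≤ 1 := (natDegree_C_mul_le _ _).trans natDegree_X_le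
    nlinarith
  have := hB1 K hK N (le_trans (Nat.pow_le_pow_right (by omega) (by omega)) hN) _ hdeg s hs hsN
    (by simpa using h) j hj
  rw [comp_C_mul_X_coeff] at this
  refine Maj.of_mul_int hK (by positivity) ((m : ℤ) ^ j) (by positivity) ?_ ?_
  · push_cast
    rw [abs_of_nonneg (by positivity)]
    have hm' : (m : ℝ) ≤ (K : ℝ) ^ c := by exact_mod_cast hm
    calc (m : ℝ) ^ j ≤ (m : ℝ) ^ d := pow_le_pow_right₀ hmr (by omega)
      _ ≤ ((K : ℝ) ^ c) ^ d := by gcongr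
      _ = _ := by rw [pow_mul]
  · push_cast
    rw [mul_comm]
    exact this


theorem conv_bound (f g : ArithmeticFunction ℝ) (hf : ∀ n, |f n| ≤ 1)
    (hg : ∀ n, |g n| ≤ ArithmeticFunction.vonMangoldt n) (n : ℕ) : |(f * g) n| ≤ Real.log n := by
  rw [ArithmeticFunction.mul_apply]
  refine (abs_sum_le_sum_abs _ _).trans ?_
  have h1 := congrArg (fun F : ArithmeticFunction ℝ => F n) ArithmeticFunction.zeta_mul_vonMangoldt
  simp only [ArithmeticFunction.log_apply] at h1
  rw [← h1, ArithmeticFunction.mul_apply]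
  refine sum_le_sum fun x hx => ?_
  have hx' := Nat.mem_divisorsAntidiagonal.1 hx
  have hx1 : x.1 ≠ 0 := by rintro h; rw [h] at hx'; simp at hx'; omega
  rw [abs_mul]
  simp only [ArithmeticFunction.natCoe_apply, ArithmeticFunction.zeta_apply, hx1, if_false, Nat.cast_one]
  exact mul_le_mul (hf _) (hg _) (abs_nonneg _) zero_le_one

theorem vM_le_K (K N : ℕ) (hN : N ≤ 2 ^ K) (n : ℕ) (hn : n ≤ N) :
    ArithmeticFunction.vonMangoldt n ≤ K :=
  ArithmeticFunction.vonMangoldt_le_log.trans (log_le_K K N hN n hn)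

theorem muR_le (n : ℕ) : |muR n| ≤ 1 := by
  unfold muR
  rw [ArithmeticFunction.intCoe_apply]
  exact_mod_cast ArithmeticFunction.abs_moebius_le_one

theorem afLow_mu_le (U n : ℕ) : |afLow U muR n| ≤ 1 := by
  rw [afLow_apply]
  split_ifs
  · exact muR_le n
  · simp

theorem afHigh_mu_le (U n : ℕ) : |afHigh U muR n| ≤ 1 := by
  rw [afHigh_apply]
  split_ifs
  · simp
  · exact muR_le n

theorem afLow_vM_le (U n : ℕ) : |afLow U ArithmeticFunction.vonMangoldt n| ≤ ArithmeticFunction.vonMangoldt n := by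
  rw [afLow_apply]
  split_ifs
  · rw [abs_of_nonneg ArithmeticFunction.vonMangoldt_nonneg]
  · simp [ArithmeticFunction.vonMangoldt_nonneg]

theorem afHigh_vM_le (U n : ℕ) : |afHigh U ArithmeticFunction.vonMangoldt n| ≤ ArithmeticFunction.vonMangoldt n := by
  rw [afHigh_apply]
  split_ifs
  · simp [ArithmeticFunction.vonMangoldt_nonneg]
  · rw [abs_of_nonneg ArithmeticFunction.vonMangoldt_nonneg]

theorem zetaR_apply (n : ℕ) : zetaR n = if n = 0 then 0 else 1 := by
  unfold zetaR
  rw [ArithmeticFunction.natCoe_apply, ArithmeticFunction.zeta_apply]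
  split_ifs <;> simp

theorem zetaR_le (n : ℕ) : |zetaR n| ≤ 1 := by
  rw [zetaR_apply]
  split_ifs <;> simp

theorem low_supp (U n : ℕ) (f g : ArithmeticFunction ℝ) (h : (afLow U f * afLow U g) n ≠ 0) :
    1 ≤ n ∧ n ≤ U * U := by
  constructor
  · by_contra h0
    have : n = 0 := by omega
    subst this
    exact h ArithmeticFunction.map_zero
  · rw [ArithmeticFunction.mul_apply] at h
    obtain ⟨x, hx, hne⟩ := exists_ne_zero_of_sum_ne_zero h
    rw [afLow_apply, afLow_apply] at hne
    have h1 : x.1 ≤ U := by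
      by_contra h1; rw [if_neg h1, zero_mul] at hne; exact hne rfl
    have h2 : x.2 ≤ U := by
      by_contra h1; rw [if_neg h1, mul_zero] at hne; exact hne rfl
    rw [← (Nat.mem_divisorsAntidiagonal.1 hx).1]
    exact Nat.mul_le_mul h1 h2

theorem high_supp (U n : ℕ) (f : ArithmeticFunction ℝ) (h : (afHigh U f * zetaR) n ≠ 0) :
    U < n := by
  rw [ArithmeticFunction.mul_apply] at h
  obtain ⟨x, hx, hne⟩ := exists_ne_zero_of_sum_ne_zero h
  rw [afHigh_apply] at hne
  have h1 : ¬ x.1 ≤ U := by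
    intro h1; rw [if_pos h1, zero_mul] at hne; exact hne rfl
  have := Nat.mem_divisorsAntidiagonal.1 hx
  have : x.1 ≤ n := Nat.le_of_dvd (by omega) ⟨x.2, this.1.symm⟩
  omega

/-- pigeonhole for type I sums -/
theorem pick (K A c e N : ℕ) (hK : 2 ≤ K) (hN : 1 ≤ N) (f : ℕ → ℝ) (g : ℕ → ℂ)
    (hf : ∀ a ∈ range (N + 1), |f a| ≤ (K : ℝ) ^ e)
    (hs : ∀ a, f a ≠ 0 → 1 ≤ a ∧ a ≤ K ^ c)
    (h : (N : ℝ) ≤ (K : ℝ) ^ A * ‖∑ a ∈ range (N + 1), (f a : ℂ) * g a‖) :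
    ∃ a, 1 ≤ a ∧ a ≤ K ^ c ∧ (N : ℝ) ≤ (K : ℝ) ^ (A + c + e) * ‖g a‖ := by
  by_contra! hcon
  have hKr : (2 : ℝ) ≤ K := by exact_mod_cast hK
  have hK0 : (0 : ℝ) < K := by linarith
  have hNr : (1 : ℝ) ≤ N := by exact_mod_cast hN
  have h1 : ‖∑ a ∈ range (N + 1), (f a : ℂ) * g a‖ ≤ ∑ a ∈ Icc 1 (K ^ c), (K : ℝ) ^ e * ‖g a‖ := by
    have e1 : ∑ a ∈ range (N + 1), (f a : ℂ) * g a =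
        ∑ a ∈ (range (N + 1)).filter (fun a => a ∈ Icc 1 (K ^ c)), (f a : ℂ) * g a := by
      rw [sum_filter]
      refine sum_congr rfl fun a _ => ?_
      split_ifs with ha
      · rfl
      · have : f a = 0 := by
          by_contra h0
          exact ha (mem_Icc.2 (hs a h0))
        rw [this]; simp
    rw [e1]
    refine (norm_sum_le _ _).trans ?_
    calc _ ≤ ∑ a ∈ (range (N + 1)).filter (fun a => a ∈ Icc 1 (K ^ c)), (K : ℝ) ^ e * ‖g a‖ := by
          refine sum_le_sum fun a ha => ?_
          rw [norm_mul, Complex.norm_real, Real.norm_eq_abs]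
          gcongr
          exact hf a (mem_filter.1 ha).1
      _ ≤ _ := by
          refine sum_le_sum_of_subset_of_nonneg ?_ fun _ _ _ => by positivity
          intro a ha
          exact (mem_filter.1 ha).2
  have h2 : (K : ℝ) ^ (A + c) * ∑ a ∈ Icc 1 (K ^ c), (K : ℝ) ^ e * ‖g a‖ < (K : ℝ) ^ c * N := by
    rw [mul_sum]
    calc _ < ∑ a ∈ Icc 1 (K ^ c), (N : ℝ) := by
          refine sum_lt_sum_of_nonempty ⟨1, mem_Icc.2 ⟨le_rfl, Nat.one_le_pow _ _ (by omega)⟩⟩ ?_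
          intro a ha
          rw [mem_Icc] at ha
          refine lt_of_eq_of_lt ?_ (hcon a ha.1 ha.2)
          ring
      _ = _ := by simp
  have h3 : (K : ℝ) ^ c * N ≤ (K : ℝ) ^ (A + c) * ∑ a ∈ Icc 1 (K ^ c), (K : ℝ) ^ e * ‖g a‖ := by
    calc (K : ℝ) ^ c * N ≤ (K : ℝ) ^ c * ((K : ℝ) ^ A * ∑ a ∈ Icc 1 (K ^ c), (K : ℝ) ^ e * ‖g a‖) := by
          gcongr
          exact h.trans (by gcongr)
      _ = _ := by ring
  linarith

theorem dyadic (K N : ℕ) (hN : N ≤ 2 ^ K) (φ : ℕ → ℂ) :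
    ∑ m ∈ range (N + 1), φ m = ∑ i ∈ range (K + 1), ∑ m ∈ range (2 * 2 ^ i),
      if m ≤ N ∧ Nat.log 2 m = i then φ m else 0 := by
  rw [← sum_fiberwise_of_maps_to (t := range (K + 1)) (g := fun m => Nat.log 2 m)]
  · refine sum_congr rfl fun i _ => ?_
    rw [← sum_filter]
    refine sum_congr ?_ fun _ _ => rfl
    ext m
    simp only [mem_filter, mem_range]
    constructor
    · rintro ⟨h1, h2⟩
      refine ⟨?_, by omega, h2⟩
      have := Nat.lt_pow_succ_log_self (b := 2) (by norm_num) m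
      rw [h2, pow_succ] at this
      omega
    · rintro ⟨_, h1, h2⟩
      exact ⟨by omega, h2⟩
  · intro m hm
    rw [mem_range] at hm ⊢
    have : Nat.log 2 m ≤ Nat.log 2 (2 ^ K) := Nat.log_mono_right (by omega)
    rw [Nat.log_pow (by norm_num)] at this
    omega

/-- the weighted phase restricted to an interval -/
noncomputable def zPh (p : ℝ[X]) (u v n : ℕ) : ℂ :=
  if u ≤ n ∧ n ≤ v then eC (p.eval ((n : ℕ) : ℝ)) else 0

theorem zPh_norm (p : ℝ[X]) (u v n : ℕ) : ‖zPh p u v n‖ ≤ 1 := by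
  unfold zPh
  split_ifs
  · rw [eC_norm]
  · simp

theorem zPh_sum (p : ℝ[X]) (u v N m k : ℕ) :
    ∑ l ∈ (range (N + 1)).filter (fun l => k < l), zPh p u v (m * l) =
    ∑ l ∈ (range (N + 1)).filter (fun l => k < l ∧ u ≤ m * l ∧ m * l ≤ v), eC (p.eval ((m * l : ℕ) : ℝ)) := by
  unfold zPh
  rw [← sum_filter, filter_filter]

theorem zPh_ord (u v N m k : ℕ) :
    (((range (N + 1)).filter (fun l => k < l ∧ u ≤ m * l ∧ m * l ≤ v) : Finset ℕ) : Set ℕ).OrdConnected := by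
  constructor
  intro x hx y hy w hw
  simp only [coe_filter, Set.mem_setOf_eq, mem_range] at hx hy ⊢
  obtain ⟨hw1, hw2⟩ := hw
  have k1 := Nat.mul_le_mul_left m hw1
  have k2 := Nat.mul_le_mul_left m hw2
  omega


/-- the block estimate -/
theorem block (d A : ℕ) : ∃ B1 B : ℕ, ∀ K : ℕ, 2 ≤ K → ∀ N : ℕ, 1 ≤ N →
    ∀ p : ℝ[X], p.natDegree ≤ d → ∀ (u v : ℕ), v ≤ N → ∀ F G : ℕ → ℝ,
    (∀ m ≤ N, |F m| ≤ K) → (∀ m ≤ N, |G m| ≤ K) →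
    (∀ m, F m ≠ 0 → K ^ (B1 + 1) < m) → (∀ m, G m ≠ 0 → K ^ (B1 + 1) < m) →
    ∀ i j' : ℕ, (N : ℝ) ≤ (K : ℝ) ^ A * ‖∑ m ∈ range (2 * 2 ^ i), ∑ n ∈ range (2 * 2 ^ j'),
      ((if m ≤ N ∧ Nat.log 2 m = i then F m else 0 : ℝ) : ℂ) *
      ((if n ≤ N ∧ Nat.log 2 n = j' then G n else 0 : ℝ) : ℂ) * zPh p u v (m * n)‖ →
    ∀ j, 1 ≤ j → Maj K B (1 / (N : ℝ) ^ j) (p.coeff j) := by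
  obtain ⟨B1, hB1⟩ := typeII d (A + 3)
  refine ⟨B1, B1 + (A + 4) * d, fun K hK N hN p hp u v hv F G hF hG hFs hGs i j' h j hj => ?_⟩
  by_cases hjd : d < j
  · rw [coeff_eq_zero_of_natDegree_lt (by omega)]
    exact Maj.zero hK (by positivity)
  have hKr : (2 : ℝ) ≤ K := by exact_mod_cast hK
  have hK0 : (0 : ℝ) < K := by linarith
  have hNr : (1 : ℝ) ≤ N := by exact_mod_cast hN
  set f : ℕ → ℝ := fun m => if m ≤ N ∧ Nat.log 2 m = i then F m else 0 with hf
  set g : ℕ → ℝ := fun n => if n ≤ N ∧ Nat.log 2 n = j' then G n else 0 with hg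
  set M := 2 ^ i with hM
  set R := 2 ^ j' with hR
  have hfle : ∀ m, |f m| ≤ K := by
    intro m; simp only [hf]; split_ifs with h1
    · exact hF m h1.1
    · simp
  have hgle : ∀ m, |g m| ≤ K := by
    intro m; simp only [hg]; split_ifs with h1
    · exact hG m h1.1
    · simp
  set Bl := ∑ m ∈ range (2 * M), ∑ n ∈ range (2 * R), (f m : ℂ) * (g n : ℂ) * zPh p u v (m * n) with hBl
  have hBl' : (N : ℝ) ≤ (K : ℝ) ^ A * ‖Bl‖ := h
  have hne : Bl ≠ 0 := by
    intro h0
    rw [h0, norm_zero, mul_zero] at hBl'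
    linarith
  obtain ⟨m, hm, hne1⟩ := exists_ne_zero_of_sum_ne_zero hne
  obtain ⟨n, hn, hne2⟩ := exists_ne_zero_of_sum_ne_zero hne1
  have hfm : f m ≠ 0 := by rintro h0; simp [h0] at hne2
  have hgn : g n ≠ 0 := by rintro h0; simp [h0] at hne2
  have hz : zPh p u v (m * n) ≠ 0 := by rintro h0; simp [h0] at hne2
  have hfm' : (m ≤ N ∧ Nat.log 2 m = i) ∧ F m ≠ 0 := by
    simp only [hf] at hfm
    by_cases hc : m ≤ N ∧ Nat.log 2 m = i
    · rw [if_pos hc] at hfm; exact ⟨hc, hfm⟩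
    · rw [if_neg hc] at hfm; exact absurd rfl hfm
  have hgn' : (n ≤ N ∧ Nat.log 2 n = j') ∧ G n ≠ 0 := by
    simp only [hg] at hgn
    by_cases hc : n ≤ N ∧ Nat.log 2 n = j'
    · rw [if_pos hc] at hgn; exact ⟨hc, hgn⟩
    · rw [if_neg hc] at hgn; exact absurd rfl hgn
  have hmn : m * n ≤ N := by
    unfold zPh at hz
    by_contra hc
    rw [if_neg (by omega)] at hz
    exact hz rfl
  have hmU := hFs m hfm'.2
  have hnU := hGs n hgn'.2
  have hMm : M ≤ m := by
    rw [hM, ← hfm'.1.2]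
    exact Nat.pow_log_le_self 2 (by omega)
  have hRn : R ≤ n := by
    rw [hR, ← hgn'.1.2]
    exact Nat.pow_log_le_self 2 (by omega)
  have hMK : K ^ B1 ≤ M := by
    have h1 := mem_range.1 hm
    have h2 : 2 * K ^ B1 ≤ K ^ (B1 + 1) := by rw [pow_succ, mul_comm]; gcongr
    omega
  have hRK : K ^ B1 ≤ R := by
    have h1 := mem_range.1 hn
    have h2 : 2 * K ^ B1 ≤ K ^ (B1 + 1) := by rw [pow_succ, mul_comm]; gcongr
    omega
  have hM1 : (1 : ℝ) ≤ M := by exact_mod_cast le_trans (Nat.one_le_pow _ _ (by omega)) hMK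
  have hR1 : (1 : ℝ) ≤ R := by exact_mod_cast le_trans (Nat.one_le_pow _ _ (by omega)) hRK
  have hMR : (M : ℝ) * R ≤ N := by exact_mod_cast (Nat.mul_le_mul hMm hRn).trans hmn
  have hMR2 : (M : ℝ) * R ≤ (K : ℝ) ^ (A + 3) * ‖Bl‖ := by
    refine hMR.trans (hBl'.trans ?_)
    gcongr
    · linarith
    · omega
  have sqb : ∀ (Q : ℕ) (w : ℕ → ℝ), (∀ m, |w m| ≤ K) → ∑ m ∈ range (2 * Q), ‖(w m : ℂ)‖ ^ 2 ≤ (K : ℝ) ^ (A + 3) * Q := by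
    intro Q w hw
    calc _ ≤ ∑ m ∈ range (2 * Q), (K : ℝ) ^ 2 := by
          refine sum_le_sum fun m _ => ?_
          rw [Complex.norm_real, Real.norm_eq_abs]
          have := hw m
          gcongr
      _ = 2 * Q * (K : ℝ) ^ 2 := by simp
      _ ≤ K * Q * (K : ℝ) ^ 2 := by gcongr
      _ = (K : ℝ) ^ 3 * Q := by ring
      _ ≤ _ := by
          gcongr
          · linarith
          · omega
  have hconc : Maj K B1 (1 / ((M : ℝ) * R) ^ j) (p.coeff j) := by
    rcases le_total R M with hRM | hMR'
    · exact hB1 K hK M R hRK hRM p hp (fun m => (f m : ℂ)) (fun n => (g n : ℂ)) (sqb M f hfle) (sqb R g hgle) u v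
        hMR2 j hj
    · have := hB1 K hK R M hMK hMR' p hp (fun m => (g m : ℂ)) (fun n => (f n : ℂ)) (sqb R g hgle) (sqb M f hfle) u v
        (by
          rw [mul_comm (R : ℝ)]
          refine hMR2.trans (le_of_eq ?_)
          congr 2
          rw [hBl, sum_comm]
          refine sum_congr rfl fun m _ => sum_congr rfl fun n _ => ?_
          rw [mul_comm (f n : ℂ), mul_comm n m]
          rfl) j hj
      rw [mul_comm (M : ℝ)]
      exact this
  have htriv : ‖Bl‖ ≤ (K : ℝ) ^ 4 * (M * R) := by
    calc ‖Bl‖ ≤ ∑ m ∈ range (2 * M), ∑ n ∈ range (2 * R), (K : ℝ) * K * 1 := by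
          refine (norm_sum_le _ _).trans (sum_le_sum fun m _ => (norm_sum_le _ _).trans (sum_le_sum fun n _ => ?_))
          rw [norm_mul, norm_mul, Complex.norm_real, Complex.norm_real, Real.norm_eq_abs, Real.norm_eq_abs]
          have := hfle m
          have := hgle n
          have := zPh_norm p u v (m * n)
          gcongr
      _ = 2 * M * (2 * R * (K * K)) := by simp
      _ ≤ K * M * (K * R * (K * K)) := by gcongr
      _ = _ := by ring
  refine Maj.mono (B := B1 + (A + 4) * j) hK ?_ (by
    have : (A + 4) * j ≤ (A + 4) * d := Nat.mul_le_mul_left _ (by omega)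
    omega) (by positivity)
  refine hconc.eta hK ?_
  rw [mul_one_div, div_le_div_iff₀ (by positivity) (by positivity), one_mul, pow_mul, ← mul_pow]
  gcongr
  calc (N : ℝ) ≤ (K : ℝ) ^ A * ‖Bl‖ := hBl'
    _ ≤ (K : ℝ) ^ A * ((K : ℝ) ^ 4 * (M * R)) := by gcongr
    _ = _ := by ring

theorem lambda_sum (d : ℕ) : ∀ A : ℕ, ∃ B : ℕ, ∀ K : ℕ, 2 ≤ K → ∀ N : ℕ, K ^ B ≤ N → N ≤ 2 ^ K →
    ∀ p : ℝ[X], p.natDegree ≤ d → ∀ u v : ℕ, v ≤ N →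
    (N : ℝ) ≤ (K : ℝ) ^ A * ‖∑ n ∈ range (N + 1), (ArithmeticFunction.vonMangoldt n : ℂ) * zPh p u v n‖ →
    ∀ j, 1 ≤ j → Maj K B (1 / (N : ℝ) ^ j) (p.coeff j) := by
  intro A
  obtain ⟨B1, B2, hblock⟩ := block d (A + 6)
  set c := B1 + 1 with hc
  obtain ⟨B3, hB3⟩ := typeI d (A + 2 + c + 0 + 2) c
  obtain ⟨B4, hB4⟩ := typeI d (A + 2 + 2 * c + 1) (2 * c)
  refine ⟨B2 + B3 + B4 + A + c + 5, fun K hK N hN hNK p hp u v hv h => ?_⟩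
  have hKr : (2 : ℝ) ≤ K := by exact_mod_cast hK
  have hK0 : (0 : ℝ) < K := by linarith
  have hN' : ∀ b, b ≤ B2 + B3 + B4 + A + c + 5 → K ^ b ≤ N := fun b hb =>
    le_trans (Nat.pow_le_pow_right (by omega) hb) hN
  have hN1 : 1 ≤ N := le_trans (Nat.one_le_pow _ _ (by omega)) hN
  have hNr : (1 : ℝ) ≤ N := by exact_mod_cast hN1
  set U := K ^ c with hU
  set z := zPh p u v with hz
  have hzN : ∀ n, N < n → z n = 0 := by
    intro n hn
    rw [hz]; unfold zPh
    rw [if_neg (by omega)]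
  set L1 := afLow U ArithmeticFunction.vonMangoldt with hL1
  set L2 := afHigh U ArithmeticFunction.vonMangoldt with hL2
  set m1 := afLow U muR with hm1
  set m2 := afHigh U muR with hm2
  set T1 := ∑ n ∈ range (N + 1), (L1 n : ℂ) * z n with hT1
  set T2 := ∑ n ∈ range (N + 1), ((m1 * ArithmeticFunction.log) n : ℂ) * z n with hT2
  set T3 := ∑ n ∈ range (N + 1), (((m1 * L1) * zetaR) n : ℂ) * z n with hT3
  set T4 := ∑ n ∈ range (N + 1), (((L2 * zetaR) * m2) n : ℂ) * z n with hT4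
  have hsum : ∑ n ∈ range (N + 1), (ArithmeticFunction.vonMangoldt n : ℂ) * z n = T1 + T2 - T3 + T4 := by
    rw [hT1, hT2, hT3, hT4, ← sum_add_distrib, ← sum_sub_distrib, ← sum_add_distrib]
    refine sum_congr rfl fun n _ => ?_
    have hv := vaughan U
    have e2 : ArithmeticFunction.vonMangoldt n = L1 n + (m1 * ArithmeticFunction.log) n - ((m1 * L1) * zetaR) n
      + ((L2 * zetaR) * m2) n := by
      have := congrArg (fun F : ArithmeticFunction ℝ => F n) hv
      simpa [sub_eq_add_neg] using this
    rw [e2]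
    push_cast
    ring
  rw [hsum] at h
  have hcases : (N : ℝ) ≤ (K : ℝ) ^ (A + 2) * ‖T1‖ ∨ (N : ℝ) ≤ (K : ℝ) ^ (A + 2) * ‖T2‖ ∨
      (N : ℝ) ≤ (K : ℝ) ^ (A + 2) * ‖T3‖ ∨ (N : ℝ) ≤ (K : ℝ) ^ (A + 2) * ‖T4‖ := by
    by_contra! hcon
    obtain ⟨c1, c2, c3, c4⟩ := hcon
    have n1 : ‖T1 + T2 - T3 + T4‖ ≤ ‖T1‖ + ‖T2‖ + ‖T3‖ + ‖T4‖ := by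
      have := norm_add_le (T1 + T2 - T3) T4
      have := norm_sub_le (T1 + T2) T3
      have := norm_add_le T1 T2
      linarith
    have n2 : 4 * (N : ℝ) ≤ (K : ℝ) ^ 2 * N := by
      gcongr
      nlinarith
    have n3 : (K : ℝ) ^ 2 * N ≤ (K : ℝ) ^ 2 * ((K : ℝ) ^ A * (‖T1‖ + ‖T2‖ + ‖T3‖ + ‖T4‖)) := by
      gcongr
      exact h.trans (by gcongr)
    have n4 : (K : ℝ) ^ 2 * ((K : ℝ) ^ A * (‖T1‖ + ‖T2‖ + ‖T3‖ + ‖T4‖)) =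
      (K : ℝ) ^ (A + 2) * ‖T1‖ + (K : ℝ) ^ (A + 2) * ‖T2‖ + (K : ℝ) ^ (A + 2) * ‖T3‖ + (K : ℝ) ^ (A + 2) * ‖T4‖ := by
      ring
    linarith
  rcases hcases with h1 | h2 | h3 | h4
  · exfalso
    have t1 : ‖T1‖ ≤ (K : ℝ) ^ (c + 2) := by
      have e1 : T1 = ∑ n ∈ (range (N + 1)).filter (fun n => n ∈ range (U + 1)), (L1 n : ℂ) * z n := by
        rw [hT1, sum_filter]
        refine sum_congr rfl fun n _ => ?_
        split_ifs with hn
        · rfl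
        · rw [hL1, afLow_apply, if_neg (by rw [mem_range] at hn; omega)]
          simp
      rw [e1]
      refine (norm_sum_le _ _).trans ?_
      calc _ ≤ ∑ n ∈ (range (N + 1)).filter (fun n => n ∈ range (U + 1)), (K : ℝ) := by
            refine sum_le_sum fun n hn => ?_
            rw [mem_filter, mem_range] at hn
            rw [norm_mul, Complex.norm_real, Real.norm_eq_abs]
            calc _ ≤ (K : ℝ) * 1 := by
                  gcongr
                  · exact (afLow_vM_le U n).trans (vM_le_K K N hNK n (by omega))
                  · exact zPh_norm _ _ _ _
              _ = K := mul_one _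
        _ ≤ ∑ n ∈ range (U + 1), (K : ℝ) := by
            refine sum_le_sum_of_subset_of_nonneg ?_ fun _ _ _ => by positivity
            intro n hn
            exact (mem_filter.1 hn).2
        _ = (U + 1) * K := by simp
        _ ≤ (U + U) * K := by
            gcongr
            exact_mod_cast Nat.one_le_pow _ _ (by omega)
        _ = 2 * ((K : ℝ) ^ c * K) := by rw [hU]; push_cast; ring
        _ ≤ K * ((K : ℝ) ^ c * K) := by gcongr
        _ = _ := by ring
    have t2 : (N : ℝ) ≤ (K : ℝ) ^ (A + 2) * (K : ℝ) ^ (c + 2) := h1.trans (by gcongr)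
    rw [← pow_add] at t2
    have t3 : (K : ℝ) ^ (A + 2 + (c + 2)) < (K : ℝ) ^ (A + c + 5) :=
      pow_lt_pow_right₀ (by linarith) (by omega)
    have t4 : (K : ℝ) ^ (A + c + 5) ≤ N := by exact_mod_cast hN' (A + c + 5) (by omega)
    linarith
  · rw [hT2, conv_sum _ _ N z hzN] at h2
    obtain ⟨a, ha1, ha2, hga⟩ := pick K (A + 2) c 0 N hK hN1 m1
      (fun a => ∑ b ∈ range (N + 1), (Real.log b : ℂ) * z (a * b))
      (fun a _ => by simpa using afLow_mu_le U a)
      (by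
        intro a ha
        rw [hm1, afLow_apply] at ha
        by_cases haU : a ≤ U
        · refine ⟨?_, haU⟩
          by_contra h0
          have : a = 0 := by omega
          subst this
          simp at ha
        · rw [if_neg haU] at ha
          exact absurd rfl ha)
      (by
        convert h2 using 4 with a _
        rw [mul_sum]
        refine sum_congr rfl fun b _ => ?_
        rw [ArithmeticFunction.log_apply]
        ring)
    have hk : ∃ k ≤ N, (N : ℝ) ≤ (K : ℝ) ^ (A + 2 + c + 0 + 2) * ‖∑ l ∈ (range (N + 1)).filter (fun l => k < l), z (a * l)‖ := by
      by_contra! hcon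
      have l1 := log_weight N (fun l => z (a * l)) (N / (K : ℝ) ^ (A + 2 + c + 0 + 2)) (by
        intro k hk
        rw [le_div_iff₀ (by positivity), mul_comm]
        exact (hcon k hk).le)
      have l2 : Real.log N * (N / (K : ℝ) ^ (A + 2 + c + 0 + 2)) ≤ K * (N / (K : ℝ) ^ (A + 2 + c + 0 + 2)) := by
        gcongr
        exact log_le_K K N hNK N le_rfl
      have l3 : (N : ℝ) ≤ (K : ℝ) ^ (A + 2 + c + 0) * (K * (N / (K : ℝ) ^ (A + 2 + c + 0 + 2))) :=
        hga.trans (by gcongr; exact l1.trans l2)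
      have l4 : (K : ℝ) ^ (A + 2 + c + 0) * (K * (N / (K : ℝ) ^ (A + 2 + c + 0 + 2))) = N / K := by
        rw [pow_add _ _ 2]
        field_simp
        simp
      rw [l4, le_div_iff₀ hK0] at l3
      nlinarith
    obtain ⟨k, _, hk⟩ := hk
    rw [hz, zPh_sum] at hk
    intro j hj
    exact (hB3 K hK N (hN' _ (by omega)) p hp a ha1 ha2 _ (zPh_ord u v N a k) (fun x hx => by
      rw [mem_filter, mem_range] at hx; omega) hk j hj).mono hK (by omega) (by positivity)
  · rw [hT3, conv_sum _ _ N z hzN] at h3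
    obtain ⟨a, ha1, ha2, hga⟩ := pick K (A + 2) (2 * c) 1 N hK hN1 (fun a => (m1 * L1 : ArithmeticFunction ℝ) a)
      (fun a => ∑ b ∈ range (N + 1), (zetaR b : ℂ) * z (a * b))
      (fun a ha => by
        rw [pow_one]
        refine (conv_bound m1 L1 (afLow_mu_le U) (afLow_vM_le U) a).trans (log_le_K K N hNK a ?_)
        rw [mem_range] at ha; omega)
      (by
        intro a ha
        have := low_supp U a _ _ ha
        refine ⟨this.1, this.2.trans (le_of_eq ?_)⟩
        rw [hU, ← pow_add]
        congr 1
        omega)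
      (by
        convert h3 using 4 with a _
        rw [mul_sum]
        refine sum_congr rfl fun b _ => ?_
        ring)
    have e1 : ∑ b ∈ range (N + 1), (zetaR b : ℂ) * z (a * b) = ∑ l ∈ (range (N + 1)).filter (fun l => 0 < l), z (a * l) := by
      rw [sum_filter]
      refine sum_congr rfl fun b _ => ?_
      rw [zetaR_apply]
      rcases Nat.eq_zero_or_pos b with rfl | hb
      · simp
      · rw [if_neg (by omega), if_pos hb]; simp
    simp only [e1] at hga
    rw [hz, zPh_sum] at hga
    intro j hj
    exact (hB4 K hK N (hN' _ (by omega)) p hp a ha1 ha2 _ (zPh_ord u v N a 0) (fun x hx => by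
      rw [mem_filter, mem_range] at hx; omega) hga j hj).mono hK (by omega) (by positivity)
  · rw [hT4, conv_sum _ _ N z hzN] at h4
    set F : ℕ → ℝ := fun m => (L2 * zetaR) m with hF
    set G : ℕ → ℝ := fun m => m2 m with hG
    have hdy : ∑ a ∈ range (N + 1), ∑ b ∈ range (N + 1), (F a : ℂ) * (G b : ℂ) * z (a * b) =
      ∑ x ∈ range (K + 1) ×ˢ range (K + 1), ∑ m ∈ range (2 * 2 ^ x.1), ∑ n ∈ range (2 * 2 ^ x.2),
      ((if m ≤ N ∧ Nat.log 2 m = x.1 then F m else 0 : ℝ) : ℂ) *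
      ((if n ≤ N ∧ Nat.log 2 n = x.2 then G n else 0 : ℝ) : ℂ) * z (m * n) := by
      rw [sum_product, dyadic K N hNK]
      refine sum_congr rfl fun i _ => ?_
      dsimp only
      symm
      rw [sum_comm]
      symm
      refine sum_congr rfl fun m _ => ?_
      split_ifs with hm
      · rw [dyadic K N hNK]
        refine sum_congr rfl fun j _ => sum_congr rfl fun n _ => ?_
        split_ifs with hn
        · rfl
        · simp
      · simp
    change (N : ℝ) ≤ (K : ℝ) ^ (A + 2) * ‖∑ a ∈ range (N + 1), ∑ b ∈ range (N + 1), (F a : ℂ) * (G b : ℂ) * z (a * b)‖ at h4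
    rw [hdy] at h4
    have hex : ∃ x ∈ range (K + 1) ×ˢ range (K + 1), (N : ℝ) ≤ (K : ℝ) ^ (A + 6) * ‖∑ m ∈ range (2 * 2 ^ x.1), ∑ n ∈ range (2 * 2 ^ x.2),
      ((if m ≤ N ∧ Nat.log 2 m = x.1 then F m else 0 : ℝ) : ℂ) *
      ((if n ≤ N ∧ Nat.log 2 n = x.2 then G n else 0 : ℝ) : ℂ) * z (m * n)‖ := by
      by_contra! hcon
      have s1 := sum_lt_sum_of_nonempty (s := range (K + 1) ×ˢ range (K + 1)) ⟨(0, 0), by simp⟩ hcon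
      rw [← mul_sum] at s1
      have s2 : ∑ x ∈ range (K + 1) ×ˢ range (K + 1), (N : ℝ) ≤ (K : ℝ) ^ 4 * N := by
        rw [sum_const, card_product, card_range, nsmul_eq_mul]
        gcongr
        push_cast
        have : (K : ℝ) + 1 ≤ (K : ℝ) ^ 2 := by nlinarith
        calc ((K : ℝ) + 1) * (K + 1) ≤ (K : ℝ) ^ 2 * (K : ℝ) ^ 2 := by gcongr
          _ = _ := by ring
      have s3 : (K : ℝ) ^ 4 * N ≤ (K : ℝ) ^ 4 * ((K : ℝ) ^ (A + 2) * ∑ x ∈ range (K + 1) ×ˢ range (K + 1), ‖∑ m ∈ range (2 * 2 ^ x.1), ∑ n ∈ range (2 * 2 ^ x.2),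
      ((if m ≤ N ∧ Nat.log 2 m = x.1 then F m else 0 : ℝ) : ℂ) *
      ((if n ≤ N ∧ Nat.log 2 n = x.2 then G n else 0 : ℝ) : ℂ) * z (m * n)‖) := by
        gcongr
        refine h4.trans ?_
        gcongr
        exact norm_sum_le _ _
      rw [← mul_assoc, ← pow_add, show 4 + (A + 2) = A + 6 by ring] at s3
      linarith
    obtain ⟨x, _, hx⟩ := hex
    intro j hj
    refine (hblock K hK N hN1 p hp u v hv F G ?_ ?_ ?_ ?_ x.1 x.2 hx j hj).mono hK (by omega) (by positivity)
    · intro m hm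
      rw [hF]
      simp only
      rw [mul_comm]
      exact (conv_bound zetaR L2 zetaR_le (afHigh_vM_le U) m).trans (log_le_K K N hNK m hm)
    · intro m _
      exact (afHigh_mu_le U m).trans (by linarith)
    · intro m hm
      exact high_supp U m _ hm
    · intro m hm
      rw [hG] at hm
      simp only [hm2, afHigh_apply] at hm
      by_contra hc
      rw [if_pos (by omega)] at hm
      exact hm rfl


/-- Weight of a natural number: `log n` on primes. -/
noncomputable def npw (n : ℕ) : ℝ := if n.Prime then Real.log n else 0

/-- Weight of an integer: `log |x|` on signed primes. -/
noncomputable def ipw (x : ℤ) : ℝ := if Prime x then Real.log |(x : ℝ)| else 0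

theorem ipw_nat (n : ℕ) : ipw (n : ℤ) = npw n := by
  unfold ipw npw
  simp [Nat.prime_iff_prime_int]

theorem ipw_neg (x : ℤ) : ipw (-x) = ipw x := by
  unfold ipw
  have : Prime (-x) ↔ Prime x := ⟨fun h => by simpa using h.neg, fun h => h.neg⟩
  simp [this]

theorem npw_le (n : ℕ) : npw n ≤ ArithmeticFunction.vonMangoldt n := by
  unfold npw
  split_ifs with h
  · rw [ArithmeticFunction.vonMangoldt_apply_prime h]
  · exact ArithmeticFunction.vonMangoldt_nonneg

theorem npw_nonneg (n : ℕ) : 0 ≤ npw n := by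
  unfold npw
  split_ifs
  · exact Real.log_natCast_nonneg n
  · exact le_rfl

theorem npw_sum (N : ℕ) : ∑ n ∈ range (N + 1), npw n = Chebyshev.theta N := by
  rw [Chebyshev.theta_eq_sum_Icc, Nat.floor_natCast, sum_filter, Nat.range_succ_eq_Icc_zero]
  rfl

theorem psi_sum (N : ℕ) : ∑ n ∈ range (N + 1), ArithmeticFunction.vonMangoldt n = Chebyshev.psi N := by
  rw [Chebyshev.psi_eq_sum_Icc, Nat.floor_natCast, Nat.range_succ_eq_Icc_zero]

theorem primes_nat (d : ℕ) : ∀ A : ℕ, ∃ B : ℕ, ∀ K : ℕ, 2 ≤ K → ∀ N : ℕ, K ^ B ≤ N → N ≤ 2 ^ K →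
    ∀ p : ℝ[X], p.natDegree ≤ d → ∀ u v : ℕ, v ≤ N →
    (N : ℝ) ≤ (K : ℝ) ^ A * ‖∑ n ∈ range (N + 1), (npw n : ℂ) * zPh p u v n‖ →
    ∀ j, 1 ≤ j → Maj K B (1 / (N : ℝ) ^ j) (p.coeff j) := by
  intro A
  obtain ⟨B, hB⟩ := lambda_sum d (A + 1)
  refine ⟨B + 2 * A + 6, fun K hK N hN hNK p hp u v hv h j hj => ?_⟩
  have hKr : (2 : ℝ) ≤ K := by exact_mod_cast hK
  have hK0 : (0 : ℝ) < K := by linarith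
  have hN1 : 1 ≤ N := le_trans (Nat.one_le_pow _ _ (by omega)) hN
  have hN1r : (1 : ℝ) ≤ N := by exact_mod_cast hN1
  have hNa : K ^ B ≤ N := le_trans (Nat.pow_le_pow_right (by omega) (by omega)) hN
  have hNb : (K : ℝ) ^ (2 * A + 6) ≤ N := by
    exact_mod_cast le_trans (Nat.pow_le_pow_right (by omega) (by omega)) hN
  refine (hB K hK N hNa hNK p hp u v hv ?_ j hj).mono hK (by omega) (by positivity)
  have hdiff : ‖∑ n ∈ range (N + 1), (ArithmeticFunction.vonMangoldt n : ℂ) * zPh p u v n -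
      ∑ n ∈ range (N + 1), (npw n : ℂ) * zPh p u v n‖ ≤ 2 * √N * K := by
    rw [← sum_sub_distrib]
    refine (norm_sum_le _ _).trans ?_
    have h1 : ∑ n ∈ range (N + 1), ‖(ArithmeticFunction.vonMangoldt n : ℂ) * zPh p u v n - (npw n : ℂ) * zPh p u v n‖
        ≤ ∑ n ∈ range (N + 1), (ArithmeticFunction.vonMangoldt n - npw n) := by
      refine sum_le_sum fun n _ => ?_
      rw [← sub_mul, norm_mul, ← Complex.ofReal_sub, Complex.norm_real, Real.norm_eq_abs,
        abs_of_nonneg (sub_nonneg.2 (npw_le n))]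
      exact mul_le_of_le_one_right (sub_nonneg.2 (npw_le n)) (zPh_norm p u v n)
    refine h1.trans ?_
    rw [sum_sub_distrib, npw_sum, psi_sum]
    refine (Chebyshev.psi_sub_theta_le hN1r).trans ?_
    gcongr
    exact log_le_K K N hNK N le_rfl
  have hs : (K : ℝ) ^ (A + 3) ≤ √N := by
    rw [Real.le_sqrt (by positivity), ← pow_mul]
    · rwa [show (A + 3) * 2 = 2 * A + 6 by ring]
    · positivity
  set S1 := ∑ n ∈ range (N + 1), (ArithmeticFunction.vonMangoldt n : ℂ) * zPh p u v n
  set S2 := ∑ n ∈ range (N + 1), (npw n : ℂ) * zPh p u v n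
  have h2 : ‖S2‖ ≤ ‖S1‖ + 2 * √N * K := by
    have := norm_sub_norm_le S2 S1
    rw [norm_sub_rev] at this
    linarith
  have h3 : (K : ℝ) ^ A * (2 * √N * K) ≤ N / 2 := by
    have e : (N : ℝ) = √N * √N := (Real.mul_self_sqrt (by positivity)).symm
    have : (K : ℝ) ^ A * (4 * K) ≤ (K : ℝ) ^ (A + 3) := by
      rw [pow_add]
      gcongr
      nlinarith [mul_le_mul hKr hKr (by norm_num) (by linarith)]
    have t : ((K : ℝ) ^ A * (4 * K)) * √N ≤ √N * √N := by
      gcongr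
      exact this.trans hs
    rw [← e] at t
    linarith
  have h4 : (N : ℝ) ≤ (K : ℝ) ^ A * ‖S1‖ + N / 2 := by
    refine h.trans ?_
    calc _ ≤ (K : ℝ) ^ A * (‖S1‖ + 2 * √N * K) := by gcongr
      _ = (K : ℝ) ^ A * ‖S1‖ + (K : ℝ) ^ A * (2 * √N * K) := by ring
      _ ≤ _ := by linarith
  have h5 : (2 : ℝ) * ((K : ℝ) ^ A * ‖S1‖) ≤ K * ((K : ℝ) ^ A * ‖S1‖) := by gcongr
  rw [pow_succ]
  linarith

theorem sum_pm (N : ℕ) (g : ℤ → ℂ) (h0 : g 0 = 0) :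
    ∑ x ∈ Icc (-(N : ℤ)) N, g x = ∑ n ∈ range (N + 1), g n + ∑ n ∈ range (N + 1), g (-(n : ℤ)) := by
  rw [← sum_filter_add_sum_filter_not (Icc (-(N : ℤ)) N) (fun x => 0 ≤ x)]
  congr 1
  · refine sum_bij' (fun x _ => x.toNat) (fun n _ => (n : ℤ)) ?_ ?_ ?_ ?_ ?_
    · intro x hx; simp only [mem_filter, mem_Icc, mem_range] at *; omega
    · intro x hx; simp only [mem_filter, mem_Icc, mem_range] at *; omega
    · intro x hx; simp only [mem_filter, mem_Icc] at *; omega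
    · intro x hx; simp
    · intro x hx; simp only [mem_filter, mem_Icc] at hx; rw [Int.toNat_of_nonneg hx.2]
  · rw [sum_range_succ', Nat.cast_zero, neg_zero, h0, add_zero]
    refine sum_bij' (fun x _ => (-x).toNat - 1) (fun n _ => -((n + 1 : ℕ) : ℤ)) ?_ ?_ ?_ ?_ ?_
    · intro x hx; simp only [mem_filter, mem_Icc, mem_range] at *; omega
    · intro x hx; simp only [mem_filter, mem_Icc, mem_range] at *; omega
    · intro x hx; simp only [mem_filter, mem_Icc] at *; omega
    · intro x hx; simp only [mem_range] at *; omega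
    · intro x hx; simp only [mem_filter, mem_Icc] at hx; congr 1; omega

theorem comp_neg_coeff (p : ℝ[X]) (j : ℕ) : (p.comp (-X)).coeff j = (-1) ^ j * p.coeff j := by
  have : (-X : ℝ[X]) = C (-1) * X := by simp
  rw [this, comp_C_mul_X_coeff, mul_comm]

theorem primes_set (d : ℕ) : ∀ A : ℕ, ∃ B : ℕ, ∀ K : ℕ, 2 ≤ K → ∀ N : ℕ, K ^ B ≤ N → N ≤ 2 ^ K →
    ∀ p : ℝ[X], p.natDegree ≤ d → ∀ s : Finset ℤ, (s : Set ℤ).OrdConnected →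
    s ⊆ Icc (-(N : ℤ)) N →
    (N : ℝ) ≤ (K : ℝ) ^ A * ‖∑ x ∈ s, (ipw x : ℂ) * eC (p.eval (x : ℝ))‖ →
    ∀ j, 1 ≤ j → Maj K B (1 / (N : ℝ) ^ j) (p.coeff j) := by
  intro A
  obtain ⟨B, hB⟩ := primes_nat d (A + 1)
  refine ⟨B, fun K hK N hN hNK p hp s hs hsN h j hj => ?_⟩
  have hKr : (2 : ℝ) ≤ K := by exact_mod_cast hK
  have hK0 : (0 : ℝ) < K := by linarith
  obtain ⟨u, v, hu, hv, rfl⟩ := finset_ordConnected s hs N hsN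
  have hn0 : npw 0 = 0 := by simp [npw]
  have e : ∑ x ∈ Icc u v, (ipw x : ℂ) * eC (p.eval (x : ℝ)) =
      ∑ n ∈ range (N + 1), (npw n : ℂ) * zPh p u.toNat v.toNat n +
      ∑ n ∈ range (N + 1), (npw n : ℂ) * zPh (p.comp (-X)) (-v).toNat (-u).toNat n := by
    have e1 : ∑ x ∈ Icc u v, (ipw x : ℂ) * eC (p.eval (x : ℝ)) =
        ∑ x ∈ Icc (-(N : ℤ)) N, if x ∈ Icc u v then (ipw x : ℂ) * eC (p.eval (x : ℝ)) else 0 := by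
      rw [← sum_filter]
      refine sum_congr ?_ fun _ _ => rfl
      ext x
      simp only [mem_filter, mem_Icc]
      omega
    rw [e1, sum_pm]
    · congr 1
      · refine sum_congr rfl fun n _ => ?_
        rw [ipw_nat]
        unfold zPh
        rcases Nat.eq_zero_or_pos n with rfl | hn
        · simp [hn0]
        · by_cases hc : (n : ℤ) ∈ Icc u v
          · rw [if_pos hc, if_pos]
            · simp
            · rw [mem_Icc] at hc; omega
          · rw [if_neg hc, if_neg, mul_zero]
            rw [mem_Icc] at hc; omega
      · refine sum_congr rfl fun n _ => ?_
        rw [ipw_neg, ipw_nat]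
        unfold zPh
        rcases Nat.eq_zero_or_pos n with rfl | hn
        · simp [hn0]
        · by_cases hc : -(n : ℤ) ∈ Icc u v
          · rw [if_pos hc, if_pos]
            · simp
            · rw [mem_Icc] at hc; omega
          · rw [if_neg hc, if_neg, mul_zero]
            rw [mem_Icc] at hc; omega
    · simp [ipw]
  rw [e] at h
  set S1 := ∑ n ∈ range (N + 1), (npw n : ℂ) * zPh p u.toNat v.toNat n with hS1
  set S2 := ∑ n ∈ range (N + 1), (npw n : ℂ) * zPh (p.comp (-X)) (-v).toNat (-u).toNat n with hS2
  have h' : (N : ℝ) ≤ (K : ℝ) ^ (A + 1) * ‖S1‖ ∨ (N : ℝ) ≤ (K : ℝ) ^ (A + 1) * ‖S2‖ := by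
    by_contra! hc
    have h1 : (N : ℝ) ≤ (K : ℝ) ^ A * (‖S1‖ + ‖S2‖) := h.trans (by gcongr; exact norm_add_le _ _)
    have h2 : (2 : ℝ) * ((K : ℝ) ^ A * (‖S1‖ + ‖S2‖)) ≤ K * ((K : ℝ) ^ A * (‖S1‖ + ‖S2‖)) := by gcongr
    rw [pow_succ] at hc
    nlinarith [hc.1, hc.2]
  rcases h' with h' | h'
  · exact hB K hK N hN hNK p hp _ _ (by omega) h' j hj
  · have := hB K hK N hN hNK (p.comp (-X)) (by rw [natDegree_comp]; simpa using hp) _ _ (by omega) h' j hj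
    rw [comp_neg_coeff] at this
    rcases neg_one_pow_eq_or ℝ j with h | h
    · simpa [h] using this
    · rw [h, neg_one_mul] at this
      exact this.of_neg


/-- Polynomials in `n` variables with degree at most `d` in each. -/
noncomputable def mp {n d : ℕ} (c : (Fin n → Fin (d + 1)) → ℝ) (x : Fin n → ℤ) : ℝ :=
  ∑ γ, c γ * ∏ i, (x i : ℝ) ^ (γ i : ℕ)

/-- The one variable slice. -/
noncomputable def sp {n d : ℕ} (c : (Fin (n + 1) → Fin (d + 1)) → ℝ) (i : Fin (n + 1))
    (y : Fin n → ℤ) : ℝ[X] :=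
  ∑ j : Fin (d + 1), C (mp (fun γ => c (i.insertNth j γ)) y) * X ^ (j : ℕ)

/-- The integer box. -/
noncomputable def zbox (n N : ℕ) : Finset (Fin n → ℤ) := Fintype.piFinset fun _ => Icc (-(N : ℤ)) N

theorem mem_zbox {n N : ℕ} (x : Fin n → ℤ) : x ∈ zbox n N ↔ ∀ i, x i ∈ Icc (-(N : ℤ)) N := by
  simp only [zbox, Fintype.mem_piFinset]

theorem sp_natDegree {n d : ℕ} (c : (Fin (n + 1) → Fin (d + 1)) → ℝ) (i : Fin (n + 1))
    (y : Fin n → ℤ) : (sp c i y).natDegree ≤ d := by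
  unfold sp
  refine natDegree_sum_le_of_forall_le _ _ fun j _ => ?_
  exact (natDegree_C_mul_X_pow_le _ _).trans (by omega)

theorem sp_coeff {n d : ℕ} (c : (Fin (n + 1) → Fin (d + 1)) → ℝ) (i : Fin (n + 1))
    (y : Fin n → ℤ) (j : Fin (d + 1)) :
    (sp c i y).coeff j = mp (fun γ => c (i.insertNth j γ)) y := by
  unfold sp
  rw [finset_sum_coeff, sum_eq_single j]
  · simp
  · intro b _ hb
    rw [coeff_C_mul_X_pow, if_neg]
    intro h
    exact hb (Fin.ext h.symm)
  · simp

theorem mp_insert {n d : ℕ} (c : (Fin (n + 1) → Fin (d + 1)) → ℝ) (i : Fin (n + 1))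
    (y : Fin n → ℤ) (t : ℤ) : mp c (i.insertNth t y) = (sp c i y).eval (t : ℝ) := by
  unfold sp mp
  rw [eval_finset_sum, ← Equiv.sum_comp (Fin.insertNthEquiv (fun _ => Fin (d + 1)) i),
    Fintype.sum_prod_type]
  refine sum_congr rfl fun j _ => ?_
  rw [eval_mul, eval_C, eval_pow, eval_X, sum_mul]
  refine sum_congr rfl fun γ _ => ?_
  rw [Fin.prod_univ_succAbove _ i]
  change c (i.insertNth j γ) * _ = _
  simp only [Fin.insertNthEquiv_apply, Fin.insertNth_apply_same, Fin.insertNth_apply_succAbove]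
  ring

theorem zbox_sum {M : Type*} [AddCommMonoid M] (n N : ℕ) (i : Fin (n + 1)) (g : (Fin (n + 1) → ℤ) → M) :
    ∑ x ∈ zbox (n + 1) N, g x = ∑ y ∈ zbox n N, ∑ t ∈ Icc (-(N : ℤ)) N, g (i.insertNth t y) := by
  rw [sum_comm, ← sum_product']
  symm
  refine sum_equiv (Fin.insertNthEquiv (fun _ => ℤ) i) ?_ ?_
  · rintro ⟨t, y⟩
    rw [mem_product, mem_zbox, mem_zbox, Fin.forall_iff_succAbove i]
    simp
  · rintro ⟨t, y⟩ _
    rfl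

theorem zbox_card (n N K : ℕ) (hK : 2 ≤ K) (hN : 1 ≤ N) :
    ((zbox n N).card : ℝ) ≤ (K : ℝ) ^ (2 * n) * (N : ℝ) ^ n := by
  have hKr : (2 : ℝ) ≤ K := by exact_mod_cast hK
  unfold zbox
  rw [Fintype.card_piFinset_const]
  push_cast
  rw [pow_mul, ← mul_pow]
  gcongr
  refine (card_Icc_le N hN _ _ le_rfl le_rfl).trans ?_
  gcongr
  nlinarith

theorem mrec (d n : ℕ) : ∀ A : ℕ, ∃ B : ℕ, ∀ K : ℕ, 2 ≤ K → ∀ N : ℕ, K ^ B ≤ N →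
    ∀ c : (Fin n → Fin (d + 1)) → ℝ, ∀ S ⊆ zbox n N, (N : ℝ) ^ n ≤ (K : ℝ) ^ A * S.card →
    ∀ ε : ℝ, 0 ≤ ε → ε * N ≤ (K : ℝ) ^ A → (∀ x ∈ S, Maj K A ε (mp c x)) →
    ∀ γ, Maj K B (ε / (N : ℝ) ^ (∑ i, (γ i : ℕ))) (c γ) := by
  classical
  induction n with
  | zero =>
    intro A
    refine ⟨A, fun K hK N hN c S hS hc ε hε hεN h γ => ?_⟩
    have hne : S.Nonempty := by
      rw [nonempty_iff_ne_empty]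
      rintro rfl
      simp at hc
      linarith
    obtain ⟨x, hx⟩ := hne
    have := h x hx
    rw [mp, Fintype.sum_unique] at this
    simp only [univ_eq_empty, prod_empty, mul_one, sum_empty, pow_zero, div_one] at this ⊢
    convert this
  | succ n ih =>
    intro A
    obtain ⟨B1, hB1⟩ := recur d (2 * A + 2 * n + 1)
    obtain ⟨B2, hB2⟩ := ih (B1 + 2 * A + 2 * n + 3)
    refine ⟨B1 + B2 + A, fun K hK N hN c S hS hc ε hε hεN h γ => ?_⟩
    have hKr : (2 : ℝ) ≤ K := by exact_mod_cast hK
    have hK0 : (0 : ℝ) < K := by linarith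
    have hN1 : 1 ≤ N := le_trans (Nat.one_le_pow _ _ (by omega)) hN
    have hN1r : (1 : ℝ) ≤ N := by exact_mod_cast hN1
    have hN' : ∀ b, b ≤ B1 + B2 + A → K ^ b ≤ N := fun b hb =>
      le_trans (Nat.pow_le_pow_right (by omega) hb) hN
    obtain ⟨q, hq1, hq2, S', hS', hcard, hq⟩ := Maj.pigeon hK S (mp c) h
    set f : (Fin n → ℤ) → Finset ℤ := fun y =>
      (Icc (-(N : ℤ)) N).filter fun t => (Fin.insertNth 0 t y : Fin (n + 1) → ℤ) ∈ S' with hf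
    have hsum : ((S'.card : ℕ) : ℝ) = ∑ y ∈ zbox n N, ((f y).card : ℝ) := by
      have h1 : ∑ x ∈ zbox (n + 1) N, (if x ∈ S' then 1 else 0 : ℕ) = S'.card := by
        rw [← sum_filter, sum_const, smul_eq_mul, mul_one, filter_mem_eq_inter,
          inter_eq_right.2 (hS'.trans hS)]
      rw [← h1, zbox_sum n N 0]
      push_cast
      refine sum_congr rfl fun y _ => ?_
      rw [hf, card_filter]
      push_cast
      rfl
    have hmany := many (zbox n N) (fun y => ((f y).card : ℝ)) K (2 * A) (2 * n) 2 hK ((N : ℝ) ^ n) N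
      (by positivity) (by positivity) (zbox_card n N K hK hN1)
      (by
        intro y _
        refine (Nat.cast_le.2 (card_filter_le _ _)).trans ((card_Icc_le N hN1 _ _ le_rfl le_rfl).trans ?_)
        gcongr
        nlinarith)
      (by
        rw [← hsum, ← pow_succ]
        refine hc.trans ?_
        rw [two_mul, pow_add, mul_assoc]
        gcongr
        exact_mod_cast hcard)
    set T := (zbox n N).filter fun y => (N : ℝ) ≤ (K : ℝ) ^ (2 * A + 2 * n + 1) * ((f y).card : ℝ) with hT
    have key : ∀ y ∈ T, Maj K (B1 + A) ((K : ℝ) ^ A * ε / (N : ℝ) ^ ((γ 0 : ℕ)))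
        (mp (fun γ' => c (Fin.insertNth 0 (γ 0) γ')) y) := by
      intro y hy
      rw [hT, mem_filter] at hy
      have := hB1 K hK N (hN' _ (by omega)) (C (q : ℝ) * sp c 0 y)
        ((natDegree_C_mul_le _ _).trans (sp_natDegree c 0 y)) (f y) (filter_subset _ _)
        (by exact_mod_cast hy.2) ((K : ℝ) ^ A * ε) (by positivity)
        (by
          calc (K : ℝ) ^ A * ε * N = (K : ℝ) ^ A * (ε * N) := by ring
            _ ≤ (K : ℝ) ^ A * (K : ℝ) ^ A := by gcongr
            _ = (K : ℝ) ^ (A + A) := by rw [pow_add]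
            _ ≤ _ := pow_le_pow_right₀ (by linarith) (by omega))
        (by
          intro t ht
          rw [hf, mem_filter] at ht
          obtain ⟨a, ha⟩ := hq _ ht.2
          refine ⟨a, ?_⟩
          rwa [eval_mul, eval_C, ← mp_insert]) (γ 0)
      rw [coeff_C_mul, sp_coeff] at this
      refine Maj.of_mul_int hK (by positivity) q (by omega) ?_ this
      rw [abs_of_nonneg (by exact_mod_cast (by omega : 0 ≤ q))]
      exact_mod_cast hq2
    have fin := hB2 K hK N (hN' _ (by omega)) (fun γ' => c (Fin.insertNth 0 (γ 0) γ')) T (filter_subset _ _)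
      (hmany.trans (mul_le_mul_of_nonneg_right (pow_le_pow_right₀ (by linarith) (by omega))
        (Nat.cast_nonneg _))) ((K : ℝ) ^ A * ε / (N : ℝ) ^ ((γ 0 : ℕ))) (by positivity)
      (by
        calc (K : ℝ) ^ A * ε / (N : ℝ) ^ ((γ 0 : ℕ)) * N ≤ (K : ℝ) ^ A * ε * N := by
              gcongr
              exact div_le_self (by positivity) (one_le_pow₀ hN1r)
          _ = (K : ℝ) ^ A * (ε * N) := by ring
          _ ≤ (K : ℝ) ^ A * (K : ℝ) ^ A := by gcongr
          _ = (K : ℝ) ^ (A + A) := by rw [pow_add]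
          _ ≤ _ := pow_le_pow_right₀ (by linarith) (by omega))
      (fun y hy => (key y hy).mono hK (by omega) (by positivity)) (Fin.removeNth 0 γ)
    rw [Fin.insertNth_self_removeNth] at fin
    refine (fin.eta (C := A) (η' := ε / (N : ℝ) ^ (∑ i, (γ i : ℕ))) hK (le_of_eq ?_)).mono hK (by omega) (by positivity)
    rw [Fin.sum_univ_succAbove _ 0, pow_add]
    simp only [Fin.removeNth]
    field_simp


/-- One-variable weight: signed primes if the flag is set, else constant. -/
noncomputable def wt (b : Bool) (x : ℤ) : ℝ := if b then ipw x else 1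

theorem ipw_nonneg (x : ℤ) : 0 ≤ ipw x := by
  rcases Int.natAbs_eq x with h | h
  · rw [h, ipw_nat]; exact npw_nonneg _
  · rw [h, ipw_neg, ipw_nat]; exact npw_nonneg _

theorem ipw_le (K N : ℕ) (hN : N ≤ 2 ^ K) (x : ℤ) (hx : x ∈ Icc (-(N : ℤ)) N) : ipw x ≤ K := by
  have h1 : npw x.natAbs ≤ K := by
    unfold npw
    rw [mem_Icc] at hx
    split_ifs
    · exact log_le_K K N hN _ (by omega)
    · positivity
  rcases Int.natAbs_eq x with h | h
  · rw [h, ipw_nat]; exact h1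
  · rw [h, ipw_neg, ipw_nat]; exact h1

theorem wt_nonneg (b : Bool) (x : ℤ) : 0 ≤ wt b x := by
  unfold wt
  split_ifs
  · exact ipw_nonneg x
  · norm_num

theorem wt_le (b : Bool) (K N : ℕ) (hK : 2 ≤ K) (hN : N ≤ 2 ^ K) (x : ℤ) (hx : x ∈ Icc (-(N : ℤ)) N) :
    wt b x ≤ K := by
  unfold wt
  split_ifs
  · exact ipw_le K N hN x hx
  · exact_mod_cast (by omega : 1 ≤ K)

theorem one_set (d : ℕ) : ∀ A : ℕ, ∃ B : ℕ, ∀ K : ℕ, 2 ≤ K → ∀ N : ℕ, K ^ B ≤ N → N ≤ 2 ^ K →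
    ∀ b : Bool,
    ∀ p : ℝ[X], p.natDegree ≤ d → ∀ s : Finset ℤ, (s : Set ℤ).OrdConnected →
    s ⊆ Icc (-(N : ℤ)) N →
    (N : ℝ) ≤ (K : ℝ) ^ A * ‖∑ x ∈ s, (wt b x : ℂ) * eC (p.eval (x : ℝ))‖ →
    ∀ j, 1 ≤ j → Maj K B (1 / (N : ℝ) ^ j) (p.coeff j) := by
  intro A
  obtain ⟨B1, hB1⟩ := weyl_set d A
  obtain ⟨B2, hB2⟩ := primes_set d A
  refine ⟨B1 + B2, fun K hK N hN hNK b p hp s hs hsN h j hj => ?_⟩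
  have hN' : ∀ b, b ≤ B1 + B2 → K ^ b ≤ N := fun b hb =>
    le_trans (Nat.pow_le_pow_right (by omega) hb) hN
  cases b
  · refine (hB1 K hK N (hN' _ (by omega)) p hp s hs hsN ?_ j hj).mono hK (by omega) (by positivity)
    simpa [wt] using h
  · refine (hB2 K hK N (hN' _ (by omega)) hNK p hp s hs hsN ?_ j hj).mono hK (by omega) (by positivity)
    simpa [wt] using h

theorem minv (d n : ℕ) : ∀ A : ℕ, ∃ B : ℕ, ∀ K : ℕ, 2 ≤ K → ∀ N : ℕ, K ^ B ≤ N → N ≤ 2 ^ K →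
    ∀ c : (Fin (n + 1) → Fin (d + 1)) → ℝ, ∀ w : Fin (n + 1) → Bool, ∀ S ⊆ zbox (n + 1) N,
    (∀ (i : Fin (n + 1)) (y : Fin n → ℤ), {t : ℤ | (i.insertNth t y : Fin (n + 1) → ℤ) ∈ S}.OrdConnected) →
    (N : ℝ) ^ (n + 1) ≤ (K : ℝ) ^ A * ‖∑ x ∈ S, ((∏ i, wt (w i) (x i) : ℝ) : ℂ) * eC (mp c x)‖ →
    ∀ γ, (∃ i, 1 ≤ (γ i : ℕ)) → Maj K B (1 / (N : ℝ) ^ (∑ i, (γ i : ℕ))) (c γ) := by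
  classical
  intro A
  obtain ⟨B1, hB1⟩ := one_set d (A + n + 2 * n + 1)
  obtain ⟨B2, hB2⟩ := mrec d n (B1 + A + n + 4)
  refine ⟨B1 + B2, fun K hK N hN hNK c w S hS hord h γ ⟨i, hi⟩ => ?_⟩
  have hKr : (2 : ℝ) ≤ K := by exact_mod_cast hK
  have hK0 : (0 : ℝ) < K := by linarith
  have hN1 : 1 ≤ N := le_trans (Nat.one_le_pow _ _ (by omega)) hN
  have hN1r : (1 : ℝ) ≤ N := by exact_mod_cast hN1
  have hN' : ∀ b, b ≤ B1 + B2 → K ^ b ≤ N := fun b hb =>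
    le_trans (Nat.pow_le_pow_right (by omega) hb) hN
  set f : (Fin n → ℤ) → Finset ℤ := fun y =>
      (Icc (-(N : ℤ)) N).filter fun t => (i.insertNth t y : Fin (n + 1) → ℤ) ∈ S with hf
  set I : (Fin n → ℤ) → ℂ := fun y => ∑ t ∈ f y, (wt (w i) t : ℂ) * eC ((sp c i y).eval (t : ℝ)) with hI
  have e1 : ∑ x ∈ S, ((∏ i, wt (w i) (x i) : ℝ) : ℂ) * eC (mp c x) =
      ∑ y ∈ zbox n N, ((∏ j, wt (w (i.succAbove j)) (y j) : ℝ) : ℂ) * I y := by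
    have : ∑ x ∈ S, ((∏ i, wt (w i) (x i) : ℝ) : ℂ) * eC (mp c x) =
      ∑ x ∈ zbox (n + 1) N, if x ∈ S then ((∏ i, wt (w i) (x i) : ℝ) : ℂ) * eC (mp c x) else 0 := by
      rw [← sum_filter, filter_mem_eq_inter, inter_eq_right.2 hS]
    rw [this, zbox_sum n N i]
    refine sum_congr rfl fun y _ => ?_
    rw [hI, ← sum_filter, mul_sum]
    refine sum_congr rfl fun t _ => ?_
    rw [Fin.prod_univ_succAbove _ i, mp_insert]
    simp only [Fin.insertNth_apply_same, Fin.insertNth_apply_succAbove]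
    push_cast
    ring
  have e2 : ‖∑ y ∈ zbox n N, ((∏ j, wt (w (i.succAbove j)) (y j) : ℝ) : ℂ) * I y‖ ≤
      (K : ℝ) ^ n * ∑ y ∈ zbox n N, ‖I y‖ := by
    rw [mul_sum]
    refine (norm_sum_le _ _).trans (sum_le_sum fun y hy => ?_)
    rw [norm_mul, Complex.norm_real, Real.norm_eq_abs, abs_of_nonneg (prod_nonneg fun j _ => wt_nonneg _ _)]
    gcongr
    rw [mem_zbox] at hy
    refine (prod_le_prod (fun j _ => wt_nonneg _ _) fun j _ => wt_le _ K N hK hNK _ (hy j)).trans ?_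
    simp
  have hfs : ∀ y, f y ⊆ Icc (-(N : ℤ)) N := fun y => filter_subset _ _
  have hIle : ∀ y, ‖I y‖ ≤ (K : ℝ) ^ 3 * N := by
    intro y
    have : ‖I y‖ ≤ ∑ t ∈ f y, (K : ℝ) := by
      refine (norm_sum_le _ _).trans (sum_le_sum fun t ht => ?_)
      rw [norm_mul, eC_norm, mul_one, Complex.norm_real, Real.norm_eq_abs, abs_of_nonneg (wt_nonneg _ _)]
      exact wt_le _ K N hK hNK _ (hfs y ht)
    rw [sum_const, nsmul_eq_mul] at this
    have h2 : ((f y).card : ℝ) ≤ 4 * N :=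
      (Nat.cast_le.2 (card_filter_le _ _)).trans (card_Icc_le N hN1 _ _ le_rfl le_rfl)
    calc ‖I y‖ ≤ (4 * N) * K := this.trans (by gcongr)
      _ ≤ ((K : ℝ) ^ 2 * N) * K := by gcongr; nlinarith
      _ = _ := by ring
  have hmany := many (zbox n N) (fun y => ‖I y‖) K (A + n) (2 * n) 3 hK ((N : ℝ) ^ n) N
      (by positivity) (by positivity) (zbox_card n N K hK hN1) (fun y _ => hIle y)
      (by
        rw [← pow_succ]
        refine h.trans ?_
        rw [e1, pow_add, mul_assoc]
        gcongr)
  set T := (zbox n N).filter fun y => (N : ℝ) ≤ (K : ℝ) ^ (A + n + 2 * n + 1) * ‖I y‖ with hT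
  have key : ∀ y ∈ T, Maj K B1 (1 / (N : ℝ) ^ ((γ i : ℕ)))
      (mp (fun γ' => c (i.insertNth (γ i) γ')) y) := by
    intro y hy
    rw [hT, mem_filter] at hy
    rw [← sp_coeff]
    refine hB1 K hK N (hN' _ (by omega)) hNK (w i) (sp c i y) (sp_natDegree c i y) (f y) ?_ (hfs y) hy.2 _ hi
    constructor
    intro a ha b hb t ht
    simp only [hf, coe_filter, Set.mem_setOf_eq, mem_Icc] at ha hb ⊢
    obtain ⟨t1, t2⟩ := ht
    exact ⟨⟨by omega, by omega⟩, (hord i y).out ha.2 hb.2 ⟨t1, t2⟩⟩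
  have fin := hB2 K hK N (hN' _ (by omega)) (fun γ' => c (i.insertNth (γ i) γ')) T (filter_subset _ _)
      (hmany.trans (mul_le_mul_of_nonneg_right (pow_le_pow_right₀ (by linarith) (by omega))
        (Nat.cast_nonneg _))) (1 / (N : ℝ) ^ ((γ i : ℕ))) (by positivity)
      (by
        refine le_trans ?_ (one_le_pow₀ (by linarith))
        rw [one_div, inv_mul_le_iff₀ (by positivity), mul_one]
        calc (N : ℝ) = (N : ℝ) ^ 1 := (pow_one _).symm
          _ ≤ _ := pow_le_pow_right₀ hN1r hi)
      (fun y hy => (key y hy).mono hK (by omega) (by positivity)) (i.removeNth γ)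
  rw [Fin.insertNth_self_removeNth] at fin
  have e3 : 1 / (N : ℝ) ^ ((γ i : ℕ)) / (N : ℝ) ^ (∑ j, (i.removeNth γ j : ℕ)) = 1 / (N : ℝ) ^ (∑ i, (γ i : ℕ)) := by
    rw [Fin.sum_univ_succAbove _ i, pow_add]
    simp only [Fin.removeNth]
    field_simp
  rw [e3] at fin
  exact fin.mono hK (by omega) (by positivity)


theorem primeWeight_eq {k : ℕ} (k' : ℕ) (v : Fin k → ℤ) :
    primeWeight k' v = ∏ i : Fin k, wt (decide (k' ≤ (i : ℕ))) (v i) := by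
  unfold primeWeight wt ipw
  by_cases h : ∀ i : Fin k, k' ≤ (i : ℕ) → Prime (v i)
  · rw [Set.indicator_of_mem (by exact h), one_mul]
    refine prod_congr rfl fun i _ => ?_
    by_cases hi : k' ≤ (i : ℕ)
    · simp [hi, h i hi]
    · simp [hi]
  · rw [Set.indicator_of_notMem (by exact h), zero_mul]
    push Not at h
    obtain ⟨i, hi, hp⟩ := h
    symm
    refine prod_eq_zero (mem_univ i) ?_
    simp [hi, hp]

theorem primeWeight_nonneg {k : ℕ} (k' : ℕ) (v : Fin k → ℤ) : 0 ≤ primeWeight k' v := by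
  rw [primeWeight_eq]
  exact prod_nonneg fun i _ => wt_nonneg _ _

open Classical in
/-- Lattice points of the dilate. -/
noncomputable def omPts {k : ℕ} (Ω : Set (EuclideanSpace ℝ (Fin k))) (N : ℕ) : Finset (Fin k → ℤ) :=
  (zbox k N).filter fun v => zEmbed v ∈ dilate Ω (N : ℝ)

theorem mem_omPts {k : ℕ} (Ω : Set (EuclideanSpace ℝ (Fin k))) (hball' : Ω ⊆ Metric.ball 0 1) (N : ℕ)
    (hN : 1 ≤ N) (v : Fin k → ℤ) : v ∈ omPts Ω N ↔ zEmbed v ∈ dilate Ω (N : ℝ) := by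
  classical
  unfold omPts
  rw [mem_filter, and_iff_right_iff_imp]
  intro h
  rw [mem_zbox]
  intro i
  have h1 := hball' h
  rw [mem_ball_zero_iff] at h1
  have h2 := (PiLp.norm_apply_le ((N : ℝ)⁻¹ • zEmbed v) i).trans_lt h1
  have hN0 : (0 : ℝ) < N := by exact_mod_cast hN
  have h3 : |(v i : ℝ)| < N := by
    have : ((N : ℝ)⁻¹ • zEmbed v) i = (N : ℝ)⁻¹ * (v i : ℝ) := rfl
    rw [this, Real.norm_eq_abs, abs_mul, abs_of_pos (by positivity), inv_mul_lt_iff₀ hN0, mul_one] at h2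
    exact h2
  have h4 : |v i| < (N : ℤ) := by exact_mod_cast h3
  rw [abs_lt] at h4
  rw [mem_Icc]
  omega

theorem cheby_eq {k : ℕ} (k' : ℕ) (Ω : Set (EuclideanSpace ℝ (Fin k))) (hball' : Ω ⊆ Metric.ball 0 1)
    (N : ℕ) (hN : 1 ≤ N) : cheby k' Ω N = ∑ v ∈ omPts Ω N, primeWeight k' v := by
  unfold cheby
  rw [tsum_eq_sum (s := omPts Ω N)]
  · refine sum_congr rfl fun v hv => ?_
    rw [Set.indicator_of_mem ((mem_omPts Ω hball' N hN v).1 hv), mul_one]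
  · intro v hv
    rw [mem_omPts Ω hball' N hN v] at hv
    rw [Set.indicator_of_notMem hv, mul_zero]

theorem disc_eq {k : ℕ} (Γ : Finset (Fin k → ℕ)) (k' : ℕ) (Ω : Set (EuclideanSpace ℝ (Fin k)))
    (hball' : Ω ⊆ Metric.ball 0 1) (N : ℕ) (hN : 1 ≤ N) (ξ : (Fin k → ℕ) → ℝ) :
    discMultA Γ k' Ω N ξ = ((cheby k' Ω N : ℝ) : ℂ)⁻¹ *
      ∑ v ∈ omPts Ω N, (primeWeight k' v : ℂ) * eC (qPair Γ ξ v) := by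
  unfold discMultA
  congr 1
  rw [tsum_eq_sum (s := omPts Ω N)]
  · refine sum_congr rfl fun v hv => ?_
    rw [Set.indicator_of_mem ((mem_omPts Ω hball' N hN v).1 hv), mul_one]
  · intro v hv
    rw [mem_omPts Ω hball' N hN v] at hv
    rw [Set.indicator_of_notMem hv, mul_zero]
    simp

theorem cheby_nonneg {k : ℕ} (k' : ℕ) (Ω : Set (EuclideanSpace ℝ (Fin k))) (hball' : Ω ⊆ Metric.ball 0 1)
    (N : ℕ) (hN : 1 ≤ N) : 0 ≤ cheby k' Ω N := by
  rw [cheby_eq k' Ω hball' N hN]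
  exact sum_nonneg fun v _ => primeWeight_nonneg k' v

theorem disc_le_one {k : ℕ} (Γ : Finset (Fin k → ℕ)) (k' : ℕ) (Ω : Set (EuclideanSpace ℝ (Fin k)))
    (hball' : Ω ⊆ Metric.ball 0 1) (N : ℕ) (hN : 1 ≤ N) (ξ : (Fin k → ℕ) → ℝ) :
    ‖discMultA Γ k' Ω N ξ‖ ≤ 1 := by
  rw [disc_eq Γ k' Ω hball' N hN, norm_mul, norm_inv, Complex.norm_real, Real.norm_eq_abs,
    abs_of_nonneg (cheby_nonneg k' Ω hball' N hN)]
  have : ‖∑ v ∈ omPts Ω N, (primeWeight k' v : ℂ) * eC (qPair Γ ξ v)‖ ≤ cheby k' Ω N := by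
    rw [cheby_eq k' Ω hball' N hN]
    refine (norm_sum_le _ _).trans (sum_le_sum fun v _ => ?_)
    rw [norm_mul, eC_norm, mul_one, Complex.norm_real, Real.norm_eq_abs,
      abs_of_nonneg (primeWeight_nonneg k' v)]
  exact inv_mul_le_one_of_le₀ this (cheby_nonneg k' Ω hball' N hN)

theorem omPts_ord {n : ℕ} (Ω : Set (EuclideanSpace ℝ (Fin (n + 1)))) (hconv : Convex ℝ Ω)
    (hball' : Ω ⊆ Metric.ball 0 1) (N : ℕ) (hN : 1 ≤ N) (i : Fin (n + 1)) (y : Fin n → ℤ) :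
    {t : ℤ | (i.insertNth t y : Fin (n + 1) → ℤ) ∈ omPts Ω N}.OrdConnected := by
  have hc : Convex ℝ {s : ℝ | (N : ℝ)⁻¹ • (WithLp.toLp 2 (i.insertNth s (fun j => (y j : ℝ)) : Fin (n + 1) → ℝ)
      : EuclideanSpace ℝ (Fin (n + 1))) ∈ Ω} := by
    intro s hs s' hs' a b ha hb hab
    have := hconv hs hs' ha hb hab
    rw [Set.mem_setOf_eq]
    convert this using 1
    ext j
    rcases Fin.eq_self_or_eq_succAbove i j with rfl | ⟨j, rfl⟩
    · simp
      ring
    · simp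
      rw [← add_mul, hab, one_mul]
  have e : ∀ t : ℤ, (i.insertNth t y : Fin (n + 1) → ℤ) ∈ omPts Ω N ↔ (N : ℝ)⁻¹ • (WithLp.toLp 2 (i.insertNth (t : ℝ) (fun j => (y j : ℝ)) : Fin (n + 1) → ℝ)
      : EuclideanSpace ℝ (Fin (n + 1))) ∈ Ω := by
    intro t
    rw [mem_omPts Ω hball' N hN]
    unfold dilate zEmbed
    rw [Set.mem_setOf_eq]
    have : (fun j => (((i.insertNth t y : Fin (n + 1) → ℤ) j : ℤ) : ℝ)) =
        (i.insertNth (t : ℝ) (fun j => (y j : ℝ)) : Fin (n + 1) → ℝ) := by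
      ext j
      rcases Fin.eq_self_or_eq_succAbove i j with rfl | ⟨j, rfl⟩ <;> simp
    rw [this]
  constructor
  intro a ha b hb t ht
  rw [Set.mem_setOf_eq, e] at ha hb ⊢
  exact hc.ordConnected.out ha hb ⟨by exact_mod_cast ht.1, by exact_mod_cast ht.2⟩

theorem theta_lower (K M : ℕ) (hK : 4 ≤ K) (hM : K ^ 6 ≤ M) (hMK : M ≤ 2 ^ K) :
    (M : ℝ) ≤ K * Chebyshev.theta M := by
  have hKr : (4 : ℝ) ≤ K := by exact_mod_cast hK
  have hMr : (K : ℝ) ^ 6 ≤ M := by exact_mod_cast hM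
  have h1 := Chebyshev.theta_ge M
  have h2 := log_le_K K M hMK M le_rfl
  have h3 : Real.log ((M : ℝ) + 1) ≤ K + 1 := by
    have := log_le_K (K + 1) (M + 1) (by rw [pow_succ]; have := Nat.one_le_two_pow (n := K); omega) (M + 1) le_rfl
    exact_mod_cast this
  have hs : (K : ℝ) ^ 3 ≤ √M := by
    rw [Real.le_sqrt (by positivity) (by positivity), ← pow_mul]
    exact hMr
  have e : (M : ℝ) = √M * √M := (Real.mul_self_sqrt (by positivity)).symm
  have hK2 : (16 : ℝ) ≤ (K : ℝ) ^ 2 := by nlinarith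
  have h4 : √M * (16 * K) ≤ M := by
    nth_rw 2 [e]
    gcongr
    refine le_trans ?_ hs
    calc (16 : ℝ) * K ≤ (K : ℝ) ^ 2 * K := by gcongr
      _ = _ := by ring
  have h5 : 2 * √M * Real.log M ≤ M / 8 := by
    have : 2 * √M * Real.log M ≤ 2 * √M * K := by gcongr
    linarith
  have h6 : (K : ℝ) + 1 ≤ M / 8 := by
    have : (16 : ℝ) * K ≤ (K : ℝ) ^ 6 := by
      calc (16 : ℝ) * K ≤ (K : ℝ) ^ 2 * K := by gcongr
        _ = (K : ℝ) ^ 3 := by ring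
        _ ≤ _ := pow_le_pow_right₀ (by linarith) (by norm_num)
    linarith
  have h7 := Real.log_two_gt_d9
  have h8 : (M : ℝ) * 0.69 ≤ M * Real.log 2 := by gcongr; linarith
  have h9 : (M : ℝ) / 4 ≤ Chebyshev.theta M := by
    have : (0 : ℝ) ≤ M := by positivity
    linarith
  have h10 : (4 : ℝ) * Chebyshev.theta M ≤ K * Chebyshev.theta M := by
    have : (0 : ℝ) ≤ Chebyshev.theta M := le_trans (by positivity) h9
    gcongr
  linarith

theorem wt_sum_lower (b : Bool) (K M : ℕ) (hK : 4 ≤ K) (hM : K ^ 6 ≤ M) (hMK : M ≤ 2 ^ K) :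
    (M : ℝ) / K ≤ ∑ x ∈ Icc (-(M : ℤ)) M, wt b x := by
  have hKr : (4 : ℝ) ≤ K := by exact_mod_cast hK
  rw [div_le_iff₀ (by linarith)]
  cases b
  · simp only [wt]
    simp only [Bool.false_eq_true, if_false, sum_const, Int.card_Icc, nsmul_eq_mul, mul_one]
    have : (M : ℝ) ≤ (((M : ℤ) + 1 - -(M : ℤ)).toNat : ℝ) := by
      exact_mod_cast (by omega : M ≤ ((M : ℤ) + 1 - -(M : ℤ)).toNat)
    nlinarith
  · have h := theta_lower K M hK hM hMK
    refine h.trans ?_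
    rw [mul_comm]
    gcongr
    rw [← npw_sum]
    simp only [wt, if_true]
    calc ∑ n ∈ range (M + 1), npw n = ∑ x ∈ (range (M + 1)).map Nat.castEmbedding, ipw x := by
          rw [sum_map]
          exact sum_congr rfl fun n _ => (ipw_nat n).symm
      _ ≤ _ := by
          refine sum_le_sum_of_subset_of_nonneg ?_ fun x _ _ => ipw_nonneg x
          intro x hx
          simp only [mem_map, mem_range, Nat.castEmbedding_apply] at hx
          obtain ⟨n, hn, rfl⟩ := hx
          rw [mem_Icc]
          omega

theorem cheby_lower {k : ℕ} (k' : ℕ) (Ω : Set (EuclideanSpace ℝ (Fin k))) (cΩ : ℝ) (hc0 : 0 < cΩ)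
    (hball : Metric.ball 0 cΩ ⊆ Ω) (hball' : Ω ⊆ Metric.ball 0 1) :
    ∃ K0 : ℕ, ∀ K : ℕ, K0 ≤ K → ∀ N : ℕ, K ^ 7 ≤ N → N ≤ 2 ^ K →
      (N : ℝ) ^ k ≤ (K : ℝ) ^ (2 * k) * cheby k' Ω N := by
  obtain ⟨D, hD⟩ := exists_nat_gt ((k : ℝ) / cΩ)
  refine ⟨2 * D + 4, fun K hK N hN hNK => ?_⟩
  have hKr : (4 : ℝ) ≤ K := by exact_mod_cast (by omega : 4 ≤ K)
  have hK0 : (0 : ℝ) < K := by linarith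
  have hN1 : 1 ≤ N := le_trans (Nat.one_le_pow _ _ (by omega)) hN
  have hN1r : (1 : ℝ) ≤ N := by exact_mod_cast hN1
  have hD0 : 1 ≤ D := by
    by_contra h
    have : D = 0 := by omega
    subst this
    have : (0 : ℝ) ≤ k / cΩ := by positivity
    simp at hD
    linarith
  set M := N / D with hM
  have hMD : M * D ≤ N := Nat.div_mul_le_self N D
  have hMK : N ≤ K * M := by
    have h1 : N < D * (M + 1) := by
      rw [hM]
      exact Nat.lt_mul_div_succ N hD0
    have h2 : K ≤ N := le_trans (Nat.le_self_pow (by norm_num) K) hN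
    have h3 : 1 ≤ M := (Nat.one_le_div_iff hD0).2 (by omega)
    nlinarith
  have hM6 : K ^ 6 ≤ M := by
    have : K * K ^ 6 ≤ K * M := le_trans (le_of_eq (by ring)) (hN.trans hMK)
    exact Nat.le_of_mul_le_mul_left this (by omega)
  have hMN : M ≤ N := Nat.div_le_self _ _
  have hsub : zbox k M ⊆ omPts Ω N := by
    intro v hv
    rw [mem_omPts Ω hball' N hN1]
    refine hball ?_
    rw [mem_ball_zero_iff, norm_smul, norm_inv, Real.norm_eq_abs, abs_of_nonneg (by positivity),
      inv_mul_lt_iff₀ (by positivity)]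
    rw [mem_zbox] at hv
    have h1 : ‖zEmbed v‖ ≤ ∑ i, |(v i : ℝ)| := by
      rw [EuclideanSpace.norm_eq, Real.sqrt_le_left (sum_nonneg fun _ _ => abs_nonneg _)]
      exact sum_sq_le_sq_sum_of_nonneg fun i _ => abs_nonneg _
    have h2 : ∑ i, |(v i : ℝ)| ≤ k * M := by
      calc ∑ i, |(v i : ℝ)| ≤ ∑ i : Fin k, (M : ℝ) := by
            refine sum_le_sum fun i _ => ?_
            have := hv i
            rw [mem_Icc] at this
            exact_mod_cast abs_le.2 this
        _ = _ := by simp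
    have h3 : (k : ℝ) < D * cΩ := by rwa [div_lt_iff₀ hc0] at hD
    have h4 : (M : ℝ) * D ≤ N := by exact_mod_cast hMD
    have h5 : (1 : ℝ) ≤ M := by
      exact_mod_cast le_trans (Nat.one_le_pow _ _ (by omega)) hM6
    calc ‖zEmbed v‖ ≤ k * M := h1.trans h2
      _ < (D * cΩ) * M := by gcongr
      _ = (M * D) * cΩ := by ring
      _ ≤ N * cΩ := by gcongr
  have h1 : ∏ i : Fin k, ∑ x ∈ Icc (-(M : ℤ)) M, wt (decide (k' ≤ (i : ℕ))) x ≤ cheby k' Ω N := by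
    rw [prod_univ_sum, cheby_eq k' Ω hball' N hN1]
    refine le_trans (le_of_eq ?_) (sum_le_sum_of_subset_of_nonneg hsub fun v _ _ => primeWeight_nonneg k' v)
    refine sum_congr rfl fun v _ => (primeWeight_eq k' v).symm
  have h2 : ((N : ℝ) / (K : ℝ) ^ 2) ^ k ≤ ∏ i : Fin k, ∑ x ∈ Icc (-(M : ℤ)) M, wt (decide (k' ≤ (i : ℕ))) x := by
    calc ((N : ℝ) / (K : ℝ) ^ 2) ^ k = ∏ i : Fin k, ((N : ℝ) / (K : ℝ) ^ 2) := by
          rw [prod_const, card_univ, Fintype.card_fin]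
      _ ≤ _ := by
        refine prod_le_prod (fun i _ => by positivity) fun i _ => ?_
        refine le_trans ?_ (wt_sum_lower _ K M (by omega) hM6 (hMN.trans hNK))
        rw [div_le_div_iff₀ (by positivity) hK0]
        have : (N : ℝ) ≤ K * M := by exact_mod_cast hMK
        nlinarith
  have h3 := h2.trans h1
  rw [div_pow, ← pow_mul, div_le_iff₀ (by positivity)] at h3
  linarith


theorem arith (K B g N : ℕ) (hN : 1 ≤ N) (Q x : ℝ) (hx : Maj K B (1 / (N : ℝ) ^ g) x) (a q : ℤ)
    (hco : IsCoprime a q) (hq0 : 1 ≤ q) (hQ0 : 0 < Q) (hQ : 2 * (K : ℝ) ^ B < Q) (hQq : Q ≤ q)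
    (hqN : (q : ℝ) ≤ (N : ℝ) ^ g * Q⁻¹) (hxa : |x - (a : ℝ) / (q : ℝ)| ≤ 1 / (q : ℝ) ^ 2) : False := by
  obtain ⟨q', a', h1, h2, h3⟩ := hx
  have hqr : (1 : ℝ) ≤ q := by exact_mod_cast hq0
  have hq'r : (1 : ℝ) ≤ q' := by exact_mod_cast h1
  have h2r : (q' : ℝ) ≤ (K : ℝ) ^ B := by exact_mod_cast h2
  have hNr : (1 : ℝ) ≤ N := by exact_mod_cast hN
  have hNg : (0 : ℝ) < (N : ℝ) ^ g := by positivity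
  have e : ((q' * a - a' * q : ℤ) : ℝ) = q * (q' * x - a') - q' * q * (x - a / q) := by
    push_cast
    field_simp
    ring
  have b1 : |(q : ℝ) * (q' * x - a')| < 1 / 2 := by
    rw [abs_mul, abs_of_pos (by linarith)]
    calc (q : ℝ) * |q' * x - a'| ≤ ((N : ℝ) ^ g * Q⁻¹) * ((K : ℝ) ^ B * (1 / (N : ℝ) ^ g)) := by gcongr
      _ = (K : ℝ) ^ B / Q := by field_simp
      _ < 1 / 2 := by rw [div_lt_div_iff₀ hQ0 (by norm_num)]; linarith
  have b2 : |(q' : ℝ) * q * (x - a / q)| < 1 / 2 := by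
    rw [abs_mul, abs_of_pos (by nlinarith)]
    calc (q' : ℝ) * q * |x - a / q| ≤ (K : ℝ) ^ B * q * (1 / (q : ℝ) ^ 2) := by gcongr
      _ = (K : ℝ) ^ B / q := by field_simp
      _ < 1 / 2 := by rw [div_lt_div_iff₀ (by linarith) (by norm_num)]; linarith
  have b3 : |((q' * a - a' * q : ℤ) : ℝ)| < 1 := by
    rw [e]
    have := abs_sub ((q : ℝ) * (q' * x - a')) ((q' : ℝ) * q * (x - a / q))
    linarith
  have b4 : q' * a - a' * q = 0 := by
    have : |q' * a - a' * q| < 1 := by exact_mod_cast b3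
    exact Int.abs_lt_one_iff.1 this
  have hd : q ∣ q' := by
    have : q ∣ q' * a := ⟨a', by linarith⟩
    exact hco.symm.dvd_of_dvd_mul_right this
  have hle := Int.le_of_dvd (by omega) hd
  have hler : (q : ℝ) ≤ q' := by exact_mod_cast hle
  have : (0 : ℝ) ≤ (K : ℝ) ^ B := by positivity
  linarith

theorem mult_maj {m : ℕ} (Γ : Finset (Fin (m + 1) → ℕ)) (h0 : (0 : Fin (m + 1) → ℕ) ∉ Γ) (k' : ℕ)
    (Ω : Set (EuclideanSpace ℝ (Fin (m + 1)))) (cΩ : ℝ)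
    (hc0 : 0 < cΩ) (hconv : Convex ℝ Ω)
    (hball : Metric.ball 0 cΩ ⊆ Ω) (hball' : Ω ⊆ Metric.ball 0 1) (A : ℕ) :
    ∃ B K0 : ℕ, ∀ K : ℕ, K0 ≤ K → ∀ N : ℕ, K ^ B ≤ N → N ≤ 2 ^ K → ∀ ξ : (Fin (m + 1) → ℕ) → ℝ,
      1 < (K : ℝ) ^ A * ‖discMultA Γ k' Ω N ξ‖ → ∀ γ ∈ Γ, Maj K B (1 / (N : ℝ) ^ (∑ i, γ i)) (ξ γ) := by
  classical
  obtain ⟨d, hd⟩ : ∃ d : ℕ, ∀ γ ∈ Γ, ∀ i, γ i ≤ d := by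
    refine ⟨∑ γ ∈ Γ, ∑ i, γ i, fun γ hγ i => ?_⟩
    exact (single_le_sum (f := γ) (fun _ _ => Nat.zero_le _) (mem_univ i)).trans
      (single_le_sum (f := fun γ : Fin (m + 1) → ℕ => ∑ i, γ i) (fun _ _ => Nat.zero_le _) hγ)
  obtain ⟨B, hB⟩ := minv d m (A + 2 * (m + 1))
  obtain ⟨K0, hK0⟩ := cheby_lower k' Ω cΩ hc0 hball hball'
  refine ⟨B + 7, K0 + 4, fun K hK N hN hNK ξ h γ hγ => ?_⟩
  have hN' : ∀ b, b ≤ B + 7 → K ^ b ≤ N := fun b hb =>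
    le_trans (Nat.pow_le_pow_right (by omega) hb) hN
  have hN1 : 1 ≤ N := le_trans (Nat.one_le_pow _ _ (by omega)) hN
  have hN1r : (1 : ℝ) ≤ N := by exact_mod_cast hN1
  have hKr : (4 : ℝ) ≤ K := by exact_mod_cast (by omega : 4 ≤ K)
  have hch := hK0 K (by omega) N (hN' _ (by omega)) hNK
  have hpos : 0 < cheby k' Ω N := by
    by_contra hcon
    have : (0 : ℝ) < (N : ℝ) ^ (m + 1) := by positivity
    have h2 : (K : ℝ) ^ (2 * (m + 1)) * cheby k' Ω N ≤ 0 :=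
      mul_nonpos_of_nonneg_of_nonpos (by positivity) (not_lt.1 hcon)
    linarith
  set c : (Fin (m + 1) → Fin (d + 1)) → ℝ := fun δ =>
    if (fun i => (δ i : ℕ)) ∈ Γ then ξ (fun i => (δ i : ℕ)) else 0 with hc
  have hq : ∀ v, qPair Γ ξ v = mp c v := by
    intro v
    unfold qPair mp
    simp only [hc, ite_mul, zero_mul]
    rw [← sum_filter]
    refine sum_bij' (fun γ hγ i => (⟨γ i, Nat.lt_succ_of_le (hd γ hγ i)⟩ : Fin (d + 1)))
      (fun δ _ i => (δ i : ℕ)) ?_ ?_ ?_ ?_ ?_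
    · intro γ hγ
      simpa using hγ
    · intro δ hδ
      simpa using hδ
    · intro γ hγ; rfl
    · intro δ hδ; rfl
    · intro γ hγ; rfl
  rw [disc_eq Γ k' Ω hball' N hN1, norm_mul, norm_inv, Complex.norm_real, Real.norm_eq_abs,
    abs_of_pos hpos] at h
  set S := ∑ v ∈ omPts Ω N, (primeWeight k' v : ℂ) * eC (qPair Γ ξ v) with hS
  have hS' : S = ∑ v ∈ omPts Ω N, ((∏ i : Fin (m + 1), wt (decide (k' ≤ (i : ℕ))) (v i) : ℝ) : ℂ) * eC (mp c v) := by
    refine sum_congr rfl fun v _ => ?_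
    rw [primeWeight_eq, hq]
  have h3 : cheby k' Ω N ≤ (K : ℝ) ^ A * ‖S‖ := by
    have e : (K : ℝ) ^ A * ((cheby k' Ω N)⁻¹ * ‖S‖) = ((K : ℝ) ^ A * ‖S‖) / cheby k' Ω N := by
      rw [div_eq_mul_inv]; ring
    rw [e, lt_div_iff₀ hpos, one_mul] at h
    exact h.le
  have h4 : (N : ℝ) ^ (m + 1) ≤ (K : ℝ) ^ (A + 2 * (m + 1)) * ‖S‖ := by
    refine hch.trans ?_
    rw [add_comm A, pow_add, mul_assoc]
    gcongr
  rw [hS'] at h4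
  have hsub : omPts Ω N ⊆ zbox (m + 1) N := filter_subset _ _
  have fin := hB K (by omega) N (hN' _ (by omega)) hNK c (fun i => decide (k' ≤ (i : ℕ))) (omPts Ω N) hsub
    (omPts_ord Ω hconv hball' N hN1) h4 (fun i => (⟨γ i, Nat.lt_succ_of_le (hd γ hγ i)⟩ : Fin (d + 1)))
    (by
      by_contra! hcon
      apply h0
      convert hγ
      ext i
      have := hcon i
      simp only at this
      simp; omega)
  have e : c (fun i => (⟨γ i, Nat.lt_succ_of_le (hd γ hγ i)⟩ : Fin (d + 1))) = ξ γ := by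
    simp only [hc]
    rw [if_pos hγ]
  rw [e] at fin
  exact fin.mono (by omega) (by omega) (by positivity)

theorem Nseq_two (τ : ℝ) (n : ℕ) (hn : 1 ≤ n) (hτ : 0 < τ) : 2 ≤ Nseq τ n := by
  unfold Nseq
  refine Nat.le_floor ?_
  have h1 : (1 : ℝ) ≤ (n : ℝ) ^ τ := Real.one_le_rpow (by exact_mod_cast hn) hτ.le
  calc ((2 : ℕ) : ℝ) = (2 : ℝ) ^ (1 : ℝ) := by simp
    _ ≤ _ := Real.rpow_le_rpow_of_exponent_le (by norm_num) h1

theorem Nseq_one (τ : ℝ) (n : ℕ) (hτ : 0 < τ) : 1 ≤ Nseq τ n := by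
  rcases Nat.eq_zero_or_pos n with rfl | h
  · simp [Nseq, Real.zero_rpow hτ.ne']
  · exact (by norm_num : 1 ≤ 2).trans (Nseq_two τ n h hτ)

theorem Nseq_mono (τ : ℝ) (n : ℕ) (hτ : 0 < τ) : Nseq τ (n - 1) ≤ Nseq τ n := by
  unfold Nseq
  refine Nat.floor_le_floor (Real.rpow_le_rpow_of_exponent_le (by norm_num)
    (Real.rpow_le_rpow (by positivity) (by exact_mod_cast Nat.sub_le n 1) hτ.le))

theorem Nseq_step (τ : ℝ) (n : ℕ) (hn : 1 ≤ n) (hτ : 0 < τ) (hτ1 : τ ≤ 1) :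
    Nseq τ n ≤ 4 * Nseq τ (n - 1) := by
  have h1 := Nseq_one τ (n - 1) hτ
  have h2 : (n : ℝ) ^ τ ≤ ((n - 1 : ℕ) : ℝ) ^ τ + 1 := by
    have e : (n : ℝ) = ((n - 1 : ℕ) : ℝ) + 1 := by
      exact_mod_cast (by omega : n = (n - 1) + 1)
    have := Real.rpow_add_le_add_rpow (p := τ) (a := ((n - 1 : ℕ) : ℝ)) (b := 1) (by positivity) (by norm_num) hτ.le hτ1
    rw [← e, Real.one_rpow] at this
    exact this
  have h3 : (2 : ℝ) ^ ((n : ℝ) ^ τ) ≤ 2 * (2 : ℝ) ^ (((n - 1 : ℕ) : ℝ) ^ τ) := by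
    refine (Real.rpow_le_rpow_of_exponent_le (by norm_num) h2).trans (le_of_eq ?_)
    rw [Real.rpow_add (by norm_num), Real.rpow_one, mul_comm]
  have h4 : (2 : ℝ) ^ (((n - 1 : ℕ) : ℝ) ^ τ) < Nseq τ (n - 1) + 1 := Nat.lt_floor_add_one _
  have h5 : (Nseq τ n : ℝ) ≤ (2 : ℝ) ^ ((n : ℝ) ^ τ) := Nat.floor_le (by positivity)
  have h6 : (1 : ℝ) ≤ Nseq τ (n - 1) := by exact_mod_cast h1
  have : (Nseq τ n : ℝ) ≤ 4 * Nseq τ (n - 1) := by linarith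
  exact_mod_cast this

theorem Nseq_tendsto (τ : ℝ) (hτ : 0 < τ) : Filter.Tendsto (Nseq τ) Filter.atTop Filter.atTop := by
  unfold Nseq
  refine tendsto_nat_floor_atTop.comp ?_
  refine (tendsto_rpow_atTop_of_base_gt_one 2 (by norm_num)).comp ?_
  exact (tendsto_rpow_atTop hτ).comp tendsto_natCast_atTop_atTop

theorem log_upper (N : ℕ) (hN : 2 ≤ N) : ((Nat.log 2 N + 1 : ℕ) : ℝ) ≤ 4 * Real.log N := by
  have h1 : 1 ≤ Nat.log 2 N := Nat.le_log_of_pow_le (by norm_num) (by simpa using hN)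
  have h2 : 2 ^ Nat.log 2 N ≤ N := Nat.pow_log_le_self 2 (by omega)
  have h3 : ((2 : ℝ) ^ Nat.log 2 N) ≤ N := by exact_mod_cast h2
  have h4 := Real.log_le_log (by positivity) h3
  rw [Real.log_pow] at h4
  have h5 := Real.log_two_gt_d9
  have h6 : (1 : ℝ) ≤ Nat.log 2 N := by exact_mod_cast h1
  have h7 : (Nat.log 2 N : ℝ) * (1 / 2) ≤ (Nat.log 2 N : ℝ) * Real.log 2 := by gcongr; linarith
  push_cast
  linarith

theorem large (B K0 : ℕ) (R : ℝ) : ∃ N0 : ℕ, ∀ N : ℕ, N0 ≤ N →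
    K0 ≤ Nat.log 2 N + 1 ∧ 4 * (Nat.log 2 N + 1) ^ B ≤ N ∧ R < Real.log N := by
  have h1 : ∀ᶠ N : ℕ in Filter.atTop, R < Real.log N :=
    (Real.tendsto_log_atTop.comp tendsto_natCast_atTop_atTop).eventually_gt_atTop R
  have h2 : ∀ᶠ N : ℕ in Filter.atTop, 2 ^ K0 ≤ N := Filter.eventually_ge_atTop _
  have h3 : ∀ᶠ N : ℕ in Filter.atTop, |Real.log N ^ B| ≤ (1 / (4 * 4 ^ B)) * |(N : ℝ)| := by
    have := (Real.isLittleO_pow_log_id_atTop (n := B)).comp_tendsto tendsto_natCast_atTop_atTop (k := (Nat.cast : ℕ → ℝ))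
    exact this.bound (by positivity : (0 : ℝ) < 1 / (4 * 4 ^ B))
  obtain ⟨N0, hN0⟩ := Filter.eventually_atTop.1 ((h1.and h2).and h3)
  refine ⟨N0 + 2, fun N hN => ?_⟩
  obtain ⟨⟨a1, a2⟩, a3⟩ := hN0 N (by omega)
  refine ⟨?_, ?_, a1⟩
  · have := Nat.le_log_of_pow_le (by norm_num) a2
    omega
  · have hk := log_upper N (by omega)
    rw [abs_of_nonneg (by positivity), abs_of_nonneg (by positivity)] at a3
    have : (4 : ℝ) * ((Nat.log 2 N + 1 : ℕ) : ℝ) ^ B ≤ N := by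
      calc (4 : ℝ) * ((Nat.log 2 N + 1 : ℕ) : ℝ) ^ B ≤ 4 * (4 * Real.log N) ^ B := by gcongr
        _ = 4 * 4 ^ B * Real.log N ^ B := by rw [mul_pow]; ring
        _ ≤ 4 * 4 ^ B * ((1 / (4 * 4 ^ B)) * N) := by gcongr
        _ = N := by field_simp
    exact_mod_cast this


theorem core {m : ℕ} (Γ : Finset (Fin (m + 1) → ℕ)) (k' : ℕ)
    (Ω : Set (EuclideanSpace ℝ (Fin (m + 1)))) (A B G K N M : ℕ) (hK : 2 ≤ K) (hM1 : 1 ≤ M)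
    (ξ : (Fin (m + 1) → ℕ) → ℝ) (γ : Fin (m + 1) → ℕ) (hG : ∑ i, γ i ≤ G)
    (hmaj : 1 < (K : ℝ) ^ A * ‖discMultA Γ k' Ω M ξ‖ →
      Maj K B (1 / (M : ℝ) ^ (∑ i, γ i)) (ξ γ))
    (hMN : M ≤ N) (hNM : N ≤ 4 * M) (L β : ℝ) (hL1 : 2 * 4 ^ (B + 2 * G) + 1 < L)
    (hKL : (K : ℝ) ≤ 4 * L) (hβ : ((B + 2 * G : ℕ) : ℝ) + 1 ≤ β) (a q : ℤ) (hco : IsCoprime a q)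
    (hq0 : 1 ≤ q) (h1 : L ^ β ≤ (q : ℝ))
    (h2 : (q : ℝ) ≤ (N : ℝ) ^ ((∑ i, γ i : ℕ) : ℝ) * L ^ (-β))
    (h3 : |ξ γ - (a : ℝ) / (q : ℝ)| ≤ 1 / (q : ℝ) ^ 2) :
    (K : ℝ) ^ A * ‖discMultA Γ k' Ω M ξ‖ ≤ 1 := by
  by_contra hcon
  have hx := hmaj (lt_of_not_ge hcon)
  have hL : 1 < L := lt_of_le_of_lt (by have : (0:ℝ) ≤ 2 * 4 ^ (B + 2 * G) := by positivity
                                        linarith) hL1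
  have hL0 : 0 < L := by linarith
  set g := ∑ i, γ i with hg
  have hKr : (2 : ℝ) ≤ K := by exact_mod_cast hK
  have hMr : (1 : ℝ) ≤ M := by exact_mod_cast hM1
  have hNr : (1 : ℝ) ≤ N := by exact_mod_cast hM1.trans hMN
  have hNMr : (N : ℝ) ≤ 4 * M := by exact_mod_cast hNM
  have hη : 1 / (M : ℝ) ^ g ≤ (K : ℝ) ^ (2 * G) * (1 / (N : ℝ) ^ g) := by
    rw [mul_one_div, div_le_div_iff₀ (by positivity) (by positivity), one_mul]
    calc (N : ℝ) ^ g ≤ (4 * M) ^ g := by gcongr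
      _ = 4 ^ g * (M : ℝ) ^ g := mul_pow _ _ _
      _ ≤ (K : ℝ) ^ (2 * G) * (M : ℝ) ^ g := by
        gcongr
        calc (4 : ℝ) ^ g = 2 ^ (2 * g) := by rw [pow_mul]; norm_num
          _ ≤ (2 : ℝ) ^ (2 * G) := pow_le_pow_right₀ (by norm_num) (by omega)
          _ ≤ _ := by gcongr
  have hx' := Maj.eta hK hx hη
  refine arith K (B + 2 * G) g N (hM1.trans hMN) (L ^ β) (ξ γ) hx' a q hco hq0 (by positivity) ?_ h1 ?_ h3
  · calc 2 * (K : ℝ) ^ (B + 2 * G) ≤ 2 * (4 * L) ^ (B + 2 * G) := by gcongr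
      _ = 2 * 4 ^ (B + 2 * G) * L ^ (B + 2 * G) := by rw [mul_pow]; ring
      _ < L * L ^ (B + 2 * G) := by
        apply mul_lt_mul_of_pos_right (by linarith) (by positivity)
      _ = L ^ (((B + 2 * G : ℕ) : ℝ) + 1) := by
        rw [Real.rpow_add hL0, Real.rpow_natCast, Real.rpow_one, mul_comm]
      _ ≤ L ^ β := Real.rpow_le_rpow_of_exponent_le hL.le hβ
  · rwa [Real.rpow_natCast, Real.rpow_neg hL0.le] at h2


end

/-- Property 1, averages case: minor arc decay of the discrete
multipliers. For each `α > 0` there is `β_α > 0` such that for any `β > β_α` and `n ∈ ℕ`,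
if some `ξ_{γ₀}` admits a rational approximation `a/q` with
`(log N_n)^β ≤ q ≤ N_n^{|γ₀|} (log N_n)^{-β}`, then
`|𝔪_{N_n}(ξ) - 𝔪_{N_{n-1}}(ξ)| ≲ (log N_n)^{-α}`. -/
theorem minor_arc_multiplier_decay
    (k k' k'' : ℕ) (hk : k' + k'' = k)
    (Γ : Finset (Fin k → ℕ)) (hΓ : Γ.Nonempty) (h0 : (0 : Fin k → ℕ) ∉ Γ)
    (Ω : Set (EuclideanSpace ℝ (Fin k))) (cΩ : ℝ)
    (hc0 : 0 < cΩ) (hc1 : cΩ < 1) (hopen : IsOpen Ω) (hconv : Convex ℝ Ω)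
    (hball : Metric.ball 0 cΩ ⊆ Ω) (hball' : Ω ⊆ Metric.ball 0 1)
    (τ : ℝ) (hτ0 : 0 < τ) (hτ1 : τ ≤ 1)
    (α : ℝ) (hα : 0 < α) :
    ∃ β₀ : ℝ, 0 < β₀ ∧ ∀ β : ℝ, β₀ < β →
      ∃ C : ℝ, 0 < C ∧
        ∀ n : ℕ, 1 ≤ n →
        ∀ ξ : (Fin k → ℕ) → ℝ, ∀ γ₀ ∈ Γ, ∀ a q : ℤ,
          IsCoprime a q → 1 ≤ a → a ≤ q →
          (Real.log (Nseq τ n)) ^ β ≤ (q : ℝ) →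
          (q : ℝ) ≤ ((Nseq τ n : ℝ)) ^ ((∑ i, γ₀ i : ℕ) : ℝ) *
              (Real.log (Nseq τ n)) ^ (-β) →
          |ξ γ₀ - (a : ℝ) / (q : ℝ)| ≤ 1 / (q : ℝ) ^ 2 →
          ‖discMultA Γ k' Ω (Nseq τ n) ξ - discMultA Γ k' Ω (Nseq τ (n - 1)) ξ‖
            ≤ C * (Real.log (Nseq τ n)) ^ (-α) := by
  rcases k with _ | m
  · obtain ⟨γ, hγ⟩ := hΓ
    exact absurd (Subsingleton.elim γ 0 ▸ hγ) h0
  obtain ⟨B, K0, hmm⟩ := mult_maj Γ h0 k' Ω cΩ hc0 hconv hball hball' ⌈α⌉₊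
  set A := ⌈α⌉₊ with hA
  set G := ∑ γ ∈ Γ, ∑ i, γ i with hGdef
  have hG : ∀ γ ∈ Γ, ∑ i, γ i ≤ G := fun γ hγ =>
    Finset.single_le_sum (f := fun γ : Fin (m + 1) → ℕ => ∑ i, γ i) (fun _ _ => Nat.zero_le _) hγ
  refine ⟨((B + 2 * G : ℕ) : ℝ) + 1, by positivity, fun β hβ => ?_⟩
  obtain ⟨N0, hN0⟩ := large B (K0 + 2) (2 * 4 ^ (B + 2 * G) + 1)
  obtain ⟨n0, hn0⟩ := Filter.eventually_atTop.1 ((Nseq_tendsto τ hτ0).eventually_ge_atTop N0)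
  have hpos : ∀ n, 0 ≤ (Real.log (Nseq τ n)) ^ α := fun n =>
    Real.rpow_nonneg (Real.log_natCast_nonneg _) _
  have hS : 0 ≤ ∑ n ∈ Finset.range n0, (Real.log (Nseq τ n)) ^ α :=
    Finset.sum_nonneg fun n _ => hpos n
  refine ⟨2 + 2 * ∑ n ∈ Finset.range n0, (Real.log (Nseq τ n)) ^ α, by positivity, ?_⟩
  intro n hn ξ γ₀ hγ₀ a q hco ha haq h1 h2 h3
  have hN2 := Nseq_two τ n hn hτ0
  have hM1 := Nseq_one τ (n - 1) hτ0
  have hmono := Nseq_mono τ n hτ0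
  have hstep := Nseq_step τ n hn hτ0 hτ1
  have hLpos : 0 < Real.log (Nseq τ n) := Real.log_pos (by exact_mod_cast hN2)
  rcases lt_or_ge n n0 with hlt | hge
  · have e1 := disc_le_one Γ k' Ω hball' (Nseq τ n) (by omega) ξ
    have e2 := disc_le_one Γ k' Ω hball' (Nseq τ (n - 1)) hM1 ξ
    have e3 := norm_sub_le (discMultA Γ k' Ω (Nseq τ n) ξ) (discMultA Γ k' Ω (Nseq τ (n - 1)) ξ)
    have e4 : (Real.log (Nseq τ n)) ^ α ≤ ∑ n ∈ Finset.range n0, (Real.log (Nseq τ n)) ^ α :=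
      Finset.single_le_sum (f := fun n => (Real.log (Nseq τ n)) ^ α) (fun n _ => hpos n)
        (Finset.mem_range.2 hlt)
    have e5 : (Real.log (Nseq τ n)) ^ α * (Real.log (Nseq τ n)) ^ (-α) = 1 := by
      rw [← Real.rpow_add hLpos]; simp
    have e6 : 0 < (Real.log (Nseq τ n)) ^ (-α) := Real.rpow_pos_of_pos hLpos _
    nlinarith
  · obtain ⟨f1, f2, f3⟩ := hN0 _ (hn0 n hge)
    have hKL := log_upper _ hN2
    have hNK : Nseq τ n ≤ 2 ^ (Nat.log 2 (Nseq τ n) + 1) :=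
      (Nat.lt_pow_succ_log_self (by norm_num) _).le
    have hLK := log_le_K _ _ hNK _ le_rfl
    generalize Nat.log 2 (Nseq τ n) + 1 = K at *
    have hcore : ∀ M, 1 ≤ M → M ≤ Nseq τ n → Nseq τ n ≤ 4 * M →
        (K : ℝ) ^ A * ‖discMultA Γ k' Ω M ξ‖ ≤ 1 := by
      intro M hM1 hMN hNM
      refine core Γ k' Ω A B G K (Nseq τ n) M (by omega) hM1 ξ γ₀ (hG _ hγ₀) (fun hbig => ?_)
        hMN hNM (Real.log (Nseq τ n)) β f3 hKL hβ.le a q hco (ha.trans haq) h1 h2 h3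
      exact hmm K (by omega) M (by omega) (hMN.trans hNK) ξ hbig γ₀ hγ₀
    have e1 := hcore _ (by omega) le_rfl (by omega)
    have e2 := hcore _ hM1 hmono hstep
    have e3 := norm_sub_le (discMultA Γ k' Ω (Nseq τ n) ξ) (discMultA Γ k' Ω (Nseq τ (n - 1)) ξ)
    have hK1 : (1 : ℝ) ≤ K := by exact_mod_cast (by omega : 1 ≤ K)
    have e4 : (Real.log (Nseq τ n)) ^ α ≤ (K : ℝ) ^ A := by
      calc (Real.log (Nseq τ n)) ^ α ≤ (K : ℝ) ^ α := Real.rpow_le_rpow hLpos.le hLK hα.le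
        _ ≤ (K : ℝ) ^ (A : ℝ) := Real.rpow_le_rpow_of_exponent_le hK1 (Nat.le_ceil α)
        _ = _ := Real.rpow_natCast _ _
    have e6 : 0 < (Real.log (Nseq τ n)) ^ α := Real.rpow_pos_of_pos hLpos _
    have key : ∀ z : ℂ, (K : ℝ) ^ A * ‖z‖ ≤ 1 → ‖z‖ ≤ (Real.log (Nseq τ n)) ^ (-α) := by
      intro z hz
      rw [Real.rpow_neg hLpos.le, ← one_div, le_div_iff₀ e6, mul_comm]
      exact (mul_le_mul_of_nonneg_right e4 (norm_nonneg _)).trans hz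
    have k1 := key _ e1
    have k2 := key _ e2
    have e7 : 0 < (Real.log (Nseq τ n)) ^ (-α) := Real.rpow_pos_of_pos hLpos _
    nlinarith [mul_nonneg hS e7.le]
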